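/- arXiv:1103.0203 — 3 statements merged into one kernel-verified Lean document; each statement's English description precedes it below -/
import Mathlib

section
/- Let m ≥ 2 and 3s ≤ (m+4)(m+3)(m+1)/2 − m²/2 − m/2 − 8, or m = 1 and s ≤ 5. For a general tuple of nonzero vectors v_1,…,v_s ∈ ℂ⁴, let W = {M ∈ Hom(S^mℂ⁴, Λ²ℂ⁴) : M(v_i^m) ∧ v_i = 0 in Λ³ℂ⁴ for all i = 1,…,s}. Then a nonzero v ∈ ℂ⁴ satisfies M(v^m) ∧ v = 0 in Λ³ℂ⁴ for every M ∈ W if and only if v is a scalar multiple of some v_i. -/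
open MvPolynomial ExteriorAlgebra

/-- The basis wedge `e_S = e_{j_1} ∧ ⋯ ∧ e_{j_b}` (indices of `S` in increasing order),
as an element of the exterior algebra of `ℂ^k`. -/
noncomputable def eWedge (k : ℕ) (S : Finset (Fin k)) : ExteriorAlgebra ℂ (Fin k → ℂ) :=
  ((S.sort (· ≤ ·)).map fun j => ExteriorAlgebra.ι ℂ (Pi.single j (1:ℂ))).prod

/-- The value `M(v^m) ∈ Λ^b ℂ^k` of the tensor `M ∈ Hom(S^m ℂ^k, Λ^b ℂ^k)` represented by
the family of polynomials `q = (q_S)_{|S| = b}`, namely `Σ_S q_S(v) · e_S`. -/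
noncomputable def tval (k b : ℕ)
    (q : {S : Finset (Fin k) // S.card = b} → MvPolynomial (Fin k) ℂ)
    (v : Fin k → ℂ) : ExteriorAlgebra ℂ (Fin k → ℂ) :=
  ∑ S : {S : Finset (Fin k) // S.card = b}, MvPolynomial.eval v (q S) • eWedge k S.1

/-!
Under the pairing of `Λ²` with itself, `v ↦ M(v^m) ∧ v` becomes a section of degree `m`: a tuple
`A x` with `A` an alternating matrix of forms of degree `m`, whose value at `x` is orthogonal to
`x`, and which vanishes at `v` exactly when `v` is an eigenvector of `M`. Suppose that the
components of the sections vanishing at the `v_i` generate all the forms of some large degree that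
vanish at the `v_i`. Then a common zero `u` of these sections is a multiple of some `v_i`, since
otherwise a product of linear forms, one through each `v_i` and none through `u`, times a power of
a variable, would vanish at the `v_i` but not at `u`.

This generation property, together with the independence of the conditions imposed by the `v_i`,
is open in `(v_1, …, v_s)`, because it says that a linear map depending polynomially on the points
is onto. It is inherited by subfamilies, by Lagrange interpolation. Hence one large enough
configuration suffices, and it is found by induction on the dimension. In the affine chart
`X 0 = 1` take the lattice points `(1, α)` with `|α| ≤ m` and `α` outside a set `A` of exponents of
weight `m`, and in the hyperplane `X 0 = 0` take general points with the property in one dimension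
less. The products `∏_j ∏_{t < γ_j} (X (j + 1) - t X 0)` with `γ ∈ A` vanish at the lattice points,
and they provide the sections that correct the values at infinity. Starting from a line, one
obtains `C(m + 3, 3) + ⌊m (m + 2) / 4⌋` points in space for `m ≥ 2`. For `m = 1` the five points of
a projective frame do.
-/

section PolynomialMaps

variable {K τ W : Type*} [Field K] [AddCommGroup W] [Module K W]

/-- A map from an affine space to a vector space is polynomial if every linear functional
pulls back to a polynomial. -/
def IsPolynomialMap (f : (τ → K) → W) : Prop :=
  ∀ φ : W →ₗ[K] K, ∃ p : MvPolynomial τ K, ∀ t, eval t p = φ (f t)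

namespace IsPolynomialMap

theorem const (w : W) : IsPolynomialMap fun _ : τ → K => w :=
  fun φ => ⟨C (φ w), fun _ => eval_C _⟩

theorem of_eval {f : (τ → K) → K} (p : MvPolynomial τ K) (hp : ∀ t, eval t p = f t) :
    IsPolynomialMap f :=
  fun φ => ⟨C (φ 1) * p, fun t => by
    rw [map_mul, eval_C, hp, mul_comm, ← smul_eq_mul, ← map_smul, smul_eq_mul, mul_one]⟩

theorem pi {κ : Type*} [Finite κ] {V : κ → Type*} [∀ c, AddCommGroup (V c)]
    [∀ c, Module K (V c)] {f : (τ → K) → ∀ c, V c} (hf : ∀ c, IsPolynomialMap fun t => f t c) :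
    IsPolynomialMap f := by
  classical
  have := Fintype.ofFinite κ
  intro φ
  choose p hp using fun c => hf c (φ ∘ₗ LinearMap.single K V c)
  refine ⟨∑ c, p c, fun t => ?_⟩
  simp only [map_sum, hp, LinearMap.comp_apply, LinearMap.single_apply]
  rw [← map_sum, Finset.univ_sum_single]

theorem prodMk {W' : Type*} [AddCommGroup W'] [Module K W'] {f : (τ → K) → W}
    {g : (τ → K) → W'} (hf : IsPolynomialMap f) (hg : IsPolynomialMap g) :
    IsPolynomialMap fun t => (f t, g t) := by
  intro φ
  obtain ⟨p, hp⟩ := hf (φ ∘ₗ LinearMap.inl K W W')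
  obtain ⟨q, hq⟩ := hg (φ ∘ₗ LinearMap.inr K W W')
  refine ⟨p + q, fun t => ?_⟩
  rw [map_add, hp, hq, LinearMap.comp_apply, LinearMap.comp_apply, ← map_add,
    LinearMap.inl_apply, LinearMap.inr_apply, Prod.mk_add_mk, add_zero, zero_add]

-- `D` is the determinant of the images of finitely many vectors that `L t₀` maps to a basis.
theorem exists_eval_ne_zero_surjective {E : Type*} [AddCommGroup E] [Module K E]
    [Module.Finite K W] {L : (τ → K) → E →ₗ[K] W} (hL : ∀ x, IsPolynomialMap fun t => L t x)
    {t₀ : τ → K} (h₀ : Function.Surjective (L t₀)) :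
    ∃ D : MvPolynomial τ K, eval t₀ D ≠ 0 ∧ ∀ t, eval t D ≠ 0 → Function.Surjective (L t) := by
  let b := Module.finBasis K W
  choose x hx using fun c => h₀ (b c)
  choose p hp using fun a c => hL (x c) (b.coord a)
  have hdet : ∀ t, eval t (Matrix.of p).det = b.det fun c => L t (x c) := by
    intro t
    rw [RingHom.map_det, Module.Basis.det_apply]
    congr 1
    ext a c
    exact hp a c t
  refine ⟨(Matrix.of p).det, ?_, fun t ht => ?_⟩
  · simp only [hdet, hx, b.det_self, ne_eq, one_ne_zero, not_false_eq_true]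
  · rw [hdet, ← isUnit_iff_ne_zero, ← Module.Basis.is_basis_iff_det] at ht
    rw [← LinearMap.range_eq_top, eq_top_iff, ← ht.2, Submodule.span_le]
    rintro _ ⟨c, rfl⟩
    exact LinearMap.mem_range_self _ _

end IsPolynomialMap

end PolynomialMaps

section KoszulSections

variable {σ K : Type*} [Field K] [DecidableEq σ]

/-- The syzygy of the variables obtained by multiplying the Koszul relation between `X p` and
`X q` by `f`. -/
noncomputable def koszulSyzygy (p q : σ) (f : MvPolynomial σ K) : σ → MvPolynomial σ K :=
  Pi.single p (f * X q) - Pi.single q (f * X p)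

theorem koszulSyzygy_apply (p q : σ) (f : MvPolynomial σ K) (j : σ) :
    koszulSyzygy p q f j = f * ((if j = p then X q else 0) - if j = q then X p else 0) := by
  simp only [koszulSyzygy, Pi.sub_apply, Pi.single_apply, mul_sub, mul_ite, mul_zero]

theorem eval_koszulSyzygy (x : σ → K) (p q : σ) (f : MvPolynomial σ K) (j : σ) :
    eval x (koszulSyzygy p q f j) =
      eval x f * ((if j = p then x q else 0) - if j = q then x p else 0) := by
  simp only [koszulSyzygy_apply, map_mul, map_sub, apply_ite (eval x), eval_X, map_zero]

variable (σ K) in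
/-- The syzygies of the variables with entries of degree `m + 1`: the tuples `A x`, where `A` is
an alternating matrix of forms of degree `m`. -/
noncomputable def koszulSections (m : ℕ) : Submodule K (σ → MvPolynomial σ K) :=
  Submodule.span K {F | ∃ p q f, f.IsHomogeneous m ∧ koszulSyzygy p q f = F}

theorem koszulSyzygy_mem_koszulSections {m : ℕ} (p q : σ) {f : MvPolynomial σ K}
    (hf : f.IsHomogeneous m) : koszulSyzygy p q f ∈ koszulSections σ K m :=
  Submodule.subset_span ⟨p, q, f, hf, rfl⟩

theorem exists_sum_koszulSyzygy_eq [Fintype σ] {m : ℕ} {F : σ → MvPolynomial σ K}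
    (hF : F ∈ koszulSections σ K m) :
    ∃ A : σ → σ → MvPolynomial σ K, (∀ p q, (A p q).IsHomogeneous m) ∧
      ∑ p, ∑ q, koszulSyzygy p q (A p q) = F := by
  induction hF using Submodule.span_induction with
  | mem F hF =>
    obtain ⟨p, q, f, hf, rfl⟩ := hF
    refine ⟨fun p' q' => if p' = p ∧ q' = q then f else 0, fun p' q' => ?_, ?_⟩
    · dsimp only
      split_ifs
      exacts [hf, isHomogeneous_zero _ _ _]
    · rw [Finset.sum_eq_single_of_mem p (Finset.mem_univ p),
        Finset.sum_eq_single_of_mem q (Finset.mem_univ q)]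
      · simp
      · intro q' _ hq'
        simp [koszulSyzygy, hq']
      · intro p' _ hp'
        simp [koszulSyzygy, hp']
  | zero => exact ⟨0, fun _ _ => isHomogeneous_zero _ _ _, by simp [koszulSyzygy]⟩
  | add F G _ _ hF hG =>
    obtain ⟨A, hA, rfl⟩ := hF
    obtain ⟨B, hB, rfl⟩ := hG
    refine ⟨A + B, fun p q => (hA p q).add (hB p q), funext fun j => ?_⟩
    simp [koszulSyzygy_apply, add_mul, Finset.sum_add_distrib]
  | smul c F _ hF =>
    obtain ⟨A, hA, rfl⟩ := hF
    refine ⟨c • A, fun p q => (homogeneousSubmodule σ K m).smul_mem c (hA p q), funext fun j => ?_⟩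
    simp [koszulSyzygy_apply, Finset.smul_sum]

theorem isHomogeneous_of_mem_koszulSections {m : ℕ} {F : σ → MvPolynomial σ K}
    (hF : F ∈ koszulSections σ K m) (j : σ) : (F j).IsHomogeneous (m + 1) := by
  suffices koszulSections σ K m ≤
      (homogeneousSubmodule σ K (m + 1)).comap (LinearMap.proj j) from this hF
  rw [koszulSections, Submodule.span_le]
  rintro _ ⟨p, q, f, hf, rfl⟩
  simp only [SetLike.mem_coe, Submodule.mem_comap, LinearMap.proj_apply, koszulSyzygy_apply,
    mem_homogeneousSubmodule]
  refine hf.mul (IsHomogeneous.sub ?_ ?_) <;> split_ifs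
  exacts [isHomogeneous_X _ _, isHomogeneous_zero _ _ _, isHomogeneous_X _ _,
    isHomogeneous_zero _ _ _]

theorem eval_dotProduct_of_mem_koszulSections [Fintype σ] {m : ℕ} {F : σ → MvPolynomial σ K}
    (hF : F ∈ koszulSections σ K m) (x : σ → K) : (fun j => eval x (F j)) ⬝ᵥ x = 0 := by
  let pairing : (σ → MvPolynomial σ K) →ₗ[K] K :=
    ∑ j, x j • ((aeval x).toLinearMap ∘ₗ LinearMap.proj j)
  have hpairing : ∀ G, pairing G = (fun j => eval x (G j)) ⬝ᵥ x := fun G => by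
    simp [pairing, dotProduct, mul_comm, aeval_eq_eval]
  rw [← hpairing, ← LinearMap.mem_ker]
  suffices koszulSections σ K m ≤ LinearMap.ker pairing from this hF
  rw [koszulSections, Submodule.span_le]
  rintro _ ⟨p, q, f, -, rfl⟩
  simp only [SetLike.mem_coe, LinearMap.mem_ker, hpairing, eval_koszulSyzygy, dotProduct,
    mul_sub, sub_mul, mul_ite, ite_mul, mul_zero, zero_mul, Finset.sum_sub_distrib,
    Finset.sum_ite_eq', Finset.mem_univ, if_true]
  ring

variable {ι : Type*}

/-- The sections of degree `m` vanishing at all the points `v i`. -/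
noncomputable def vanishingSections (m : ℕ) (v : ι → σ → K) :
    Submodule K (σ → MvPolynomial σ K) :=
  koszulSections σ K m ⊓
    ⨅ (i) (j), LinearMap.ker ((aeval (v i)).toLinearMap ∘ₗ LinearMap.proj j)

theorem mem_vanishingSections {m : ℕ} {v : ι → σ → K} {F : σ → MvPolynomial σ K} :
    F ∈ vanishingSections m v ↔
      F ∈ koszulSections σ K m ∧ ∀ i j, eval (v i) (F j) = 0 := by
  simp [vanishingSections, Submodule.mem_inf, Submodule.mem_iInf, aeval_eq_eval]

theorem vanishingSections_anti (m : ℕ) {ι' : Type*} {v : ι → σ → K} {v' : ι' → σ → K}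
    (h : Set.range v' ⊆ Set.range v) : vanishingSections m v ≤ vanishingSections m v' := by
  intro F hF
  obtain ⟨hF, hFv⟩ := mem_vanishingSections.mp hF
  refine mem_vanishingSections.mpr ⟨hF, fun i => ?_⟩
  obtain ⟨l, hl⟩ := h ⟨i, rfl⟩
  exact hl ▸ hFv l

/-- The part of degree `k + m + 1` of the ideal generated by the components of the sections of
degree `m` vanishing at the points `v i`. -/
noncomputable def productSpan (m k : ℕ) (v : ι → σ → K) : Submodule K (MvPolynomial σ K) :=
  Submodule.span K
    {Q | ∃ p : MvPolynomial σ K, p.IsHomogeneous k ∧ ∃ F ∈ vanishingSections m v, ∃ j, p * F j = Q}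

theorem mul_mem_productSpan {m k : ℕ} {v : ι → σ → K} {p : MvPolynomial σ K}
    (hp : p.IsHomogeneous k) {F : σ → MvPolynomial σ K} (hF : F ∈ vanishingSections m v) (j : σ) :
    p * F j ∈ productSpan m k v :=
  Submodule.subset_span ⟨p, hp, F, hF, j, rfl⟩

theorem productSpan_anti (m k : ℕ) {ι' : Type*} {v : ι → σ → K} {v' : ι' → σ → K}
    (h : Set.range v' ⊆ Set.range v) : productSpan m k v ≤ productSpan m k v' :=
  Submodule.span_mono fun _ ⟨p, hp, F, hF, j, h'⟩ =>
    ⟨p, hp, F, vanishingSections_anti m h hF, j, h'⟩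

theorem isHomogeneous_of_mem_productSpan {m k : ℕ} {v : ι → σ → K} {Q : MvPolynomial σ K}
    (hQ : Q ∈ productSpan m k v) : Q.IsHomogeneous (k + m + 1) := by
  suffices productSpan m k v ≤ homogeneousSubmodule σ K (k + m + 1) from this hQ
  rw [productSpan, Submodule.span_le]
  rintro _ ⟨p, hp, F, hF, j, rfl⟩
  exact hp.mul (isHomogeneous_of_mem_koszulSections (mem_vanishingSections.mp hF).1 j)

theorem eval_eq_zero_of_mem_productSpan {m k : ℕ} {v : ι → σ → K} {Q : MvPolynomial σ K}
    (hQ : Q ∈ productSpan m k v) (i : ι) : eval (v i) Q = 0 := by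
  suffices productSpan m k v ≤ LinearMap.ker (aeval (v i)).toLinearMap by
    simpa [aeval_eq_eval] using this hQ
  rw [productSpan, Submodule.span_le]
  rintro _ ⟨p, -, F, hF, j, rfl⟩
  simp [aeval_eq_eval, (mem_vanishingSections.mp hF).2 i j]

end KoszulSections

section Regular

variable {σ K : Type*} [Field K] [Fintype σ] [DecidableEq σ]

/-- The points `v i` impose independent conditions on the sections of degree `m`, and the
components of the sections vanishing at them generate all the forms of degree `k + m + 1`
vanishing at them. The value of a section at a point `x` is orthogonal to `x`, so these are the
only values that can be prescribed. -/
structure IsKoszulRegular {ι : Type*} (m k : ℕ) (v : ι → σ → K) : Prop where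
  interpolates : ∀ w : ι → σ → K, (∀ i, w i ⬝ᵥ v i = 0) →
    ∃ F ∈ koszulSections σ K m, ∀ i j, eval (v i) (F j) = w i j
  generates : ∀ P : MvPolynomial σ K, P.IsHomogeneous (k + m + 1) →
    (∀ i, eval (v i) P = 0) → P ∈ productSpan m k v

variable {ι : Type*} {m k : ℕ} {v : ι → σ → K}

namespace IsKoszulRegular

theorem ne_zero [Nonempty σ] (h : IsKoszulRegular m k v) (i : ι) : v i ≠ 0 := by
  classical
  intro hi
  obtain ⟨a⟩ := ‹Nonempty σ›
  obtain ⟨F, hF, hFv⟩ := h.interpolates (Pi.single i (Pi.single a 1)) fun l => by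
    obtain rfl | hl := eq_or_ne l i
    · rw [hi, dotProduct_zero]
    · rw [Pi.single_eq_of_ne hl, zero_dotProduct]
  have hFa : eval (v i) (F a) = 0 := by
    rw [hi, eval_zero, constantCoeff_eq]
    exact (isHomogeneous_of_mem_koszulSections hF a).coeff_eq_zero (by simp)
  rw [hFv, Pi.single_eq_same, Pi.single_eq_same] at hFa
  exact one_ne_zero hFa

theorem exists_separating_form [Nontrivial σ] (h : IsKoszulRegular m k v) (i : ι) :
    ∃ P ∈ productSpan m k fun l : {l // l ≠ i} => v l, eval (v i) P = 1 := by
  classical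
  obtain ⟨j, hj⟩ := Function.ne_iff.mp (h.ne_zero i)
  obtain ⟨a, ha⟩ := exists_ne j
  rw [Pi.zero_apply] at hj
  obtain ⟨F, hF, hFv⟩ := h.interpolates
    (Pi.single i (Pi.single a (v i j) - Pi.single j (v i a))) fun l => by
      obtain rfl | hl := eq_or_ne l i
      · rw [Pi.single_eq_same, sub_dotProduct, single_dotProduct, single_dotProduct, mul_comm,
          sub_self]
      · rw [Pi.single_eq_of_ne hl, zero_dotProduct]
  refine ⟨C (v i j ^ (k + 1))⁻¹ * X j ^ k * F a,
    mul_mem_productSpan ((isHomogeneous_X_pow _ _).C_mul _)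
      (mem_vanishingSections.mpr ⟨hF, fun l b => ?_⟩) a, ?_⟩
  · rw [hFv, Pi.single_eq_of_ne l.2, Pi.zero_apply]
  · simp only [map_mul, map_pow, eval_C, eval_X, hFv, Pi.single_eq_same, Pi.sub_apply,
      Pi.single_eq_of_ne ha, sub_zero]
    rw [mul_assoc, ← pow_succ, inv_mul_cancel₀ (pow_ne_zero _ hj)]

theorem exists_dual_forms [Fintype ι] [Nontrivial σ] (h : IsKoszulRegular m k v) :
    ∃ P : ι → MvPolynomial σ K, (∀ i, P i ∈ productSpan m k fun l : {l // l ≠ i} => v l) ∧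
      ∀ (c : ι → K) (l : ι), eval (v l) (∑ i, c i • P i) = c l := by
  choose P hP hPi using h.exists_separating_form
  refine ⟨P, hP, fun c l => ?_⟩
  rw [map_sum, Fintype.sum_eq_single l fun i hi => ?_, smul_eval, hPi, mul_one]
  rw [smul_eval, eval_eq_zero_of_mem_productSpan (hP i) ⟨l, hi.symm⟩, mul_zero]

theorem comp [Finite ι] [Nontrivial σ] (h : IsKoszulRegular m k v) {ι' : Type*} {f : ι' → ι}
    (hf : Function.Injective f) : IsKoszulRegular m k (v ∘ f) := by
  classical
  have := Fintype.ofFinite ι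
  refine ⟨fun w hw => ?_, fun Q hQ hQv => ?_⟩
  · obtain ⟨F, hF, hFv⟩ := h.interpolates (Function.extend f w 0) fun l => by
      by_cases hl : ∃ i, f i = l
      · obtain ⟨i, rfl⟩ := hl
        rw [hf.extend_apply]
        exact hw i
      · rw [Function.extend_apply' _ _ _ hl, Pi.zero_apply, zero_dotProduct]
    exact ⟨F, hF, fun i j => by rw [Function.comp_apply, hFv, hf.extend_apply]⟩
  -- `Q` minus its Lagrange interpolant at the points `v l` vanishes at all of them.
  obtain ⟨P, hP, hPv⟩ := h.exists_dual_forms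
  have hinterpolant : ∑ l, eval (v l) Q • P l ∈ productSpan m k (v ∘ f) := by
    refine Submodule.sum_mem _ fun l _ => ?_
    by_cases hl : l ∈ Set.range f
    · obtain ⟨i, rfl⟩ := hl
      rw [show eval (v (f i)) Q = 0 from hQv i, zero_smul]
      exact zero_mem _
    · refine Submodule.smul_mem _ _ (productSpan_anti m k ?_ (hP l))
      rintro _ ⟨i, rfl⟩
      exact ⟨⟨f i, fun hi => hl ⟨i, hi⟩⟩, rfl⟩
  have hsub : Q - ∑ l, eval (v l) Q • P l ∈ productSpan m k v :=
    h.generates _ (hQ.sub (isHomogeneous_of_mem_productSpan hinterpolant)) fun i => by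
      rw [map_sub, hPv, sub_self]
  exact (Submodule.sub_mem_iff_left _ hinterpolant).mp
    (productSpan_anti m k (Set.range_comp_subset_range f v) hsub)

end IsKoszulRegular

omit [DecidableEq σ] in
theorem eq_of_dotProduct_eq {a b x : σ → K} {j : σ} (hj : x j ≠ 0) (h : a ⬝ᵥ x = b ⬝ᵥ x)
    (hab : ∀ l, l ≠ j → a l = b l) : a = b := by
  have hsum : (a - b) ⬝ᵥ x = (a j - b j) * x j :=
    Fintype.sum_eq_single j fun l hl => by rw [Pi.sub_apply, hab l hl, sub_self, zero_mul]
  rw [sub_dotProduct, h, sub_self] at hsum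
  have hj' : a j = b j := sub_eq_zero.mp ((mul_eq_zero.mp hsum.symm).resolve_right hj)
  ext l
  obtain rfl | hl := eq_or_ne l j
  exacts [hj', hab l hl]

omit [Fintype σ] in
/-- The values of a section at the points `v i`, with the coordinate `j i` left out. If
`v i (j i) ≠ 0`, then the value is determined by the remaining coordinates, which are not subject
to any relation. -/
noncomputable def sectionEval (m : ℕ) (j : ι → σ) (v : ι → σ → K) :
    koszulSections σ K m →ₗ[K] ∀ i, {l // l ≠ j i} → K :=
  LinearMap.pi fun i => LinearMap.pi fun l =>
    (aeval (v i)).toLinearMap ∘ₗ LinearMap.proj (l : σ) ∘ₗ (koszulSections σ K m).subtype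

omit [Fintype σ] in
theorem sectionEval_apply (j : ι → σ) (v : ι → σ → K) (F : koszulSections σ K m) (i : ι)
    (l : {l // l ≠ j i}) : sectionEval m j v F i l = eval (v i) (F.1 l) := by
  simp [sectionEval, aeval_eq_eval]

omit [Fintype σ] in
theorem isPolynomialMap_sectionEval [Finite ι] [Finite σ] (j : ι → σ) (F : koszulSections σ K m) :
    IsPolynomialMap fun t : ι × σ → K => sectionEval m j (Function.curry t) F :=
  .pi fun i => .pi fun l => .of_eval (rename (fun a => (i, a)) (F.1 l)) fun t => by
    rw [eval_rename, sectionEval_apply]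
    rfl

theorem eval_eq_of_sectionEval_eq {j : ι → σ} (hj : ∀ i, v i (j i) ≠ 0)
    {F : koszulSections σ K m} {w : ι → σ → K} (hw : ∀ i, w i ⬝ᵥ v i = 0)
    (h : ∀ i (l : {l // l ≠ j i}), sectionEval m j v F i l = w i l) (i : ι) (l : σ) :
    eval (v i) (F.1 l) = w i l := by
  refine congrFun
    (eq_of_dotProduct_eq (a := fun l => eval (v i) (F.1 l)) (hj i) ?_ fun a ha => ?_) l
  · rw [eval_dotProduct_of_mem_koszulSections F.2, hw]
  · exact (sectionEval_apply j v F i ⟨a, ha⟩).symm.trans (h i ⟨a, ha⟩)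

omit [Fintype σ] in
theorem mem_ker_sectionEval [Finite σ] {j : ι → σ} (hj : ∀ i, v i (j i) ≠ 0)
    {F : koszulSections σ K m} :
    F ∈ LinearMap.ker (sectionEval m j v) ↔ F.1 ∈ vanishingSections m v := by
  have := Fintype.ofFinite σ
  rw [LinearMap.mem_ker, mem_vanishingSections]
  refine ⟨fun h => ⟨F.2, eval_eq_of_sectionEval_eq (w := 0) hj (fun i => zero_dotProduct _)
    fun i l => congrFun (congrFun h i) l⟩,
    fun h => ?_⟩
  ext i l
  rw [sectionEval_apply, h.2 i l, Pi.zero_apply, Pi.zero_apply]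

theorem sectionEval_surjective_iff {j : ι → σ} (hj : ∀ i, v i (j i) ≠ 0) :
    Function.Surjective (sectionEval m j v) ↔
      ∀ w : ι → σ → K, (∀ i, w i ⬝ᵥ v i = 0) →
        ∃ F ∈ koszulSections σ K m, ∀ i l, eval (v i) (F l) = w i l := by
  refine ⟨fun h w hw => ?_, fun h y => ?_⟩
  · obtain ⟨F, hF⟩ := h fun i l => w i l
    exact ⟨F.1, F.2, eval_eq_of_sectionEval_eq hj hw fun i l => congrFun (congrFun hF i) l⟩
  · let y₀ (i : ι) (l : σ) : K := if hl : l ≠ j i then y i ⟨l, hl⟩ else 0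
    obtain ⟨F, hF, hFy⟩ := h
      (fun i => y₀ i - Pi.single (j i) (y₀ i ⬝ᵥ v i / v i (j i))) fun i => by
        rw [sub_dotProduct, single_dotProduct, div_mul_cancel₀ _ (hj i), sub_self]
    refine ⟨⟨F, hF⟩, ?_⟩
    ext i l
    rw [sectionEval_apply, hFy, Pi.sub_apply, Pi.single_eq_of_ne l.2, sub_zero]
    exact dif_pos l.2

omit [Fintype σ] in
theorem exists_finset_span_eq_productSpan [Finite σ] (m k : ℕ) (v : ι → σ → K) :
    ∃ T : Finset (MvPolynomial σ K), productSpan m k v = Submodule.span K T ∧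
      ∀ Q ∈ T, ∃ p : MvPolynomial σ K, p.IsHomogeneous k ∧
        ∃ F ∈ vanishingSections m v, ∃ a, p * F a = Q := by
  have hfg : (productSpan m k v).FG :=
    (homogeneousSubmodule_fg σ K (k + m + 1)).of_le fun _ hQ => isHomogeneous_of_mem_productSpan hQ
  obtain ⟨T, hT, hspan⟩ := (Submodule.fg_span_iff_fg_span_finset_subset _).mp hfg
  exact ⟨T, hspan, fun Q hQ => hT hQ⟩

omit [Fintype σ] in
/-- Combinations of products `p b * G b (a b)`, where the sections `G b` are variable, and of
fixed forms `P i`. -/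
noncomputable def combinationMap {B : Type*} [Fintype B] [Fintype ι]
    {p : B → MvPolynomial σ K} (hp : ∀ b, (p b).IsHomogeneous k) (a : B → σ)
    (P : ι → homogeneousSubmodule σ K (k + m + 1)) :
    (B → koszulSections σ K m) × (ι → K) →ₗ[K] homogeneousSubmodule σ K (k + m + 1) :=
  LinearMap.coprod
    (∑ b, ((LinearMap.mulLeft K (p b) ∘ₗ LinearMap.proj (a b) ∘ₗ
      (koszulSections σ K m).subtype).codRestrict (homogeneousSubmodule σ K (k + m + 1)) fun G =>
        (hp b).mul (isHomogeneous_of_mem_koszulSections G.2 (a b))) ∘ₗ LinearMap.proj b)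
    (Fintype.linearCombination K P)

omit [Fintype σ] in
theorem coe_combinationMap {B : Type*} [Fintype B] [Fintype ι] {p : B → MvPolynomial σ K}
    (hp : ∀ b, (p b).IsHomogeneous k) (a : B → σ) (P : ι → homogeneousSubmodule σ K (k + m + 1))
    (G : B → koszulSections σ K m) (c : ι → K) :
    (combinationMap hp a P (G, c) : MvPolynomial σ K) =
      ∑ b, p b * (G b).1 (a b) + ∑ i, c i • (P i : MvPolynomial σ K) := by
  simp [combinationMap, Fintype.linearCombination_apply]
  rfl

section Openness

variable [Fintype ι] {B : Type*} [Fintype B] {p : B → MvPolynomial σ K}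
  (hp : ∀ b, (p b).IsHomogeneous k) (a : B → σ) (P : ι → homogeneousSubmodule σ K (k + m + 1))

omit [Fintype σ] in
/-- A combination of products and fixed forms, together with the values of the sections occurring
in it. A form is thus exhibited as such a combination of sections vanishing at the `v i` if its
pair with `0` is attained. -/
noncomputable def combinationEval (j : ι → σ) (v : ι → σ → K) :
    (B → koszulSections σ K m) × (ι → K) →ₗ[K]
      homogeneousSubmodule σ K (k + m + 1) × (B → ∀ i, {l // l ≠ j i} → K) :=
  (combinationMap hp a P).prod
    (LinearMap.pi fun b => sectionEval m j v ∘ₗ LinearMap.proj b ∘ₗ LinearMap.fst K _ _)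

omit [Fintype σ] in
theorem isPolynomialMap_combinationEval [Finite σ] (j : ι → σ)
    (Gc : (B → koszulSections σ K m) × (ι → K)) :
    IsPolynomialMap fun t : ι × σ → K => combinationEval hp a P j (Function.curry t) Gc :=
  .prodMk (.const _) (.pi fun b => isPolynomialMap_sectionEval j (Gc.1 b))

theorem combinationEval_surjective {j : ι → σ} (h : IsKoszulRegular m k v)
    (hj : ∀ i, v i (j i) ≠ 0) {F : B → σ → MvPolynomial σ K}
    (hF : ∀ b, F b ∈ vanishingSections m v)
    (hspan : productSpan m k v = Submodule.span K (Set.range fun b => p b * F b (a b)))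
    (hP : ∀ (c : ι → K) (l : ι), eval (v l) (∑ i, c i • (P i : MvPolynomial σ K)) = c l) :
    Function.Surjective (combinationEval hp a P j v) := by
  intro ⟨Q, y⟩
  choose G hG using fun b => (sectionEval_surjective_iff hj).mpr h.interpolates (y b)
  let R := Q - combinationMap hp a P (G, 0)
  let c (l : ι) : K := eval (v l) R
  have hR : (R : MvPolynomial σ K) - ∑ i, c i • (P i : MvPolynomial σ K) ∈ productSpan m k v := by
    refine h.generates _ (R.2.sub (sum_mem fun i _ => Submodule.smul_mem _ _ (P i).2)) fun l => ?_
    rw [map_sub, hP, sub_self]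
  rw [hspan, Submodule.mem_span_range_iff_exists_fun] at hR
  obtain ⟨d, hd⟩ := hR
  let F' (b : B) : koszulSections σ K m := ⟨F b, (mem_vanishingSections.mp (hF b)).1⟩
  let G' (b : B) : koszulSections σ K m := d b • F' b
  have hG' : combinationMap hp a P (G', c) = R := by
    refine Subtype.ext ?_
    rw [coe_combinationMap, ← eq_sub_iff_add_eq, ← hd]
    exact Finset.sum_congr rfl fun b _ => mul_smul_comm (d b) (p b) (F b (a b))
  refine ⟨(G, 0) + (G', c), Prod.ext ?_ (funext fun b => ?_)⟩
  · change combinationMap hp a P ((G, 0) + (G', c)) = Q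
    rw [map_add, hG', add_sub_cancel]
  · change sectionEval m j v (G b + G' b) = y b
    have hF' : sectionEval m j v (F' b) = 0 :=
      LinearMap.mem_ker.mp ((mem_ker_sectionEval hj).mpr (hF b))
    rw [map_add, hG, map_smul, hF', smul_zero, add_zero]

omit [Fintype σ] in
theorem mem_productSpan_of_combinationEval_surjective [Finite σ] {j : ι → σ}
    (hj : ∀ i, v i (j i) ≠ 0) (hsurj : Function.Surjective (combinationEval hp a P j v))
    (hP : ∀ c : ι → K, (∀ l, eval (v l) (∑ i, c i • (P i : MvPolynomial σ K)) = 0) → c = 0)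
    {Q : MvPolynomial σ K} (hQ : Q.IsHomogeneous (k + m + 1)) (hQv : ∀ i, eval (v i) Q = 0) :
    Q ∈ productSpan m k v := by
  obtain ⟨⟨G, c⟩, hGc⟩ := hsurj (⟨Q, hQ⟩, 0)
  obtain ⟨hQGc, hG⟩ := Prod.ext_iff.mp hGc
  have hG' : ∀ b, (G b).1 ∈ vanishingSections m v := fun b =>
    (mem_ker_sectionEval hj).mp (congrFun hG b)
  have hproducts : ∑ b, p b * (G b).1 (a b) ∈ productSpan m k v :=
    sum_mem fun b _ => mul_mem_productSpan (hp b) (hG' b) (a b)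
  have hsum : ∑ b, p b * (G b).1 (a b) + ∑ i, c i • (P i : MvPolynomial σ K) = Q := by
    rw [← coe_combinationMap]
    exact congrArg Subtype.val hQGc
  have hc : c = 0 := hP c fun l => by
    rw [eq_sub_of_add_eq' hsum, map_sub, hQv, eval_eq_zero_of_mem_productSpan hproducts, sub_zero]
  rw [← hsum, hc]
  simpa using hproducts

omit [Fintype σ] [DecidableEq σ] in
theorem exists_open_eq_zero_of_eval_eq_zero {P : ι → MvPolynomial σ K}
    (hP : ∀ (c : ι → K) (l : ι), eval (v l) (∑ i, c i • P i) = c l) :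
    ∃ D : MvPolynomial (ι × σ) K, eval (Function.uncurry v) D ≠ 0 ∧
      ∀ t, eval t D ≠ 0 → ∀ c : ι → K,
        (∀ l, eval (Function.curry t l) (∑ i, c i • P i) = 0) → c = 0 := by
  let values (t : ι × σ → K) : (ι → K) →ₗ[K] ι → K := LinearMap.pi fun l =>
    (aeval (Function.curry t l)).toLinearMap ∘ₗ Fintype.linearCombination K P
  have hvalues : ∀ t c l, values t c l = eval (Function.curry t l) (∑ i, c i • P i) := by
    intro t c l
    simp [values, Fintype.linearCombination_apply, aeval_eq_eval]
  obtain ⟨D, hD, hsurj⟩ := IsPolynomialMap.exists_eval_ne_zero_surjective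
    (L := values) (t₀ := Function.uncurry v)
    (fun c => .pi fun l => .of_eval (rename (fun b => (l, b)) (∑ i, c i • P i)) fun t =>
      (eval_rename _ _ _).trans (hvalues t c l).symm)
    fun c => ⟨c, funext fun l => by rw [hvalues, Function.curry_uncurry, hP]⟩
  refine ⟨D, hD, fun t ht c hc => LinearMap.injective_iff_surjective.mpr (hsurj t ht) ?_⟩
  ext l
  rw [map_zero, hvalues]
  exact hc l

end Openness

namespace IsKoszulRegular

theorem exists_open_generates [Finite ι] [Nontrivial σ] (h : IsKoszulRegular m k v) {j : ι → σ}
    (hj : ∀ i, v i (j i) ≠ 0) :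
    ∃ D : MvPolynomial (ι × σ) K, eval (Function.uncurry v) D ≠ 0 ∧
      ∀ t, eval t D ≠ 0 → (∀ i, t (i, j i) ≠ 0) → ∀ Q : MvPolynomial σ K,
        Q.IsHomogeneous (k + m + 1) → (∀ i, eval (Function.curry t i) Q = 0) →
          Q ∈ productSpan m k (Function.curry t) := by
  have := Fintype.ofFinite ι
  obtain ⟨P, hP, hPv⟩ := h.exists_dual_forms
  let P' (i : ι) : homogeneousSubmodule σ K (k + m + 1) :=
    ⟨P i, isHomogeneous_of_mem_productSpan (hP i)⟩
  obtain ⟨T, hT, hTF⟩ := exists_finset_span_eq_productSpan m k v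
  choose p hp F hF a hpF using fun Q : T => hTF Q Q.2
  have : Module.Finite K (homogeneousSubmodule σ K (k + m + 1)) :=
    Module.Finite.iff_fg.mpr (homogeneousSubmodule_fg σ K (k + m + 1))
  obtain ⟨D₁, hD₁, hsurj⟩ := IsPolynomialMap.exists_eval_ne_zero_surjective
    (L := fun t => combinationEval hp a P' j (Function.curry t)) (t₀ := Function.uncurry v)
    (isPolynomialMap_combinationEval hp a P' j)
    (combinationEval_surjective hp a P' h hj hF
      (by rw [funext hpF, Subtype.range_coe_subtype]; exact hT) hPv)
  obtain ⟨D₂, hD₂, hinj⟩ := exists_open_eq_zero_of_eval_eq_zero hPv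
  refine ⟨D₁ * D₂, by rw [map_mul]; exact mul_ne_zero hD₁ hD₂, fun t ht hj' Q hQ hQv => ?_⟩
  rw [map_mul] at ht
  exact mem_productSpan_of_combinationEval_surjective hp a P' hj'
    (hsurj t (left_ne_zero_of_mul ht)) (hinj t (right_ne_zero_of_mul ht)) hQ hQv

theorem exists_open [Finite ι] [Nontrivial σ] (h : IsKoszulRegular m k v) :
    ∃ D : MvPolynomial (ι × σ) K, eval (Function.uncurry v) D ≠ 0 ∧
      ∀ t, eval t D ≠ 0 → IsKoszulRegular m k (Function.curry t) := by
  choose j hj using fun i => Function.ne_iff.mp (h.ne_zero i)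
  simp only [Pi.zero_apply] at hj
  obtain ⟨D₁, hD₁, hsurj⟩ := IsPolynomialMap.exists_eval_ne_zero_surjective
    (L := fun t => sectionEval m j (Function.curry t)) (t₀ := Function.uncurry v)
    (isPolynomialMap_sectionEval j) ((sectionEval_surjective_iff hj).mpr h.interpolates)
  obtain ⟨D₂, hD₂, hgen⟩ := h.exists_open_generates hj
  have := Fintype.ofFinite ι
  refine ⟨D₁ * D₂ * ∏ i, X (i, j i), ?_, fun t ht => ?_⟩
  · classical
    rw [map_mul, map_mul, map_prod]
    refine mul_ne_zero (mul_ne_zero hD₁ hD₂) (Finset.prod_ne_zero_iff.mpr fun i _ => ?_)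
    rw [eval_X]
    exact hj i
  · rw [map_mul, map_mul, map_prod] at ht
    have hj' : ∀ i, t (i, j i) ≠ 0 := fun i => by
      rw [← eval_X (f := t)]
      exact Finset.prod_ne_zero_iff.mp (right_ne_zero_of_mul ht) i (Finset.mem_univ i)
    exact ⟨(sectionEval_surjective_iff (v := Function.curry t) hj').mp
        (hsurj t (left_ne_zero_of_mul (left_ne_zero_of_mul ht))),
      hgen t (right_ne_zero_of_mul (left_ne_zero_of_mul ht)) hj'⟩

end IsKoszulRegular

end Regular

section Lattice

variable {K : Type*} [Field K]

theorem homogeneousSubmodule_succ_le {σ : Type*} {d : ℕ} {S : Submodule K (MvPolynomial σ K)}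
    (h : ∀ i (p : MvPolynomial σ K), p.IsHomogeneous d → X i * p ∈ S) :
    homogeneousSubmodule σ K (d + 1) ≤ S := by
  rw [← homogeneousSubmodule_one_pow, pow_succ', homogeneousSubmodule_one_pow, Submodule.mul_le]
  intro x hx p hp
  suffices homogeneousSubmodule σ K 1 ≤ S.comap (LinearMap.mulRight K p) from this hx
  rw [homogeneousSubmodule_one_eq_span_X, Submodule.span_le]
  rintro _ ⟨i, rfl⟩
  exact h i p hp

theorem homogeneousSubmodule_le_of_X_mul_mem {σ : Type*} {S : ℕ → Submodule K (MvPolynomial σ K)}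
    (h_one : 1 ∈ S 0) (h_mul : ∀ d i, ∀ p ∈ S d, X i * p ∈ S (d + 1)) (d : ℕ) :
    homogeneousSubmodule σ K d ≤ S d := by
  induction d with
  | zero => rwa [← homogeneousSubmodule_one_pow, pow_zero, Submodule.one_le]
  | succ d ih => exact homogeneousSubmodule_succ_le fun i p hp => h_mul d i p (ih hp)

variable {N : ℕ}

variable (K) in
/-- The product of the linear forms `X (j + 1) - t X 0` for `t < α j`, which cuts out the lattice
points that do not dominate `α`. -/
noncomputable def latticeForm (α : Fin N → ℕ) :
    MvPolynomial (Fin (N + 1)) K :=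
  ∏ j, ∏ t ∈ Finset.range (α j), (X j.succ - C (t : K) * X 0)

variable (K) in
/-- The point `(1, α)` of the affine chart `X 0 = 1`. -/
def latticePoint (α : Fin N → ℕ) : Fin (N + 1) → K :=
  Fin.cons 1 fun j => (α j : K)

theorem isHomogeneous_prod_X_sub_C_mul_X (s : Fin N → Finset ℕ) :
    (∏ j, ∏ t ∈ s j, (X j.succ - C (t : K) * X 0)).IsHomogeneous (∑ j, (s j).card) := by
  refine IsHomogeneous.prod _ _ _ fun j _ => ?_
  rw [Finset.card_eq_sum_ones]
  exact IsHomogeneous.prod _ _ _ fun t _ => (isHomogeneous_X _ _).sub (isHomogeneous_C_mul_X _ _)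

theorem isHomogeneous_latticeForm (α : Fin N → ℕ) :
    (latticeForm K α).IsHomogeneous (∑ j, α j) := by
  simpa only [latticeForm, Finset.card_range] using
    isHomogeneous_prod_X_sub_C_mul_X (K := K) fun j => Finset.range (α j)

theorem exists_latticeForm_eq_mul {α γ : Fin N → ℕ} (h : γ ≤ α) :
    ∃ r : MvPolynomial (Fin (N + 1)) K, r.IsHomogeneous (∑ j, α j - ∑ j, γ j) ∧
      latticeForm K α = r * latticeForm K γ := by
  refine ⟨∏ j, ∏ t ∈ Finset.Ico (γ j) (α j), (X j.succ - C (t : K) * X 0), ?_, ?_⟩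
  · rw [← Finset.sum_tsub_distrib _ fun j _ => h j]
    simpa only [Nat.card_Ico] using
      isHomogeneous_prod_X_sub_C_mul_X (K := K) fun j => Finset.Ico (γ j) (α j)
  · rw [latticeForm, latticeForm, ← Finset.prod_mul_distrib]
    refine Finset.prod_congr rfl fun j _ => ?_
    rw [mul_comm, Finset.prod_range_mul_prod_Ico _ (h j)]

theorem latticeForm_add_single (α : Fin N → ℕ) (j : Fin N) :
    latticeForm K (α + Pi.single j 1) = latticeForm K α * (X j.succ - C (α j : K) * X 0) := by
  have hfactor : ∀ i, ∏ t ∈ Finset.range ((α + Pi.single j 1 : Fin N → ℕ) i),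
      (X i.succ - C (t : K) * X 0 : MvPolynomial (Fin (N + 1)) K) =
        (∏ t ∈ Finset.range (α i), (X i.succ - C (t : K) * X 0)) *
          if i = j then X j.succ - C (α j : K) * X 0 else 1 := by
    intro i
    split_ifs with hi
    · rw [hi, Pi.add_apply, Pi.single_eq_same, Finset.prod_range_succ]
    · rw [Pi.add_apply, Pi.single_eq_of_ne hi, add_zero, mul_one]
  rw [latticeForm, Finset.prod_congr rfl fun i _ => hfactor i, Finset.prod_mul_distrib,
    Finset.prod_ite_eq' Finset.univ j, if_pos (Finset.mem_univ j), latticeForm]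

theorem homogeneousSubmodule_le_span_latticeForm (d : ℕ) :
    homogeneousSubmodule (Fin (N + 1)) K d ≤ Submodule.span K
      {Q | ∃ (e : ℕ) (α : Fin N → ℕ), e + ∑ j, α j = d ∧ X 0 ^ e * latticeForm K α = Q} := by
  let S (d : ℕ) : Submodule K (MvPolynomial (Fin (N + 1)) K) := Submodule.span K
    {Q | ∃ (e : ℕ) (α : Fin N → ℕ), e + ∑ j, α j = d ∧ X 0 ^ e * latticeForm K α = Q}
  refine homogeneousSubmodule_le_of_X_mul_mem (S := S)
    (Submodule.subset_span ⟨0, 0, by simp, by simp [latticeForm]⟩) (fun d i => ?_) d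
  suffices S d ≤ (S (d + 1)).comap (LinearMap.mulLeft K (X i)) from fun p hp => this hp
  refine Submodule.span_le.mpr ?_
  rintro _ ⟨e, α, rfl, rfl⟩
  have hX₀ : X 0 ^ (e + 1) * latticeForm K α ∈ S (e + ∑ j, α j + 1) :=
    Submodule.subset_span ⟨e + 1, α, by ring, rfl⟩
  rw [SetLike.mem_coe, Submodule.mem_comap, LinearMap.mulLeft_apply]
  induction i using Fin.cases with
  | zero => rwa [← mul_assoc, ← pow_succ']
  | succ j =>
    have hX : X j.succ * (X 0 ^ e * latticeForm K α) = X 0 ^ e * latticeForm K (α + Pi.single j 1) +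
        (α j : K) • (X 0 ^ (e + 1) * latticeForm K α) := by
      rw [latticeForm_add_single, smul_eq_C_mul]
      ring
    rw [hX]
    refine add_mem (Submodule.subset_span ⟨e, _, ?_, rfl⟩) (Submodule.smul_mem _ _ hX₀)
    simp only [Pi.add_apply, Finset.sum_add_distrib, Finset.sum_pi_single', Finset.mem_univ,
      if_true, add_assoc]

theorem eval_latticeForm_eq_zero {α l : Fin N → ℕ} (h : ¬ α ≤ l) :
    eval (latticePoint K l) (latticeForm K α) = 0 := by
  obtain ⟨j, hj⟩ := not_forall.mp h
  simp only [latticeForm, map_prod]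
  refine Finset.prod_eq_zero (Finset.mem_univ j)
    (Finset.prod_eq_zero (Finset.mem_range.mpr (not_le.mp hj)) ?_)
  simp [latticePoint]

theorem eval_latticeForm_self_ne_zero [CharZero K] (α : Fin N → ℕ) :
    eval (latticePoint K α) (latticeForm K α) ≠ 0 := by
  simp only [latticeForm, map_prod]
  refine Finset.prod_ne_zero_iff.mpr fun j _ => Finset.prod_ne_zero_iff.mpr fun t ht => ?_
  have : (α j : K) ≠ t := Nat.cast_injective.ne (Finset.mem_range.mp ht).ne'
  simpa [latticePoint, sub_eq_zero] using this

theorem eval_cons_zero_latticeForm (α : Fin N → ℕ) (z : Fin N → K) :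
    eval (Fin.cons 0 z) (latticeForm K α) = ∏ j, z j ^ α j := by
  simp [latticeForm]

variable {m : ℕ} {A : Set (Fin N → ℕ)}

/-- The exponents of weight at most `m` that are not in `A`. -/
def latticeSet (m : ℕ) (A : Set (Fin N → ℕ)) : Set (Fin N → ℕ) :=
  {α | ∑ j, α j ≤ m ∧ α ∉ A}

instance finite_latticeSet (m : ℕ) (A : Set (Fin N → ℕ)) : Finite (latticeSet m A) := by
  refine Set.Finite.subset (Set.finite_Icc (0 : Fin N → ℕ) fun _ => m) fun α hα => ?_
  exact ⟨zero_le, fun j => (Finset.single_le_sum (fun _ _ => Nat.zero_le _)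
    (Finset.mem_univ j)).trans hα.1⟩

noncomputable instance fintype_latticeSet (m : ℕ) (A : Set (Fin N → ℕ)) :
    Fintype (latticeSet m A) := Fintype.ofFinite _

-- The evaluation matrix is triangular with respect to the order on exponents.
theorem eq_zero_of_eval_latticePoint_eq_zero [CharZero K] (e : latticeSet m A → ℕ)
    {c : latticeSet m A → K}
    (h : ∀ l : latticeSet m A, eval (latticePoint K l.1)
      (∑ α, c α • (X 0 ^ e α * latticeForm K α.1)) = 0) : c = 0 := by
  by_contra hc
  obtain ⟨l, hl, hmin⟩ := Set.exists_min_image {a : latticeSet m A | c a ≠ 0}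
    (fun a => ∑ j, a.1 j) (Set.toFinite _) (Function.ne_iff.mp hc)
  have hsum := h l
  rw [map_sum, Fintype.sum_eq_single l fun α hα => ?_] at hsum
  · simp only [smul_eval, map_mul, map_pow, eval_X, latticePoint, Fin.cons_zero, one_pow,
      one_mul] at hsum
    exact mul_ne_zero hl (eval_latticeForm_self_ne_zero _) hsum
  · rw [smul_eval, map_mul]
    by_cases hle : α.1 ≤ l.1
    · have hlt : ∑ j, α.1 j < ∑ j, l.1 j :=
        Fintype.sum_strictMono (lt_of_le_of_ne hle (Subtype.coe_ne_coe.mpr hα))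
      rw [not_not.mp fun hcα => (hmin α hcα).not_gt hlt, zero_mul]
    · rw [eval_latticeForm_eq_zero hle, mul_zero, mul_zero]

theorem exists_isHomogeneous_eval_latticePoint [CharZero K] (y : latticeSet m A → K) :
    ∃ f : MvPolynomial (Fin (N + 1)) K, f.IsHomogeneous m ∧
      ∀ l : latticeSet m A, eval (latticePoint K l.1) f = y l := by
  let f (α : latticeSet m A) : MvPolynomial (Fin (N + 1)) K :=
    X 0 ^ (m - ∑ j, α.1 j) * latticeForm K α.1
  let L : (latticeSet m A → K) →ₗ[K] latticeSet m A → K := LinearMap.pi fun l =>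
    (aeval (latticePoint K l.1)).toLinearMap ∘ₗ Fintype.linearCombination K f
  have hL : ∀ c l, L c l = eval (latticePoint K l.1) (∑ α, c α • f α) := fun c l => by
    simp [L, Fintype.linearCombination_apply, aeval_eq_eval]
  have hinj : Function.Injective L := by
    rw [← LinearMap.ker_eq_bot, LinearMap.ker_eq_bot']
    exact fun c hc => eq_zero_of_eval_latticePoint_eq_zero _ fun l => by
      rw [← hL, hc, Pi.zero_apply]
  obtain ⟨c, rfl⟩ := LinearMap.injective_iff_surjective.mp hinj y
  refine ⟨∑ α, c α • f α, ?_, fun l => (hL c l).symm⟩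
  refine sum_mem (S := homogeneousSubmodule _ K m) fun α _ => Submodule.smul_mem _ _ ?_
  rw [mem_homogeneousSubmodule, ← Nat.sub_add_cancel α.2.1]
  exact (isHomogeneous_X_pow _ _).mul (isHomogeneous_latticeForm α.1)

/-- `A` consists of exponents of weight `m`, and every exponent of larger weight dominates an
element of `A`. Then the forms `latticeForm K γ` with `γ ∈ A` generate the forms of degree at least
`m` that vanish at the lattice points of `latticeSet m A`. -/
structure IsCovering (m : ℕ) (A : Set (Fin N → ℕ)) : Prop where
  sum_eq : ∀ γ ∈ A, ∑ j, γ j = m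
  exists_le : ∀ α : Fin N → ℕ, m < ∑ j, α j → ∃ γ ∈ A, γ ≤ α

namespace IsCovering

theorem eval_latticeForm (hA : IsCovering m A) {γ : Fin N → ℕ} (hγ : γ ∈ A) (l : latticeSet m A) :
    eval (latticePoint K l.1) (latticeForm K γ) = 0 := by
  refine eval_latticeForm_eq_zero fun hle => ?_
  have hlt : ∑ j, γ j < ∑ j, l.1 j :=
    Fintype.sum_strictMono (lt_of_le_of_ne hle fun h => l.2.2 (h ▸ hγ))
  exact (hA.sum_eq γ hγ ▸ hlt).not_ge l.2.1

theorem exists_latticeForm_eq_mul (hA : IsCovering m A) {α : Fin N → ℕ} (hα : α ∉ latticeSet m A) :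
    ∃ γ ∈ A, m ≤ ∑ j, α j ∧ ∃ r : MvPolynomial (Fin (N + 1)) K,
      r.IsHomogeneous (∑ j, α j - m) ∧ latticeForm K α = r * latticeForm K γ := by
  obtain ⟨γ, hγ, hle⟩ : ∃ γ ∈ A, γ ≤ α := by
    by_cases hm : m < ∑ j, α j
    · exact hA.exists_le α hm
    · exact ⟨α, not_not.mp fun h => hα ⟨not_lt.mp hm, h⟩, le_rfl⟩
  refine ⟨γ, hγ, ?_, ?_⟩ <;> rw [← hA.sum_eq γ hγ]
  exacts [Finset.sum_le_sum fun j _ => hle j, _root_.exists_latticeForm_eq_mul hle]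

theorem mem_of_mul_mem [CharZero K] (hA : IsCovering m A) {k : ℕ}
    {S : Submodule K (MvPolynomial (Fin (N + 1)) K)}
    (hS : ∀ r g : MvPolynomial (Fin (N + 1)) K, r.IsHomogeneous k → g.IsHomogeneous m →
      (∀ l : latticeSet m A, eval (latticePoint K l.1) g = 0) → r * g ∈ S)
    {P : MvPolynomial (Fin (N + 1)) K} (hP : P.IsHomogeneous (k + m))
    (hPv : ∀ l : latticeSet m A, eval (latticePoint K l.1) P = 0) : P ∈ S := by
  let V : Submodule K (MvPolynomial (Fin (N + 1)) K) :=
    ⨅ l : latticeSet m A, LinearMap.ker (aeval (latticePoint K l.1)).toLinearMap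
  have hV : ∀ {g}, g ∈ V ↔ ∀ l : latticeSet m A, eval (latticePoint K l.1) g = 0 := fun {g} => by
    simp [V, Submodule.mem_iInf, aeval_eq_eval]
  let f (α : latticeSet m A) : MvPolynomial (Fin (N + 1)) K :=
    X 0 ^ (k + m - ∑ j, α.1 j) * latticeForm K α.1
  have hdecomp : P ∈ S ⊓ V ⊔ LinearMap.range (Fintype.linearCombination K f) := by
    refine Submodule.span_le.mpr ?_ (homogeneousSubmodule_le_span_latticeForm (k + m) hP)
    rintro _ ⟨e, α, he, rfl⟩
    by_cases hα : α ∈ latticeSet m A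
    · refine Submodule.mem_sup_right ⟨Pi.single ⟨α, hα⟩ 1, ?_⟩
      rw [Fintype.linearCombination_apply_single, one_smul, Nat.eq_sub_of_add_eq he]
    · obtain ⟨γ, hγ, hmα, r, hr, hα'⟩ := hA.exists_latticeForm_eq_mul (K := K) hα
      rw [hα', ← mul_assoc]
      have hr' : (X 0 ^ e * r).IsHomogeneous k := by
        rw [show k = e + (∑ j, α j - m) by omega]
        exact (isHomogeneous_X_pow _ _).mul hr
      refine Submodule.mem_sup_left ⟨hS _ _ hr' ?_ (hA.eval_latticeForm hγ), hV.mpr fun l => ?_⟩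
      · exact hA.sum_eq γ hγ ▸ isHomogeneous_latticeForm γ
      · rw [map_mul, hA.eval_latticeForm hγ, mul_zero]
  obtain ⟨u, hu, _, ⟨c, rfl⟩, rfl⟩ := Submodule.mem_sup.mp hdecomp
  rw [Fintype.linearCombination_apply] at hPv ⊢
  have hc : c = 0 := eq_zero_of_eval_latticePoint_eq_zero _ fun l => by
    have hPl := hPv l
    rwa [map_add, hV.mp hu.2 l, zero_add] at hPl
  simpa [hc] using hu.1

end IsCovering

end Lattice

section Cone

variable {K : Type*} [Field K] {N : ℕ}

variable (K N) in
/-- Restriction of polynomials to the hyperplane `X 0 = 0`. -/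
noncomputable def restrictZero : MvPolynomial (Fin (N + 1)) K →ₐ[K] MvPolynomial (Fin N) K :=
  aeval (Fin.cons 0 X)

theorem restrictZero_rename_succ (p : MvPolynomial (Fin N) K) :
    restrictZero K N (rename Fin.succ p) = p := by
  rw [restrictZero, aeval_rename]
  exact aeval_X_left_apply p

theorem restrictZero_X_zero : restrictZero K N (X 0) = 0 := by
  simp [restrictZero]

theorem eval_restrictZero (z : Fin N → K) (p : MvPolynomial (Fin (N + 1)) K) :
    eval z (restrictZero K N p) = eval (Fin.cons 0 z) p := by
  suffices (aeval z).comp (restrictZero K N) = aeval (Fin.cons 0 z) by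
    simpa [aeval_eq_eval] using DFunLike.congr_fun this p
  refine algHom_ext fun j => ?_
  cases j using Fin.cases <;> simp [restrictZero]

theorem eval_cons_zero_eq_zero_of_restrictZero {p : MvPolynomial (Fin (N + 1)) K}
    (hp : restrictZero K N p = 0) (z : Fin N → K) : eval (Fin.cons 0 z) p = 0 := by
  rw [← eval_restrictZero, hp, map_zero]

theorem isHomogeneous_restrictZero {d : ℕ} {p : MvPolynomial (Fin (N + 1)) K}
    (hp : p.IsHomogeneous d) : (restrictZero K N p).IsHomogeneous d := by
  rw [← one_mul d]
  refine hp.aeval _ fun j => ?_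
  cases j using Fin.cases
  exacts [isHomogeneous_zero _ _ _, isHomogeneous_X _ _]

theorem X_zero_dvd_of_restrictZero_eq_zero {p : MvPolynomial (Fin (N + 1)) K}
    (hp : restrictZero K N p = 0) : X 0 ∣ p := by
  let π := Ideal.Quotient.mkₐ K (Ideal.span {(X 0 : MvPolynomial (Fin (N + 1)) K)})
  have hX₀ : π (X 0) = 0 :=
    Ideal.Quotient.eq_zero_iff_mem.mpr (Ideal.mem_span_singleton_self _)
  have hπ : π.comp ((rename Fin.succ).comp (restrictZero K N)) = π := algHom_ext fun j => by
    cases j using Fin.cases <;> simp [restrictZero, hX₀]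
  refine Ideal.mem_span_singleton.mp (Ideal.Quotient.eq_zero_iff_mem.mp (?_ : π p = 0))
  rw [← hπ, AlgHom.comp_apply, AlgHom.comp_apply, hp, map_zero, map_zero]

theorem isHomogeneous_of_X_mul {σ : Type*} {d : ℕ} {i : σ} {p : MvPolynomial σ K}
    (h : (X i * p).IsHomogeneous (d + 1)) : p.IsHomogeneous d := by
  intro e he
  rw [← coeff_X_mul e i] at he
  have hdeg := h he
  rw [map_add, Finsupp.weight_single, Pi.one_apply, smul_eq_mul, mul_one, add_comm] at hdeg
  exact Nat.succ_injective hdeg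

variable (K N) in
/-- The section on `Fin (N + 1)` with the components of a section on `Fin N`, constant along the
lines through the vertex `(1, 0)`. -/
noncomputable def liftSection :
    (Fin N → MvPolynomial (Fin N) K) →ₗ[K] Fin (N + 1) → MvPolynomial (Fin (N + 1)) K :=
  LinearMap.pi (Fin.cons 0 fun j => (rename Fin.succ).toLinearMap ∘ₗ LinearMap.proj j)

theorem liftSection_succ (F : Fin N → MvPolynomial (Fin N) K) (j : Fin N) :
    liftSection K N F j.succ = rename Fin.succ (F j) := rfl

variable {m : ℕ}

theorem liftSection_mem_koszulSections {F : Fin N → MvPolynomial (Fin N) K}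
    (hF : F ∈ koszulSections (Fin N) K m) :
    liftSection K N F ∈ koszulSections (Fin (N + 1)) K m := by
  suffices koszulSections (Fin N) K m ≤
    (koszulSections (Fin (N + 1)) K m).comap (liftSection K N) from this hF
  rw [koszulSections, Submodule.span_le]
  rintro _ ⟨p, q, f, hf, rfl⟩
  have hlift : liftSection K N (koszulSyzygy p q f) =
      koszulSyzygy p.succ q.succ (rename Fin.succ f) := funext fun j => by
    cases j using Fin.cases with
    | zero => simp [liftSection, koszulSyzygy_apply, (Fin.succ_ne_zero _).symm]
    | succ j => simp [liftSection_succ, koszulSyzygy_apply, apply_ite (rename Fin.succ)]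
  rw [SetLike.mem_coe, Submodule.mem_comap, hlift]
  exact koszulSyzygy_mem_koszulSections _ _ hf.rename_isHomogeneous

/-- The section `(-∑ j, g j X (j + 1), g 0 X 0, …, g (N - 1) X 0)`. -/
noncomputable def coneSection (g : Fin N → MvPolynomial (Fin (N + 1)) K) :
    Fin (N + 1) → MvPolynomial (Fin (N + 1)) K :=
  ∑ j, koszulSyzygy j.succ 0 (g j)

theorem coneSection_succ (g : Fin N → MvPolynomial (Fin (N + 1)) K) (j : Fin N) :
    coneSection g j.succ = g j * X 0 := by
  simp [coneSection, koszulSyzygy_apply]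

theorem restrictZero_coneSection_succ (g : Fin N → MvPolynomial (Fin (N + 1)) K) (j : Fin N) :
    restrictZero K N (coneSection g j.succ) = 0 := by
  rw [coneSection_succ, map_mul, restrictZero_X_zero, mul_zero]

theorem coneSection_mem_koszulSections {g : Fin N → MvPolynomial (Fin (N + 1)) K}
    (hg : ∀ j, (g j).IsHomogeneous m) : coneSection g ∈ koszulSections (Fin (N + 1)) K m :=
  sum_mem fun j _ => koszulSyzygy_mem_koszulSections _ _ (hg j)

variable {ι : Type*} {A : Set (Fin N → ℕ)} {z : ι → Fin N → K} {j₀ : Fin N}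

variable (m A) in
/-- The lattice points of `latticeSet m A` together with the points `z i` of the hyperplane
`X 0 = 0`. -/
def conePoints (z : ι → Fin N → K) : latticeSet m A ⊕ ι → Fin (N + 1) → K :=
  Sum.elim (fun l => latticePoint K l.1) fun i => Fin.cons 0 (z i)

variable (m A) in
/-- There are sections of degree `m` vanishing at the lattice points of `latticeSet m A`, whose
components of index `j + 1` vanish on the hyperplane `X 0 = 0` and that of index `j₀ + 1`
everywhere, but whose component of index `0` takes arbitrary values at the points `z i`. -/
def AbsorbsAtInfinity (z : ι → Fin N → K) (j₀ : Fin N) : Prop :=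
  ∀ y : ι → K, ∃ F ∈ koszulSections (Fin (N + 1)) K m,
    (∀ j : Fin N, restrictZero K N (F j.succ) = 0) ∧ F j₀.succ = 0 ∧
      (∀ (l : latticeSet m A) (j : Fin (N + 1)), eval (latticePoint K l.1) (F j) = 0) ∧
      ∀ i, eval (Fin.cons 0 (z i)) (F 0) = y i

theorem exists_add_coneSection_eval_latticePoint [CharZero K]
    {G : Fin (N + 1) → MvPolynomial (Fin (N + 1)) K} (hG : G ∈ koszulSections (Fin (N + 1)) K m)
    {w : latticeSet m A → Fin (N + 1) → K} (hw : ∀ l, w l ⬝ᵥ latticePoint K l.1 = 0) :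
    ∃ f : Fin N → MvPolynomial (Fin (N + 1)) K, (∀ j, (f j).IsHomogeneous m) ∧
      ∀ l j, eval (latticePoint K l.1) ((G + coneSection f) j) = w l j := by
  choose f hf hfv using fun j : Fin N => exists_isHomogeneous_eval_latticePoint (A := A) fun l =>
    w l j.succ - eval (latticePoint K l.1) (G j.succ)
  refine ⟨f, hf, fun l => congrFun ?_⟩
  refine eq_of_dotProduct_eq (j := 0) (x := latticePoint K l.1) one_ne_zero ?_ fun j hj => ?_
  · exact (eval_dotProduct_of_mem_koszulSections
      (add_mem hG (coneSection_mem_koszulSections hf)) _).trans (hw l).symm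
  · obtain ⟨j, rfl⟩ := Fin.exists_succ_eq.mpr hj
    have hX₀ : latticePoint K l.1 0 = 1 := rfl
    rw [Pi.add_apply, map_add, coneSection_succ, map_mul, hfv, eval_X, hX₀, mul_one,
      add_sub_cancel]

namespace AbsorbsAtInfinity

variable (habs : AbsorbsAtInfinity m A z j₀)
include habs

theorem exists_eval_conePoints [CharZero K]
    {G : Fin (N + 1) → MvPolynomial (Fin (N + 1)) K} (hG : G ∈ koszulSections (Fin (N + 1)) K m)
    {w : latticeSet m A ⊕ ι → Fin (N + 1) → K} (hw : ∀ i, w i ⬝ᵥ conePoints m A z i = 0)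
    (hGz : ∀ i j, eval (Fin.cons 0 (z i)) (G (Fin.succ j)) = w (Sum.inr i) j.succ) :
    ∃ F ∈ koszulSections (Fin (N + 1)) K m,
      (∀ j : Fin N, restrictZero K N (F j.succ) = restrictZero K N (G j.succ)) ∧
        ∀ i j, eval (conePoints m A z i) (F j) = w i j := by
  obtain ⟨f, hf, hfv⟩ := exists_add_coneSection_eval_latticePoint hG fun l => hw (Sum.inl l)
  obtain ⟨E, hE, hE₀, -, hEl, hEz⟩ := habs fun i =>
    w (Sum.inr i) 0 - eval (Fin.cons 0 (z i)) ((G + coneSection f) 0)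
  have hres : ∀ j : Fin N, restrictZero K N ((G + coneSection f + E) (Fin.succ j)) =
      restrictZero K N (G j.succ) := fun j => by
    simp only [Pi.add_apply, map_add, restrictZero_coneSection_succ, hE₀, add_zero]
  refine ⟨G + coneSection f + E,
    add_mem (add_mem hG (coneSection_mem_koszulSections hf)) hE, hres, ?_⟩
  rintro (l | i) j
  · simp only [conePoints, Sum.elim_inl, Pi.add_apply (G + coneSection f), map_add (eval _), hfv,
      hEl, add_zero]
  · cases j using Fin.cases with
    | zero => simp only [conePoints, Sum.elim_inr, Pi.add_apply (G + coneSection f),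
        map_add (eval _), hEz, add_sub_cancel]
    | succ j => rw [conePoints, Sum.elim_inr, ← eval_restrictZero, hres, eval_restrictZero, hGz]

theorem X_zero_mul_mem_productSpan {k : ℕ} {r g : MvPolynomial (Fin (N + 1)) K}
    (hr : r.IsHomogeneous k) (hg : g.IsHomogeneous m)
    (hgl : ∀ l : latticeSet m A, eval (latticePoint K l.1) g = 0) :
    X 0 * (r * g) ∈ productSpan m k (conePoints m A z) := by
  obtain ⟨E, hE, hE₀, hEj₀, hEl, hEz⟩ := habs fun i =>
    -eval (Fin.cons 0 (z i)) (koszulSyzygy j₀.succ 0 g 0)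
  have hvan : koszulSyzygy j₀.succ 0 g + E ∈ vanishingSections m (conePoints m A z) := by
    refine mem_vanishingSections.mpr ⟨add_mem (koszulSyzygy_mem_koszulSections _ _ hg) hE, ?_⟩
    rintro (l | i) j <;> rw [Pi.add_apply, map_add]
    · rw [conePoints, Sum.elim_inl, hEl, eval_koszulSyzygy, hgl, zero_mul, add_zero]
    · cases j using Fin.cases with
      | zero => rw [conePoints, Sum.elim_inr, hEz, add_neg_cancel]
      | succ j => simp [conePoints, eval_koszulSyzygy,
          eval_cons_zero_eq_zero_of_restrictZero (hE₀ j)]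
  have hmem := mul_mem_productSpan hr hvan j₀.succ
  rwa [Pi.add_apply, hEj₀, add_zero, koszulSyzygy_apply, if_pos rfl, if_neg (Fin.succ_ne_zero _),
    sub_zero, ← mul_assoc, mul_comm] at hmem

theorem exists_mem_productSpan_restrictZero_eq [CharZero K] {k : ℕ} {Q : MvPolynomial (Fin N) K}
    (hQ : Q ∈ productSpan m k z) :
    ∃ R ∈ productSpan m k (conePoints m A z), restrictZero K N R = Q := by
  suffices productSpan m k z ≤
    (productSpan m k (conePoints m A z)).map (restrictZero K N).toLinearMap from this hQ
  rw [productSpan, Submodule.span_le]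
  rintro _ ⟨p, hp, F, hF, j, rfl⟩
  obtain ⟨hF, hFz⟩ := mem_vanishingSections.mp hF
  obtain ⟨G, hG, hGF, hGv⟩ := habs.exists_eval_conePoints (w := 0)
    (liftSection_mem_koszulSections hF) (fun i => zero_dotProduct _) fun i j => by
      rw [← eval_restrictZero, liftSection_succ, restrictZero_rename_succ, hFz]
      rfl
  refine ⟨rename Fin.succ p * G j.succ, mul_mem_productSpan hp.rename_isHomogeneous
    (mem_vanishingSections.mpr ⟨hG, hGv⟩) j.succ, ?_⟩
  simp only [AlgHom.toLinearMap_apply, map_mul, hGF, liftSection_succ, restrictZero_rename_succ]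

end AbsorbsAtInfinity

theorem IsKoszulRegular.cone [CharZero K] {k : ℕ} (hA : IsCovering m A)
    (hz : IsKoszulRegular m k z) (habs : AbsorbsAtInfinity m A z j₀) :
    IsKoszulRegular m k (conePoints m A z) where
  interpolates w hw := by
    obtain ⟨F, hF, hFz⟩ := hz.interpolates (fun i j => w (Sum.inr i) j.succ) fun i => by
      simpa [dotProduct, Fin.sum_univ_succ, conePoints] using hw (Sum.inr i)
    obtain ⟨G, hG, -, hGv⟩ := habs.exists_eval_conePoints (liftSection_mem_koszulSections hF) hw
      fun i j => by
        rw [← eval_restrictZero, liftSection_succ, restrictZero_rename_succ, hFz]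
    exact ⟨G, hG, hGv⟩
  generates P hP hPv := by
    obtain ⟨R, hR, hRP⟩ := habs.exists_mem_productSpan_restrictZero_eq (A := A) <|
      hz.generates _ (isHomogeneous_restrictZero hP) fun i => by
        rw [eval_restrictZero]
        exact hPv (Sum.inr i)
    obtain ⟨P', hP'⟩ : X 0 ∣ P - R := X_zero_dvd_of_restrictZero_eq_zero (by
      rw [map_sub, hRP, sub_self])
    have hhom : P'.IsHomogeneous (k + m) := isHomogeneous_of_X_mul (i := 0) <| by
      rw [← hP']
      exact hP.sub (isHomogeneous_of_mem_productSpan hR)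
    have hP'v : ∀ l : latticeSet m A, eval (latticePoint K l.1) P' = 0 := fun l => by
      have hPR : eval (conePoints m A z (Sum.inl l)) (P - R) = 0 := by
        rw [map_sub, hPv, eval_eq_zero_of_mem_productSpan hR, sub_self]
      simpa [hP', conePoints, latticePoint] using hPR
    have hX₀P' : X 0 * P' ∈ productSpan m k (conePoints m A z) :=
      hA.mem_of_mul_mem
        (S := (productSpan m k (conePoints m A z)).comap (LinearMap.mulLeft K (X 0)))
        (fun r g => habs.X_zero_mul_mem_productSpan) hhom hP'v
    rw [← sub_add_cancel P R, hP']
    exact add_mem hX₀P' hR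

end Cone

section ConeExistence

theorem det_prod_X_pow_ne_zero {ι τ R : Type*} [Fintype ι] [DecidableEq ι] [Fintype τ] [CommRing R]
    [Nontrivial R] {b : ι → τ → ℕ} (hb : Function.Injective b) :
    (Matrix.of fun i l => ∏ j, (X (l, j) : MvPolynomial (ι × τ) R) ^ b i j).det ≠ 0 := by
  classical
  let e (π : Equiv.Perm ι) : ι × τ → ℕ := fun t => b (π t.1) t.2
  have he : ∀ π, e 1 = e π → π = 1 := fun π h => Equiv.ext fun i =>
    hb (funext fun j => (congrFun h (i, j)).symm)
  have hcoeff : ∀ π : Equiv.Perm ι, coeff (Finsupp.equivFunOnFinite.symm (e 1))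
      (∏ l, ∏ j, (X (l, j) : MvPolynomial (ι × τ) R) ^ b (π l) j) = if π = 1 then 1 else 0 := by
    intro π
    rw [← Fintype.prod_prod_type' fun l j => (X (l, j) : MvPolynomial (ι × τ) R) ^ b (π l) j,
      coeff_prod_X_pow]
    refine if_congr ⟨fun h => he π (funext fun t => ?_), ?_⟩ rfl rfl
    · simpa using DFunLike.congr_fun h t
    · rintro rfl
      ext t
      simp [e]
  refine fun h => one_ne_zero (α := R) ?_
  rw [← coeff_zero (R := R) (Finsupp.equivFunOnFinite.symm (e 1)), ← h, Matrix.det_apply, coeff_sum,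
    Fintype.sum_eq_single 1 fun π hπ => ?_]
  · simp only [Matrix.of_apply, Equiv.Perm.sign_one, one_smul, hcoeff, if_true]
  · simp only [Matrix.of_apply, coeff_smul, hcoeff, if_neg hπ, smul_zero]

variable {K : Type*} [Field K] {ι : Type*} {N m k : ℕ} {A : Set (Fin N → ℕ)}

theorem IsCovering.absorbsAtInfinity [Fintype ι] [DecidableEq ι] (hA : IsCovering m A)
    {z : ι → Fin N → K} {j₀ : Fin N} {α : ι → Fin N → ℕ} {slot : ι → Fin N} (hα : ∀ i, α i ∈ A)
    (hslot : ∀ i, slot i ≠ j₀)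
    (hdet : (Matrix.of fun i l =>
      ∏ j, z l j ^ (α i + Pi.single (slot i) 1 : Fin N → ℕ) j).det ≠ 0) :
    AbsorbsAtInfinity m A z j₀ := by
  intro y
  obtain ⟨c, hc⟩ := Matrix.vecMul_surjective_iff_isUnit.mpr
    ((Matrix.isUnit_iff_isUnit_det _).mpr hdet.isUnit) y
  let E (i : ι) : Fin (N + 1) → MvPolynomial (Fin (N + 1)) K :=
    koszulSyzygy (slot i).succ 0 (latticeForm K (α i))
  refine ⟨-∑ i, c i • E i, neg_mem (sum_mem fun i _ => Submodule.smul_mem _ _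
    (koszulSyzygy_mem_koszulSections _ _ ?_)), fun j => ?_, ?_, fun l j => ?_, fun l => ?_⟩
  · exact hA.sum_eq _ (hα i) ▸ isHomogeneous_latticeForm (α i)
  · simp [E, koszulSyzygy_apply, apply_ite (restrictZero K N), restrictZero_X_zero]
  · simp [E, koszulSyzygy_apply, (hslot _).symm]
  · simp [E, eval_koszulSyzygy, hA.eval_latticeForm (hα _)]
  · have hprod : ∀ i, ∏ j, z l j ^ (α i + Pi.single (slot i) 1 : Fin N → ℕ) j =
        (∏ j, z l j ^ α i j) * z l (slot i) := fun i => by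
      simp only [Pi.add_apply, pow_add, Finset.prod_mul_distrib, Pi.single_apply, pow_ite, pow_one,
        pow_zero, Finset.prod_ite_eq', Finset.mem_univ, if_true]
    rw [← hc]
    simp only [Matrix.vecMul, dotProduct, Matrix.of_apply, hprod]
    simp [E, eval_koszulSyzygy, eval_cons_zero_latticeForm]

theorem IsKoszulRegular.exists_cone [CharZero K] [Nontrivial (Fin N)] [Finite ι]
    (hA : IsCovering m A) {z : ι → Fin N → K} (hz : IsKoszulRegular m k z) {j₀ : Fin N}
    {α : ι → Fin N → ℕ} {slot : ι → Fin N} (hα : ∀ i, α i ∈ A) (hslot : ∀ i, slot i ≠ j₀)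
    (hinj : Function.Injective fun i => (α i + Pi.single (slot i) 1 : Fin N → ℕ)) :
    ∃ v : latticeSet m A ⊕ ι → Fin (N + 1) → K, IsKoszulRegular m k v := by
  classical
  have := Fintype.ofFinite ι
  obtain ⟨D, hD, hreg⟩ := hz.exists_open
  have hdet := det_prod_X_pow_ne_zero (R := K) hinj
  obtain ⟨t, ht⟩ := not_forall.mp <| mt MvPolynomial.funext_iff.mpr <|
    mul_ne_zero (fun h : D = 0 => hD (by rw [h, map_zero])) hdet
  rw [map_zero, map_mul, RingHom.map_det] at ht
  refine ⟨_, (hreg t (left_ne_zero_of_mul ht)).cone hA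
    (hA.absorbsAtInfinity hα hslot ?_)⟩
  convert right_ne_zero_of_mul ht
  ext
  simp

end ConeExistence

section Counting

/-- The exponents of weight `m` in `N` variables. -/
def weightSet (N m : ℕ) : Set (Fin N → ℕ) := {α | ∑ j, α j = m}

theorem finite_weightSet (N m : ℕ) : (weightSet N m).Finite :=
  Set.finite_coe_iff.mp (Finite.of_equiv _ (Sym.equivNatSumOfFintype (Fin N) m))

theorem ncard_weightSet (N m : ℕ) : (weightSet (N + 1) m).ncard = (m + N).choose m := by
  have hcard : (weightSet (N + 1) m).ncard = Nat.card (Sym (Fin (N + 1)) m) :=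
    (Nat.card_congr (Sym.equivNatSumOfFintype (Fin (N + 1)) m)).symm
  rw [hcard, Nat.card_eq_fintype_card, Sym.card_sym_eq_choose, Fintype.card_fin,
    show N + 1 + m - 1 = m + N by omega]

theorem ncard_weightSet_succ_le {N m : ℕ} {A : Set (Fin N → ℕ)} (hA : A ⊆ weightSet N m) :
    (weightSet (N + 1) m).ncard ≤ (latticeSet m A).ncard + A.ncard := by
  refine (Set.ncard_le_ncard_of_injOn Fin.tail (t := latticeSet m A ∪ A) (fun α hα => ?_)
    (fun α hα β hβ h => ?_) ?_).trans (Set.ncard_union_le _ _)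
  · by_cases hA : Fin.tail α ∈ A
    · exact Or.inr hA
    · exact Or.inl ⟨(Fin.sum_univ_succ α).symm.trans hα |>.le.trans' (Nat.le_add_left _ _), hA⟩
  · have hα' := (Fin.sum_univ_succ α).symm.trans hα
    have hβ' := (Fin.sum_univ_succ β).symm.trans hβ
    have htail : ∀ j : Fin N, α j.succ = β j.succ := congrFun h
    simp only [htail] at hα'
    exact funext (Fin.cases (by omega) htail)
  · exact (Set.toFinite _).union ((finite_weightSet N m).subset hA)

theorem IsKoszulRegular.exists_of_card_le {σ K ι ι' : Type*} [Field K] [Fintype σ]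
    [DecidableEq σ] [Nontrivial σ] [Finite ι] [Finite ι'] {m k : ℕ} {v : ι → σ → K}
    (h : IsKoszulRegular m k v) (hcard : Nat.card ι' ≤ Nat.card ι) :
    ∃ v' : ι' → σ → K, IsKoszulRegular m k v' := by
  have := Fintype.ofFinite ι
  have := Fintype.ofFinite ι'
  rw [Nat.card_eq_fintype_card, Nat.card_eq_fintype_card] at hcard
  obtain ⟨f⟩ := Function.Embedding.nonempty_of_card_le hcard
  exact ⟨_, h.comp f.injective⟩

end Counting

section LinePlaneSpace

variable {K : Type*} [Field K] [CharZero K] {m : ℕ}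

theorem isCovering_weightSet_one (m : ℕ) : IsCovering m (weightSet 1 m) where
  sum_eq _ h := h
  exists_le α hα := ⟨fun _ => m, Fin.sum_univ_one _, fun j => by
    rw [Fin.sum_univ_one] at hα
    exact Subsingleton.elim 0 j ▸ hα.le⟩

theorem isKoszulRegular_line (m k : ℕ) :
    IsKoszulRegular m k fun l : latticeSet m (weightSet 1 m) => latticePoint K l.1 where
  interpolates w hw := by
    obtain ⟨f, hf, hfv⟩ := exists_add_coneSection_eval_latticePoint (zero_mem _) hw
    rw [zero_add] at hfv
    exact ⟨_, coneSection_mem_koszulSections hf, hfv⟩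
  generates P hP hPv := by
    rw [add_right_comm] at hP
    refine (isCovering_weightSet_one m).mem_of_mul_mem (fun r g hr hg hgv => ?_) hP hPv
    suffices homogeneousSubmodule (Fin 2) K (k + 1) ≤
      (productSpan m k _).comap (LinearMap.mulRight K g) from this hr
    have hvan : koszulSyzygy 0 1 g ∈
        vanishingSections m fun l : latticeSet m (weightSet 1 m) => latticePoint K l.1 :=
      mem_vanishingSections.mpr ⟨koszulSyzygy_mem_koszulSections _ _ hg, fun l j => by
        rw [eval_koszulSyzygy, hgv, zero_mul]⟩
    refine homogeneousSubmodule_succ_le fun i p hp => ?_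
    rw [Submodule.mem_comap, LinearMap.mulRight_apply]
    fin_cases i
    · have hmem := neg_mem (mul_mem_productSpan hp hvan 1)
      simp only [koszulSyzygy_apply, one_ne_zero, if_true, if_false, zero_sub, mul_neg,
        neg_neg] at hmem
      rwa [Fin.zero_eta, mul_assoc, mul_left_comm, mul_comm (X 0)]
    · have hmem := mul_mem_productSpan hp hvan 0
      simp only [koszulSyzygy_apply, zero_ne_one, if_true, if_false, sub_zero] at hmem
      rwa [Fin.mk_one, mul_assoc, mul_left_comm, mul_comm (X 1)]

/-- The exponents of weight `m` in two variables other than `(1, m - 1)`. -/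
def planeCover (m : ℕ) : Set (Fin 2 → ℕ) := {γ | ∑ j, γ j = m ∧ γ 0 ≠ 1}

theorem isCovering_planeCover (hm : 2 ≤ m) : IsCovering m (planeCover m) := by
  refine ⟨fun γ hγ => hγ.1, fun α hα => ?_⟩
  rw [Fin.sum_univ_two] at hα
  obtain ⟨a, ha, haα, ham⟩ : ∃ a, a ≠ 1 ∧ a ≤ α 0 ∧ a ≤ m ∧ m - a ≤ α 1 := by
    by_cases h : α 0 ≤ 1
    · exact ⟨0, by omega⟩
    · exact ⟨min (α 0) m, by omega⟩
  refine ⟨![a, m - a], ⟨?_, ha⟩, Fin.forall_fin_two.mpr ⟨haα, ham.2⟩⟩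
  simpa [Fin.sum_univ_two] using Nat.add_sub_cancel' ham.1

theorem ncard_planeCover_le (m : ℕ) (hm : 1 ≤ m) : (planeCover m).ncard ≤ m := by
  have hlt : planeCover m ⊂ weightSet 2 m :=
    ⟨fun γ hγ => hγ.1, fun h => (h (a := ![1, m - 1]) (by
      simpa [weightSet, Fin.sum_univ_two] using Nat.add_sub_cancel' hm)).2 rfl⟩
  have hcard := Set.ncard_lt_ncard hlt (finite_weightSet 2 m)
  rw [ncard_weightSet, Nat.choose_succ_self_right] at hcard
  exact Nat.lt_succ_iff.mp hcard

variable (K) in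
theorem exists_isKoszulRegular_plane (hm : 2 ≤ m) (k : ℕ) :
    ∃ v : weightSet 3 m → Fin 3 → K, IsKoszulRegular m k v := by
  have hcover := isCovering_planeCover hm
  have := ((finite_weightSet 2 m).subset hcover.sum_eq).to_subtype
  obtain ⟨z, hz⟩ := (isKoszulRegular_line (K := K) m k).exists_of_card_le (ι' := planeCover m) (by
    have hline := ncard_weightSet_succ_le (subset_refl (weightSet 1 m))
    rw [ncard_weightSet, ncard_weightSet, Nat.choose_succ_self_right, add_zero, Nat.choose_self]
      at hline
    exact (ncard_planeCover_le m (by omega)).trans (Nat.succ_le_succ_iff.mp hline))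
  obtain ⟨v, hv⟩ := hz.exists_cone hcover (j₀ := 1) (slot := fun _ => 0) Subtype.property
    (fun _ => zero_ne_one) fun _ _ h => Subtype.ext (add_right_cancel h)
  have := (finite_weightSet 3 m).to_subtype
  exact hv.exists_of_card_le (by
    rw [Nat.card_sum]
    exact ncard_weightSet_succ_le hcover.sum_eq)

/-- The exponents of weight `m` in three variables whose first entry is even or equal to `m`. -/
def spaceCover (m : ℕ) : Set (Fin 3 → ℕ) := {γ | ∑ j, γ j = m ∧ (Even (γ 0) ∨ γ 0 = m)}

theorem isCovering_spaceCover (m : ℕ) : IsCovering m (spaceCover m) := by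
  refine ⟨fun γ hγ => hγ.1, fun α hα => ?_⟩
  rw [Fin.sum_univ_three] at hα
  obtain ⟨a, ha, haα, ham⟩ : ∃ a, (Even a ∨ a = m) ∧ a ≤ α 0 ∧ a ≤ m ∧ m - a ≤ α 1 + α 2 := by
    by_cases h : m ≤ α 0
    · exact ⟨m, Or.inr rfl, h, le_rfl, by omega⟩
    · rcases Nat.even_or_odd (α 0) with he | ⟨b, hb⟩
      · exact ⟨α 0, Or.inl he, by omega⟩
      · exact ⟨α 0 - 1, Or.inl ⟨b, by omega⟩, by omega⟩
  refine ⟨![a, min (α 1) (m - a), m - a - min (α 1) (m - a)], ⟨?_, ha⟩, ?_⟩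
  · simp only [Fin.sum_univ_three, Matrix.cons_val]
    omega
  · simp only [Pi.le_def, Fin.forall_fin_succ, Matrix.cons_val_zero, Matrix.cons_val_succ,
      Fin.succ_zero_eq_one, inf_le_left, Matrix.cons_val_fin_one, tsub_le_iff_right,
      Fin.succ_one_eq_two, IsEmpty.forall_iff, and_true, true_and]
    omega

theorem sum_range_sub_two_mul (n d : ℕ) :
    ∑ b ∈ Finset.range n, (2 * n + d - 2 * b) = n * (n + 1 + d) := by
  induction n generalizing d with
  | zero => simp
  | succ n ih =>
    rw [Finset.sum_range_succ, Finset.sum_congr rfl fun b _ =>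
      show 2 * (n + 1) + d - 2 * b = 2 * n + (d + 2) - 2 * b by omega, ih,
      show 2 * (n + 1) + d - 2 * n = d + 2 by omega]
    ring

theorem sum_range_half_sub_two_mul (m : ℕ) :
    ∑ b ∈ Finset.range (m / 2), (m - 2 * b) = m * (m + 2) / 4 := by
  obtain ⟨n, rfl | rfl⟩ := Nat.even_or_odd' m
  · have h := sum_range_sub_two_mul n 0
    rw [add_zero] at h
    rw [show 2 * n / 2 = n by omega, h, show 2 * n * (2 * n + 2) = 4 * (n * (n + 1)) by ring,
      Nat.mul_div_cancel_left _ four_pos, add_zero]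
  · rw [show (2 * n + 1) / 2 = n by omega, sum_range_sub_two_mul n 1,
      show (2 * n + 1) * (2 * n + 1 + 2) = 4 * (n * (n + 1 + 1)) + 3 by ring,
      Nat.mul_add_div four_pos, Nat.div_eq_of_lt (by norm_num : 3 < 4), add_zero]

theorem le_ncard_weightSet_sdiff_spaceCover (m : ℕ) :
    m * (m + 2) / 4 ≤ (weightSet 3 m \ spaceCover m).ncard := by
  let f (p : Σ b : Fin (m / 2), Fin (m - 2 * b)) : Fin 3 → ℕ :=
    ![2 * p.1 + 1, p.2, m - (2 * p.1 + 1) - p.2]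
  have hf : Function.Injective f := by
    rintro ⟨b, c⟩ ⟨b', c'⟩ h
    have hb : 2 * (b : ℕ) + 1 = 2 * b' + 1 := congrFun h 0
    obtain rfl : b = b' := Fin.ext (by omega)
    rw [show c = c' from Fin.ext (congrFun h 1)]
  have hcard : (Set.range f).ncard = m * (m + 2) / 4 := by
    rw [← Set.image_univ, Set.ncard_image_of_injective _ hf, Set.ncard_univ,
      Nat.card_eq_fintype_card, Fintype.card_sigma, ← sum_range_half_sub_two_mul, Finset.sum_range]
    simp only [Fintype.card_fin]
  rw [← hcard]
  refine Set.ncard_le_ncard ?_ ((finite_weightSet 3 m).sdiff)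
  rintro _ ⟨⟨⟨b, hb⟩, ⟨c, hc⟩⟩, rfl⟩
  simp only at hc
  refine ⟨?_, fun h => ?_⟩
  · simp only [f, weightSet, Set.mem_ofPred_eq, Fin.sum_univ_three, Matrix.cons_val]
    omega
  · have h₀ : Even (2 * b + 1) ∨ 2 * b + 1 = m := h.2
    rw [Nat.even_iff] at h₀
    omega

variable (K) in
theorem exists_isKoszulRegular_space (hm : 2 ≤ m) (k : ℕ) :
    ∃ v : latticeSet m (spaceCover m) ⊕ weightSet 3 m → Fin 4 → K, IsKoszulRegular m k v := by
  have := (finite_weightSet 3 m).to_subtype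
  obtain ⟨z, hz⟩ := exists_isKoszulRegular_plane K hm k
  refine hz.exists_cone (isCovering_spaceCover m) (j₀ := 2)
    (α := fun α => if Even (α.1 0) then α.1 else ![α.1 0 - 1, α.1 1 + 1, α.1 2])
    (slot := fun α => if Even (α.1 0) then 0 else 1) (fun ⟨α, hα⟩ => ?_)
    (fun α => by split_ifs <;> decide) ?_
  · have hsum : α 0 + α 1 + α 2 = m := (Fin.sum_univ_three α).symm.trans hα
    dsimp only
    split_ifs with h
    · exact ⟨hα, Or.inl h⟩
    · obtain ⟨b, hb⟩ := Nat.not_even_iff_odd.mp h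
      refine ⟨?_, Or.inl ⟨b, ?_⟩⟩
      · simp only [Fin.sum_univ_three, Matrix.cons_val]
        omega
      · simp only [Matrix.cons_val]
        omega
  · rintro ⟨α, hα⟩ ⟨β, hβ⟩ h
    have hαsum : α 0 + α 1 + α 2 = m := (Fin.sum_univ_three α).symm.trans hα
    have hβsum : β 0 + β 1 + β 2 = m := (Fin.sum_univ_three β).symm.trans hβ
    have h₀ := congrFun h 0
    have h₁ := congrFun h 1
    suffices α 0 = β 0 ∧ α 1 = β 1 ∧ α 2 = β 2 from
      Subtype.ext (funext (by simpa [Fin.forall_fin_succ] using this))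
    by_cases hα' : Even (α 0) <;> by_cases hβ' : Even (β 0) <;>
      simp [hα', hβ'] at h₀ h₁ <;> rw [Nat.even_iff] at hα' hβ' <;> omega

theorem choose_add_le_card_space (m : ℕ) :
    (m + 3).choose 3 + m * (m + 2) / 4 ≤
      Nat.card (latticeSet m (spaceCover m) ⊕ weightSet 3 m) := by
  have hcover : spaceCover m ⊆ weightSet 3 m := (isCovering_spaceCover m).sum_eq
  have hlattice := ncard_weightSet_succ_le hcover
  rw [ncard_weightSet, Nat.choose_symm_add] at hlattice
  have hsdiff := Set.ncard_sdiff_add_ncard_of_subset hcover (finite_weightSet 3 m)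
  have hodd := le_ncard_weightSet_sdiff_spaceCover m
  have := (finite_weightSet 3 m).to_subtype
  rw [Nat.card_sum, Nat.card_coe_set_eq, Nat.card_coe_set_eq]
  omega

end LinePlaneSpace

section Frame

theorem exists_ne_ne_ne {σ : Type*} [Fintype σ] (hσ : 4 ≤ Fintype.card σ) (a b c : σ) :
    ∃ d, d ≠ a ∧ d ≠ b ∧ d ≠ c := by
  classical
  obtain ⟨d, -, hd⟩ := Finset.exists_mem_notMem_of_card_lt_card
    ((Finset.card_le_three (a := a) (b := b) (c := c)).trans_lt hσ)
  exact ⟨d, by simpa using hd⟩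

theorem coeff_single_eq_eval_single {σ R : Type*} [CommSemiring R] [Finite σ] [DecidableEq σ]
    {d : ℕ} {P : MvPolynomial σ R} (hP : P.IsHomogeneous d) (i : σ) :
    coeff (Finsupp.single i d) P = eval (Pi.single i 1) P := by
  have := Fintype.ofFinite σ
  rw [eval_eq', Finset.sum_eq_single (Finsupp.single i d)]
  · rw [Finset.prod_eq_one, mul_one]
    intro j _
    obtain rfl | hj := eq_or_ne j i <;> simp [*]
  · intro e he hne
    obtain ⟨j, hji, hj⟩ : ∃ j, j ≠ i ∧ e j ≠ 0 := by
      by_contra! h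
      have he' : e = Finsupp.single i (e i) := Finsupp.ext fun j => by
        obtain rfl | hj := eq_or_ne j i <;> simp [*]
      have hdeg := hP (mem_support_iff.mp he)
      rw [he', Finsupp.weight_single, Pi.one_apply, smul_eq_mul, mul_one] at hdeg
      exact hne (hdeg ▸ he')
    rw [Finset.prod_eq_zero (Finset.mem_univ j), mul_zero]
    rw [Pi.single_eq_of_ne hji, zero_pow hj]
  · intro h
    rw [notMem_support_iff.mp h, zero_mul]

theorem exists_eq_add_single_add_single {σ : Type*} {e : σ →₀ ℕ} (he : e ≠ 0)
    (h : ∀ i, e ≠ Finsupp.single i e.degree) :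
    ∃ i j, i ≠ j ∧ ∃ e', e = e' + Finsupp.single i 1 + Finsupp.single j 1 := by
  classical
  obtain ⟨i, hi⟩ := Finsupp.ne_iff.mp he
  obtain ⟨j, hji, hj⟩ : ∃ j, j ≠ i ∧ e j ≠ 0 := by
    by_contra! hzero
    have he' : e = Finsupp.single i (e i) := Finsupp.ext fun j => by
      obtain rfl | hj := eq_or_ne j i <;> simp [*]
    refine h i ?_
    rw [he', Finsupp.degree_single, ← he']
  refine ⟨i, j, hji.symm, e - Finsupp.single i 1 - Finsupp.single j 1, Finsupp.ext fun l => ?_⟩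
  simp only [Finsupp.coe_add, Finsupp.coe_tsub, Pi.add_apply, Pi.sub_apply, Finsupp.single_apply]
  split_ifs with hil hjl hjl
  · exact absurd (hjl.trans hil.symm) hji
  all_goals subst_vars; simp only [Pi.zero_apply, Finsupp.coe_zero] at hi; omega

variable {σ K : Type*} [Field K] [DecidableEq σ]

theorem X_mul_mem_productSpan {ι : Type*} {m k : ℕ} {v : ι → σ → K} {Q : MvPolynomial σ K}
    (hQ : Q ∈ productSpan m k v) (i : σ) : X i * Q ∈ productSpan m (k + 1) v := by
  suffices productSpan m k v ≤ (productSpan m (k + 1) v).comap (LinearMap.mulLeft K (X i)) from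
    this hQ
  rw [productSpan, Submodule.span_le]
  rintro _ ⟨p, hp, F, hF, j, rfl⟩
  rw [SetLike.mem_coe, Submodule.mem_comap, LinearMap.mulLeft_apply, ← mul_assoc]
  exact mul_mem_productSpan (add_comm k 1 ▸ (isHomogeneous_X K i).mul hp) hF j

variable (σ K) in
/-- The standard projective frame: the coordinate points together with `(1, …, 1)`. -/
def framePoints : Option σ → σ → K :=
  fun o => o.elim 1 fun a => Pi.single a 1

theorem exists_mem_vanishingSections_framePoints [Fintype σ] (hσ : 4 ≤ Fintype.card σ) {j p q : σ}
    (hp : j ≠ p) (hq : j ≠ q) :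
    ∃ F ∈ vanishingSections 1 (framePoints σ K), ∃ b, F b = X j * (X p - X q) := by
  obtain ⟨b, hbj, hbp, hbq⟩ := exists_ne_ne_ne hσ j p q
  have hX : (X j : MvPolynomial σ K).IsHomogeneous 1 := isHomogeneous_X _ _
  refine ⟨koszulSyzygy b p (X j) + koszulSyzygy p q (X j) + koszulSyzygy q b (X j),
    mem_vanishingSections.mpr ⟨add_mem (add_mem (koszulSyzygy_mem_koszulSections _ _ hX)
      (koszulSyzygy_mem_koszulSections _ _ hX)) (koszulSyzygy_mem_koszulSections _ _ hX), ?_⟩,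
    b, ?_⟩
  · rintro (_ | a) i
    · simp only [Pi.add_apply, map_add, eval_koszulSyzygy, framePoints, Option.elim_none,
        Pi.one_apply]
      ring
    · obtain rfl | ha := eq_or_ne j a
      · simp [eval_koszulSyzygy, framePoints, hp.symm, hq.symm, hbj]
      · simp [eval_koszulSyzygy, framePoints, ha]
  · simp only [Pi.add_apply, koszulSyzygy_apply, if_true, if_neg hbp, if_neg hbq]
    ring

theorem mul_sub_mul_mem_productSpan_framePoints [Fintype σ] (hσ : 4 ≤ Fintype.card σ) {k : ℕ}
    {r : MvPolynomial σ K} (hr : r.IsHomogeneous k) {i j p q : σ} (hij : i ≠ j) (hpq : p ≠ q) :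
    r * (X i * X j) - r * (X p * X q) ∈ productSpan 1 k (framePoints σ K) := by
  have key : ∀ {j p q : σ}, j ≠ p → j ≠ q →
      r * (X j * (X p - X q)) ∈ productSpan 1 k (framePoints σ K) := fun hp hq => by
    obtain ⟨F, hF, b, hb⟩ := exists_mem_vanishingSections_framePoints (K := K) hσ hp hq
    exact hb ▸ mul_mem_productSpan hr hF b
  obtain rfl | hip := eq_or_ne i p
  · convert key hij hpq using 1
    ring
  · convert add_mem (key hij hip) (key hip.symm hpq) using 1
    ring

theorem mul_sub_eval_one_mul_mem_productSpan_framePoints [Fintype σ] (hσ : 4 ≤ Fintype.card σ)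
    {k : ℕ} {r : MvPolynomial σ K} (hr : r.IsHomogeneous k) {p q : σ} (hpq : p ≠ q) :
    r * (X p * X q) - C (eval 1 r) * (X p ^ k * (X p * X q)) ∈
      productSpan 1 k (framePoints σ K) := by
  let excess (d : ℕ) : MvPolynomial σ K →ₗ[K] MvPolynomial σ K :=
    LinearMap.mulRight K (X p * X q) -
      (LinearMap.toSpanSingleton K _ (X p ^ d * (X p * X q))) ∘ₗ (aeval (1 : σ → K)).toLinearMap
  have hexcess : ∀ d r, excess d r = r * (X p * X q) - C (eval 1 r) * (X p ^ d * (X p * X q)) :=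
    fun d r => by simp [excess, aeval_eq_eval, smul_eq_C_mul, mul_assoc]
  rw [← hexcess]
  refine homogeneousSubmodule_le_of_X_mul_mem
    (S := fun d => (productSpan 1 d (framePoints σ K)).comap (excess d)) ?_
    (fun d i r hr => ?_) k hr
  · simp [hexcess]
  · obtain ⟨c, hcp, hcq, -⟩ := exists_ne_ne_ne hσ p q q
    rw [Submodule.mem_comap, hexcess] at hr ⊢
    have hXp : (X p ^ (d + 1) : MvPolynomial σ K).IsHomogeneous (d + 1) :=
      isHomogeneous_X_pow _ _
    have hstep : X p ^ d * (X i * (X p * X q)) - X p ^ d * (X p * (X p * X q)) ∈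
        productSpan 1 (d + 1) (framePoints σ K) := by
      obtain rfl | hi := eq_or_ne i q
      · convert add_mem (mul_sub_mul_mem_productSpan_framePoints hσ
          ((isHomogeneous_X_pow p d).mul (isHomogeneous_X K i)) hpq hcp.symm)
          (mul_sub_mul_mem_productSpan_framePoints hσ hXp hcq.symm hpq) using 1
        ring
      · convert mul_sub_mul_mem_productSpan_framePoints hσ hXp hi hpq using 1
        ring
    convert add_mem (X_mul_mem_productSpan hr i)
      (Submodule.smul_mem _ (eval 1 r) hstep) using 1
    rw [map_mul, eval_X, Pi.one_apply, one_mul, smul_eq_C_mul]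
    ring

theorem exists_mem_koszulSections_eval_single [Finite σ] {w : σ → σ → K} (hw : ∀ a, w a a = 0) :
    ∃ F ∈ koszulSections σ K 1, ∀ a j, eval (Pi.single a 1) (F j) = w a j := by
  have := Fintype.ofFinite σ
  refine ⟨∑ a, ∑ i, koszulSyzygy i a (C (w a i) * X a), sum_mem fun a _ => sum_mem fun i _ =>
    koszulSyzygy_mem_koszulSections _ _ (isHomogeneous_C_mul_X _ _), fun a j => ?_⟩
  simp only [Finset.sum_apply, map_sum, eval_koszulSyzygy, map_mul, eval_C, eval_X,
    Pi.single_apply, mul_ite, mul_one, mul_zero, mul_sub, Finset.sum_sub_distrib,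
    Finset.sum_ite_eq, Finset.mem_univ, if_true, Finset.sum_ite_irrel, Finset.sum_ite_eq',
    Finset.sum_const_zero, sub_eq_self, ite_eq_right_iff]
  rintro rfl
  exact hw _

theorem exists_mem_koszulSections_eval_framePoints [Fintype σ] (hσ : 4 ≤ Fintype.card σ)
    {w : Option σ → σ → K} (hw : ∀ o, w o ⬝ᵥ framePoints σ K o = 0) :
    ∃ F ∈ koszulSections σ K 1, ∀ o j, eval (framePoints σ K o) (F j) = w o j := by
  obtain ⟨i₀⟩ : Nonempty σ := Fintype.card_pos_iff.mp (by omega)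
  choose l hl hl₀ _ using fun i => exists_ne_ne_ne hσ i i₀ i₀
  obtain ⟨F, hF, hFa⟩ := exists_mem_koszulSections_eval_single (w := fun a => w (some a))
    fun a => by simpa [framePoints] using hw (some a)
  let G : σ → MvPolynomial σ K :=
    ∑ i, koszulSyzygy i i₀ (C (w none i - eval 1 (F i)) * X (l i))
  have hG : G ∈ koszulSections σ K 1 := sum_mem fun i _ =>
    koszulSyzygy_mem_koszulSections _ _ (isHomogeneous_C_mul_X _ _)
  have hGa : ∀ a j, eval (Pi.single a 1) (G j) = 0 := fun a j => by
    simp only [G, Finset.sum_apply, map_sum, eval_koszulSyzygy, map_mul, eval_C, eval_X]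
    refine Finset.sum_eq_zero fun i _ => ?_
    obtain rfl | ha := eq_or_ne (l i) a
    · simp [(hl i).symm, (hl₀ i).symm]
    · simp [ha]
  refine ⟨F + G, add_mem hF hG, ?_⟩
  rintro (_ | a)
  · refine congrFun (eq_of_dotProduct_eq (j := i₀) (x := framePoints σ K none) one_ne_zero ?_ ?_)
    · exact (eval_dotProduct_of_mem_koszulSections (add_mem hF hG) _).trans (hw none).symm
    · intro j hj
      simp [framePoints, G, eval_koszulSyzygy, hj]
  · intro j
    rw [Pi.add_apply, map_add]
    exact (congrArg₂ (· + ·) (hFa a j) (hGa a j)).trans (add_zero _)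

theorem isKoszulRegular_framePoints [Fintype σ] (hσ : 4 ≤ Fintype.card σ) (k : ℕ) :
    IsKoszulRegular 1 k (framePoints σ K) where
  interpolates _ hw := exists_mem_koszulSections_eval_framePoints hσ hw
  generates P hP hPv := by
    obtain ⟨p⟩ : Nonempty σ := Fintype.card_pos_iff.mp (by omega)
    obtain ⟨q, hqp, -, -⟩ := exists_ne_ne_ne hσ p p p
    have hmonomial : ∀ e ∈ P.support, monomial e (coeff e P) -
        C (coeff e P) * (X p ^ k * (X p * X q)) ∈ productSpan 1 k (framePoints σ K) := by
      intro e he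
      have hdeg : e.degree = k + 2 := by
        rw [Finsupp.degree_eq_weight_one]
        exact hP (mem_support_iff.mp he)
      obtain ⟨i, j, hij, e', rfl⟩ := exists_eq_add_single_add_single (e := e)
        (by rintro rfl; simp at hdeg) fun i hi => mem_support_iff.mp he <| by
          rw [hi, hdeg, coeff_single_eq_eval_single hP]
          exact hPv (some i)
      set c := coeff (e' + Finsupp.single i 1 + Finsupp.single j 1) P
      have hr : (monomial e' c).IsHomogeneous k := isHomogeneous_monomial _ (by simpa using hdeg)
      convert add_mem (mul_sub_mul_mem_productSpan_framePoints hσ hr hij hqp.symm)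
        (mul_sub_eval_one_mul_mem_productSpan_framePoints hσ hr hqp.symm) using 1
      simp [monomial_add_single, eval_monomial, mul_assoc]
    have hone : ∑ e ∈ P.support, coeff e P = 0 := by
      simpa [eval_eq, framePoints] using hPv none
    have hsum := sum_mem hmonomial
    rwa [Finset.sum_sub_distrib, ← Finset.sum_mul, ← map_sum, hone, map_zero, zero_mul, sub_zero,
      support_sum_monomial_coeff] at hsum

end Frame

section ExteriorAlgebraProducts

variable {R M : Type*} [CommRing R] [AddCommGroup M] [Module R M]

theorem ι_mul_ι_swap (a b : M) : ι R b * ι R a = -(ι R a * ι R b) :=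
  eq_neg_of_add_eq_zero_left (ι_add_mul_swap b a)

theorem ι_mul_ι_mul_self (a b : M) : ι R a * ι R b * ι R b = 0 := by
  rw [mul_assoc, ι_sq_zero, mul_zero]

theorem ι_mul_ι_mul_swap (a b c : M) : ι R a * ι R c * ι R b = -(ι R a * ι R b * ι R c) := by
  rw [mul_assoc, ι_mul_ι_swap, mul_neg, ← mul_assoc]

theorem ι_mul_ι_mul_rotate (a b c : M) : ι R b * ι R c * ι R a = ι R a * ι R b * ι R c := by
  rw [ι_mul_ι_mul_swap, ι_mul_ι_swap, neg_mul, neg_neg]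

theorem ι_mul_ι_mul_first (a b : M) : ι R a * ι R b * ι R a = 0 := by
  rw [ι_mul_ι_mul_rotate, ι_sq_zero, zero_mul]

variable (R) in
/-- The linear form on the exterior algebra of `R ^ n` which is the determinant in degree `n` and
vanishes in the other degrees. -/
noncomputable def detForm (n : ℕ) : ExteriorAlgebra R (Fin n → R) →ₗ[R] R :=
  liftAlternating (Pi.single n Matrix.detRowAlternating)

theorem detForm_ιMulti {n : ℕ} (a : Fin n → Fin n → R) :
    detForm R n (ιMulti R n a) = Matrix.det (Matrix.of a) := by
  rw [detForm, liftAlternating_apply_ιMulti, Pi.single_eq_same]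
  rfl

end ExteriorAlgebraProducts

section Eigenvectors

/-- The pair `{i, j}` as an index of a component of a tensor with values in `Λ²ℂ⁴`. -/
def indexPair (i j : Fin 4) (h : i ≠ j := by decide) : {S : Finset (Fin 4) // S.card = 2} :=
  ⟨{i, j}, Finset.card_pair h⟩

theorem univ_indexPair : (Finset.univ : Finset {S : Finset (Fin 4) // S.card = 2}) =
    {indexPair 0 1, indexPair 0 2, indexPair 0 3, indexPair 1 2, indexPair 1 3, indexPair 2 3} := by
  decide

/-- The section attached to a tensor `M` with values in `Λ²ℂ⁴`: its values at `v` are, up to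
sign, the coordinates of `M(v^m) ∧ v`, so it vanishes exactly at the eigenvectors of `M`. -/
noncomputable def dualSection (q : {S : Finset (Fin 4) // S.card = 2} → MvPolynomial (Fin 4) ℂ) :
    Fin 4 → MvPolynomial (Fin 4) ℂ :=
  koszulSyzygy 3 2 (q (indexPair 0 1)) + koszulSyzygy 1 3 (q (indexPair 0 2)) +
    koszulSyzygy 2 1 (q (indexPair 0 3)) + koszulSyzygy 3 0 (q (indexPair 1 2)) +
    koszulSyzygy 0 2 (q (indexPair 1 3)) + koszulSyzygy 1 0 (q (indexPair 2 3))

theorem dualSection_mem_koszulSections {m : ℕ}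
    {q : {S : Finset (Fin 4) // S.card = 2} → MvPolynomial (Fin 4) ℂ}
    (hq : ∀ S, (q S).IsHomogeneous m) : dualSection q ∈ koszulSections (Fin 4) ℂ m := by
  refine add_mem (add_mem (add_mem (add_mem (add_mem ?_ ?_) ?_) ?_) ?_) ?_ <;>
    exact koszulSyzygy_mem_koszulSections _ _ (hq _)

theorem exists_dualSection_eq {m : ℕ} {F : Fin 4 → MvPolynomial (Fin 4) ℂ}
    (hF : F ∈ koszulSections (Fin 4) ℂ m) :
    ∃ q : {S : Finset (Fin 4) // S.card = 2} → MvPolynomial (Fin 4) ℂ,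
      (∀ S, (q S).IsHomogeneous m) ∧ dualSection q = F := by
  obtain ⟨A, hA, rfl⟩ := exists_sum_koszulSyzygy_eq hF
  let q : {S : Finset (Fin 4) // S.card = 2} → MvPolynomial (Fin 4) ℂ := fun S =>
    if S = indexPair 0 1 then A 3 2 - A 2 3 else
    if S = indexPair 0 2 then A 1 3 - A 3 1 else
    if S = indexPair 0 3 then A 2 1 - A 1 2 else
    if S = indexPair 1 2 then A 3 0 - A 0 3 else
    if S = indexPair 1 3 then A 0 2 - A 2 0 else A 1 0 - A 0 1
  have hq : dualSection q = koszulSyzygy 3 2 (A 3 2 - A 2 3) + koszulSyzygy 1 3 (A 1 3 - A 3 1) +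
      koszulSyzygy 2 1 (A 2 1 - A 1 2) + koszulSyzygy 3 0 (A 3 0 - A 0 3) +
      koszulSyzygy 0 2 (A 0 2 - A 2 0) + koszulSyzygy 1 0 (A 1 0 - A 0 1) := rfl
  refine ⟨q, fun S => ?_, ?_⟩
  · simp only [q]
    split_ifs <;> exact (hA _ _).sub (hA _ _)
  · rw [hq]
    funext j
    simp only [Fin.sum_univ_four, Pi.add_apply, koszulSyzygy_apply]
    ring

theorem eWedge_pair {k : ℕ} {i j : Fin k} (h : i < j) :
    eWedge k {i, j} = ι ℂ (Pi.single i 1) * ι ℂ (Pi.single j 1) := by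
  rw [eWedge, Finset.sort_insert _ (by simpa using h.le) (by simpa using h.ne),
    Finset.sort_singleton]
  simp

theorem eWedge_triple {k : ℕ} {i j l : Fin k} (hij : i < j) (hjl : j < l) :
    eWedge k {i, j, l} = ι ℂ (Pi.single i 1) * ι ℂ (Pi.single j 1) * ι ℂ (Pi.single l 1) := by
  rw [eWedge, Finset.sort_insert _ (by simpa using ⟨hij.le, (hij.trans hjl).le⟩)
    (by simpa using ⟨hij.ne, (hij.trans hjl).ne⟩), List.map_cons, List.prod_cons, mul_assoc,
    ← eWedge_pair hjl, eWedge]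

theorem tval_four_two (q : {S : Finset (Fin 4) // S.card = 2} → MvPolynomial (Fin 4) ℂ)
    (v : Fin 4 → ℂ) :
    tval 4 2 q v = eval v (q (indexPair 0 1)) • eWedge 4 {0, 1} +
      (eval v (q (indexPair 0 2)) • eWedge 4 {0, 2} +
      (eval v (q (indexPair 0 3)) • eWedge 4 {0, 3} +
      (eval v (q (indexPair 1 2)) • eWedge 4 {1, 2} +
      (eval v (q (indexPair 1 3)) • eWedge 4 {1, 3} +
      eval v (q (indexPair 2 3)) • eWedge 4 {2, 3})))) := by
  rw [tval, univ_indexPair, Finset.sum_insert (by decide), Finset.sum_insert (by decide),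
    Finset.sum_insert (by decide), Finset.sum_insert (by decide),
    Finset.sum_insert (by decide), Finset.sum_singleton]
  rfl

theorem tval_mul_ι (q : {S : Finset (Fin 4) // S.card = 2} → MvPolynomial (Fin 4) ℂ)
    (v : Fin 4 → ℂ) :
    tval 4 2 q v * ι ℂ v =
      eval v (dualSection q 3) • eWedge 4 {0, 1, 2} -
        eval v (dualSection q 2) • eWedge 4 {0, 1, 3} +
        eval v (dualSection q 1) • eWedge 4 {0, 2, 3} -
        eval v (dualSection q 0) • eWedge 4 {1, 2, 3} := by
  have hv : ι ℂ v = ∑ i, v i • ι ℂ (Pi.single i (1 : ℂ)) := by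
    simp only [← map_smul, ← map_sum]
    exact congrArg _ (pi_eq_sum_univ' v)
  have h01 : (0 : Fin 4) < 1 := by decide
  have h12 : (1 : Fin 4) < 2 := by decide
  have h23 : (2 : Fin 4) < 3 := by decide
  rw [tval_four_two, hv, Fin.sum_univ_four, eWedge_triple h01 h12,
    eWedge_triple h01 (h12.trans h23), eWedge_triple (h01.trans h12) h23, eWedge_triple h12 h23,
    eWedge_pair h01, eWedge_pair (h01.trans h12), eWedge_pair (h01.trans (h12.trans h23)),
    eWedge_pair h12, eWedge_pair (h12.trans h23), eWedge_pair h23]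
  simp only [dualSection, Pi.add_apply, map_add, eval_koszulSyzygy]
  generalize (Pi.single 0 1 : Fin 4 → ℂ) = a
  generalize (Pi.single 1 1 : Fin 4 → ℂ) = b
  generalize (Pi.single 2 1 : Fin 4 → ℂ) = c
  generalize (Pi.single 3 1 : Fin 4 → ℂ) = d
  simp only [mul_add, add_mul, smul_mul_smul_comm, ι_mul_ι_mul_self, ι_mul_ι_mul_first,
    ι_mul_ι_mul_swap a b c, ι_mul_ι_mul_swap a b d, ι_mul_ι_mul_swap a c d,
    ι_mul_ι_mul_swap b c d, ι_mul_ι_mul_rotate a b c, ι_mul_ι_mul_rotate a b d,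
    ι_mul_ι_mul_rotate a c d, ι_mul_ι_mul_rotate b c d]
  simp only [smul_zero, zero_add, smul_neg, add_zero, if_true, Fin.reduceEq, if_false, sub_zero,
    zero_sub, mul_neg, sub_self, mul_zero, one_ne_zero, zero_ne_one]
  module

theorem tval_mul_ι_eq_zero_iff (q : {S : Finset (Fin 4) // S.card = 2} → MvPolynomial (Fin 4) ℂ)
    (v : Fin 4 → ℂ) :
    tval 4 2 q v * ι ℂ v = 0 ↔ ∀ i, eval v (dualSection q i) = 0 := by
  refine ⟨fun h i => ?_, fun h => ?_⟩
  · have hdet : ∀ a b c d : Fin 4 → ℂ, detForm ℂ 4 (ι ℂ a * ι ℂ b * ι ℂ c * ι ℂ d) =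
        Matrix.det (Matrix.of ![a, b, c, d]) := fun a b c d => by
      rw [← detForm_ιMulti]
      simp [ιMulti_apply, mul_assoc]
    have hpair := congrArg (fun x => detForm ℂ 4 (x * ι ℂ (Pi.single i 1))) (tval_mul_ι q v)
    rw [h, eWedge_triple (by decide) (by decide), eWedge_triple (by decide) (by decide),
      eWedge_triple (by decide) (by decide), eWedge_triple (by decide) (by decide)] at hpair
    simp only [zero_mul, map_zero, sub_mul, add_mul, smul_mul_assoc, map_sub, map_add,
      map_smul, hdet] at hpair
    fin_cases i <;>
      simpa [Matrix.det_succ_row_zero, Fin.sum_univ_succ, Fin.succAbove] using hpair.symm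
  · simp [tval_mul_ι, h]

end Eigenvectors

section CommonZeros

variable {σ K : Type*} [Field K]

theorem eval_smul_of_isHomogeneous {d : ℕ} {P : MvPolynomial σ K} (hP : P.IsHomogeneous d) (c : K)
    (x : σ → K) : eval (c • x) P = c ^ d * eval x P := by
  rw [eval_eq, eval_eq, Finset.mul_sum]
  refine Finset.sum_congr rfl fun e he => ?_
  have hdeg : ∑ i ∈ e.support, e i = d := by
    rw [← Finsupp.degree_apply, Finsupp.degree_eq_weight_one]
    exact hP (mem_support_iff.mp he)
  simp only [Pi.smul_apply, smul_eq_mul, mul_pow, Finset.prod_mul_distrib,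
    Finset.prod_pow_eq_pow_sum, hdeg]
  ring

theorem exists_linear_form_separating {x y : σ → K} (hx : x ≠ 0) (h : ∀ c : K, y ≠ c • x) :
    ∃ L : MvPolynomial σ K, L.IsHomogeneous 1 ∧ eval x L = 0 ∧ eval y L ≠ 0 := by
  obtain ⟨a, ha⟩ := Function.ne_iff.mp hx
  rw [Pi.zero_apply] at ha
  obtain ⟨b, hb⟩ := Function.ne_iff.mp (h (y a / x a))
  refine ⟨C (x a) * X b - C (x b) * X a,
    (isHomogeneous_C_mul_X _ _).sub (isHomogeneous_C_mul_X _ _), ?_, ?_⟩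
  · simp only [map_sub, map_mul, eval_C, eval_X]
    ring
  · simp only [map_sub, map_mul, eval_C, eval_X]
    contrapose! hb
    rw [Pi.smul_apply, smul_eq_mul, div_mul_eq_mul_div, eq_div_iff ha]
    linear_combination hb

theorem IsKoszulRegular.exists_eval_ne_zero [Fintype σ] [DecidableEq σ] {ι : Type*} [Fintype ι]
    {m : ℕ} {v : ι → σ → K} (h : IsKoszulRegular m (Fintype.card ι) v) {y : σ → K} (hy : y ≠ 0)
    (hyv : ∀ i, ∀ c : K, y ≠ c • v i) :
    ∃ F ∈ vanishingSections m v, ∃ j, eval y (F j) ≠ 0 := by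
  obtain ⟨a, ha⟩ := Function.ne_iff.mp hy
  have : Nonempty σ := ⟨a⟩
  choose L hL hLv hLy using fun i => exists_linear_form_separating (h.ne_zero i) (hyv i)
  have hP : ((∏ i, L i) * X a ^ (m + 1)).IsHomogeneous (Fintype.card ι + m + 1) := by
    rw [add_assoc, ← Finset.card_univ, Finset.card_eq_sum_ones]
    exact (IsHomogeneous.prod _ L _ fun i _ => hL i).mul (isHomogeneous_X_pow a (m + 1))
  have hPv : ∀ i, eval (v i) ((∏ i, L i) * X a ^ (m + 1)) = 0 := fun i => by
    rw [map_mul, map_prod, Finset.prod_eq_zero (Finset.mem_univ i) (hLv i), zero_mul]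
  have hPy : eval y ((∏ i, L i) * X a ^ (m + 1)) ≠ 0 := by
    rw [map_mul, map_prod, map_pow, eval_X]
    exact mul_ne_zero (Finset.prod_ne_zero_iff.mpr fun i _ => hLy i) (pow_ne_zero _ ha)
  by_contra! hF
  suffices productSpan m (Fintype.card ι) v ≤ LinearMap.ker (aeval y).toLinearMap from
    hPy (by simpa [aeval_eq_eval] using this (h.generates _ hP hPv))
  rw [productSpan, Submodule.span_le]
  rintro _ ⟨p, -, F, hFv, j, rfl⟩
  simp [aeval_eq_eval, hF F hFv j]

theorem IsKoszulRegular.common_zero_iff [Fintype σ] [DecidableEq σ] {ι : Type*} [Fintype ι]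
    {m : ℕ} {v : ι → σ → K} (h : IsKoszulRegular m (Fintype.card ι) v) {y : σ → K} (hy : y ≠ 0) :
    (∀ F ∈ vanishingSections m v, ∀ j, eval y (F j) = 0) ↔ ∃ i, ∃ c : K, y = c • v i := by
  refine ⟨fun hzero => ?_, ?_⟩
  · by_contra! hyv
    obtain ⟨F, hF, j, hj⟩ := h.exists_eval_ne_zero hy hyv
    exact hj (hzero F hF j)
  · rintro ⟨i, c, rfl⟩ F hF j
    obtain ⟨hF, hFv⟩ := mem_vanishingSections.mp hF
    rw [eval_smul_of_isHomogeneous (isHomogeneous_of_mem_koszulSections hF j), hFv, mul_zero]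

end CommonZeros

theorem forall_tval_mul_ι_eq_zero_iff {κ : Type*} (m : ℕ) (v : κ → Fin 4 → ℂ) (u : Fin 4 → ℂ) :
    (∀ q : {S : Finset (Fin 4) // S.card = 2} → MvPolynomial (Fin 4) ℂ,
        (∀ S, (q S).IsHomogeneous m) → (∀ i, tval 4 2 q (v i) * ι ℂ (v i) = 0) →
        tval 4 2 q u * ι ℂ u = 0) ↔
      ∀ F ∈ vanishingSections m v, ∀ j, eval u (F j) = 0 := by
  simp only [tval_mul_ι_eq_zero_iff, mem_vanishingSections]
  refine ⟨?_, fun h q hq hqv => h _ ⟨dualSection_mem_koszulSections hq, hqv⟩⟩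
  rintro h F ⟨hF, hFv⟩
  obtain ⟨q, hq, rfl⟩ := exists_dualSection_eq hF
  exact h q hq hFv

theorem exists_isKoszulRegular_fin {K : Type*} [Field K] [CharZero K] {m s : ℕ}
    (hms : (2 ≤ m ∧ s ≤ (m + 3).choose 3 + m * (m + 2) / 4) ∨ (m = 1 ∧ s ≤ 5)) (k : ℕ) :
    ∃ v : Fin s → Fin 4 → K, IsKoszulRegular m k v := by
  obtain ⟨hm, hs⟩ | ⟨rfl, hs⟩ := hms
  · obtain ⟨v, hv⟩ := exists_isKoszulRegular_space K hm k
    have := (finite_weightSet 3 m).to_subtype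
    exact hv.exists_of_card_le (by simpa using hs.trans (choose_add_le_card_space m))
  · exact (isKoszulRegular_framePoints (σ := Fin 4) (by simp) k).exists_of_card_le
      (by simpa using hs)

theorem le_choose_add_of_three_mul_le {m s : ℕ}
    (hs : 3 * s + m * (m + 1) / 2 + 8 ≤ (m + 4) * (m + 3) * (m + 1) / 2) :
    s ≤ (m + 3).choose 3 + m * (m + 2) / 4 := by
  have hchoose : 6 * (m + 3).choose 3 = (m + 3) * (m + 2) * (m + 1) := by
    rw [show (6 : ℕ) = Nat.factorial 3 from rfl, ← Nat.descFactorial_eq_factorial_mul_choose]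
    simp only [Nat.descFactorial, Nat.reduceSubDiff, tsub_zero, mul_one]
    ring
  have hfloor := Nat.lt_mul_div_succ (m * (m + 2)) (by norm_num : 0 < 4)
  have htriangle := Nat.div_mul_cancel (Nat.even_mul_succ_self m).two_dvd
  have hbound := Nat.div_mul_le_self ((m + 4) * (m + 3) * (m + 1)) 2
  by_contra! hlt
  zify at *
  nlinarith [sq_nonneg ((m : ℤ) - 4)]

theorem statement16_general (m s : ℕ)
    (hms : (2 ≤ m ∧ s ≤ (m + 3).choose 3 + m * (m + 2) / 4) ∨ (m = 1 ∧ s ≤ 5)) :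
    ∃ D : MvPolynomial (Fin s × Fin 4) ℂ, D ≠ 0 ∧
      ∀ v : Fin s → Fin 4 → ℂ,
        MvPolynomial.eval (fun t => v t.1 t.2) D ≠ 0 →
        ∀ u : Fin 4 → ℂ, u ≠ 0 →
          ((∀ q : {S : Finset (Fin 4) // S.card = 2} → MvPolynomial (Fin 4) ℂ,
              (∀ S, (q S).IsHomogeneous m) →
              (∀ i, tval 4 2 q (v i) * ExteriorAlgebra.ι ℂ (v i) = 0) →
              tval 4 2 q u * ExteriorAlgebra.ι ℂ u = 0) ↔
            ∃ i, ∃ lam : ℂ, u = lam • v i) := by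
  obtain ⟨v₀, hv₀⟩ := exists_isKoszulRegular_fin (K := ℂ) hms (Fintype.card (Fin s))
  obtain ⟨D, hD, hregular⟩ := hv₀.exists_open
  refine ⟨D, fun h0 => hD (by rw [h0, map_zero]), fun v hDv u hu => ?_⟩
  rw [forall_tval_mul_ι_eq_zero_iff]
  exact (hregular _ hDv).common_zero_iff hu

/-- Theorem 5.3(iv) (`ℙ³`, bundle `Q*(m+1)`): if `m ≥ 2` and
`3s ≤ (m+4)(m+3)(m+1)/2 − m²/2 − m/2 − 8` (or `m = 1` and `s ≤ 5`), then for a general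
tuple of nonzero vectors `v_1,…,v_s ∈ ℂ⁴`, the common eigenvectors of all tensors
`M ∈ Hom(S^mℂ⁴, Λ²ℂ⁴)` (represented by six homogeneous degree-`m` component polynomials
`(q_S)_{|S|=2}`) satisfying `M(v_i^m) ∧ v_i = 0` for all `i` are exactly the nonzero
scalar multiples of the `v_i`.  (Note `m²/2 + m/2 = m(m+1)/2`, so the bound is written
subtraction-free as `3s + m(m+1)/2 + 8 ≤ (m+4)(m+3)(m+1)/2`.) -/
theorem statement16 (m s : ℕ)
    (hms : (2 ≤ m ∧ 3 * s + m * (m + 1) / 2 + 8 ≤ (m + 4) * (m + 3) * (m + 1) / 2) ∨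
      (m = 1 ∧ s ≤ 5)) :
    ∃ D : MvPolynomial (Fin s × Fin 4) ℂ, D ≠ 0 ∧
      ∀ v : Fin s → Fin 4 → ℂ, (∀ i, v i ≠ 0) →
        MvPolynomial.eval (fun t => v t.1 t.2) D ≠ 0 →
        ∀ u : Fin 4 → ℂ, u ≠ 0 →
          ((∀ q : {S : Finset (Fin 4) // S.card = 2} → MvPolynomial (Fin 4) ℂ,
              (∀ S, (q S).IsHomogeneous m) →
              (∀ i, tval 4 2 q (v i) * ExteriorAlgebra.ι ℂ (v i) = 0) →
              tval 4 2 q u * ExteriorAlgebra.ι ℂ u = 0) ↔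
            ∃ i, ∃ lam : ℂ, u = lam • v i) := by
  obtain ⟨D, hD, h⟩ :=
    statement16_general m s (hms.imp_left (And.imp_right le_choose_add_of_three_mul_le))
  exact ⟨D, hD, fun v _ => h v⟩
end

section
/- Let n ≥ 3, m ≥ 1, V = ℂ^{n+1}, a = ⌈n/2⌉, and let r be an integer with r ≤ binom(m+n,n). For a general tuple of nonzero vectors v_1,…,v_r ∈ V, define for b ∈ {a, n−a} the subspace W_b = {M ∈ Hom(S^mV, Λ^bV) : M(v_i^m) ∧ v_i = 0 in Λ^{b+1}V for all i = 1,…,r}. Then a nonzero v ∈ V satisfies M(v^m) ∧ v = 0 for every M ∈ W_a and every M ∈ W_{n−a} if and only if v is a scalar multiple of some v_i. Moreover f = Σ_{i=1}^r v_i^{2m+1} has symmetric rank r and its rank-r Waring decomposition is unique up to permutation and scaling. (When n is even, a = n−a and the two subspaces coincide.) -/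
open MvPolynomial ExteriorAlgebra

/-- The linear form `ℓ_v = Σ_j v_j x_j` associated to a vector `v ∈ ℂ^k`. -/
noncomputable def linForm (k : ℕ) (v : Fin k → ℂ) : MvPolynomial (Fin k) ℂ :=
  ∑ j, MvPolynomial.C (v j) * MvPolynomial.X j

/-- The (symmetric/Waring) rank of `f`: the least `r` such that
`f = Σ_{i=1}^r c_i ℓ_{v_i}^d` with all `v_i ≠ 0`. -/
noncomputable def waringRank (n d : ℕ) (f : MvPolynomial (Fin (n+1)) ℂ) : ℕ :=
  sInf {r : ℕ | ∃ (c : Fin r → ℂ) (v : Fin r → (Fin (n+1) → ℂ)),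
    (∀ i, v i ≠ 0) ∧ f = ∑ i, c i • (linForm (n+1) (v i)) ^ d}

/-- The rank-`r` decomposition `f = Σ c_i ℓ_{v_i}^d` is unique up to permutation and
scaling: every decomposition `f = Σ c_i' ℓ_{w_i}^d` with all `c_i' ≠ 0`, `w_i ≠ 0` is
obtained from it by a permutation `σ` and nonzero scalars `λ_i` with `w_i = λ_i v_{σ i}`
and `c_i' λ_i^d = c_{σ i}`. -/
def UniqueDecomp (n d r : ℕ) (f : MvPolynomial (Fin (n+1)) ℂ)
    (c : Fin r → ℂ) (v : Fin r → Fin (n+1) → ℂ) : Prop :=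
  ∀ (c' : Fin r → ℂ) (w : Fin r → Fin (n+1) → ℂ),
    (∀ i, c' i ≠ 0) → (∀ i, w i ≠ 0) →
    f = ∑ i, c' i • (linForm (n+1) (w i)) ^ d →
    ∃ (σ : Equiv.Perm (Fin r)) (lam : Fin r → ℂ),
      (∀ i, lam i ≠ 0) ∧ (∀ i, w i = lam i • v (σ i)) ∧ (∀ i, c' i * lam i ^ d = c (σ i))

/-!
Points that impose independent conditions on forms of degree `m` admit dual forms `L i`, with
`L i (v j) = δ_ij`; by a determinant argument this is an open nonempty condition on the tuple as
long as there are at most `dim S^m V` points. Everything else follows from the dual forms.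

The power sum `∑ c_i ℓ_{v_i}^d` determines, by apolarity, the functional `p ↦ ∑ c_i p(v_i)` on
forms of degree `d`. Evaluating it on products of dual forms writes an invertible diagonal matrix
as a product through the points of any other decomposition, which bounds the rank. When both
decompositions have the same length, the points `w_j` of the second one have dual forms `N j` too,
and evaluating on `L_i · N_j · x_t` shows that `w_j` is proportional to every `v_i` with
`L_i(w_j) ≠ 0`.

For eigenvectors, the tensors `p ⊗ ω`, with `p` a form and `ω ∈ Λ^b V`, are enough. If every `L_i`
vanishes at `u`, some `p` vanishes at all the `v_i` but not at `u`, and any `ω` with `ω ∧ u ≠ 0`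
excludes `u`. Otherwise `L_i(u) ≠ 0` for some `i`; the tensor `L_i ⊗ ω` with `ω ∧ v_i = 0` has all
the `v_j` as eigenvectors, and if `u` is not a multiple of `v_i` then `ω` can be chosen with
`ω ∧ u ≠ 0`.
-/

section EvaluationMatrix

variable {I J X σ R K : Type*}

theorem exists_isUnit_of_linearIndependent_fun [Fintype I] [DecidableEq I] [Field K]
    {f : I → X → K} (hf : LinearIndependent K f) :
    ∃ x : I → X, IsUnit (Matrix.of fun i j => f i (x j)) := by
  have hspan : Submodule.span K (Set.range fun a i => f i a) = ⊤ := by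
    by_contra hne
    obtain ⟨φ, hφ, hle⟩ := Submodule.exists_le_ker_of_lt_top _ (lt_top_iff_ne_top.mpr hne)
    have hφ_basis : ∀ i, φ (fun j => if i = j then 1 else 0) = 0 := by
      refine Fintype.linearIndependent_iff.mp hf _ (funext fun a => ?_)
      have hφa : φ (fun i => f i a) = 0 := hle (Submodule.subset_span ⟨a, rfl⟩)
      simpa [LinearMap.pi_apply_eq_sum_univ φ (fun i => f i a), mul_comm] using hφa
    exact hφ (LinearMap.ext fun y => by simp [LinearMap.pi_apply_eq_sum_univ φ y, hφ_basis])
  obtain ⟨κ, a, -, hspan', hli⟩ := exists_linearIndependent' K fun (a : X) i => f i a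
  let columnBasis := Module.Basis.mk hli (by rw [hspan', hspan])
  let e : I ≃ κ := (Pi.basisFun K I).indexEquiv columnBasis
  exact ⟨a ∘ e, Matrix.linearIndependent_cols_iff_isUnit.mp (hli.comp e e.injective)⟩

/-- The matrix of the values of a family of polynomials (indexing the rows) at a family of points
(indexing the columns). -/
noncomputable def evalMatrix [CommSemiring R] (p : I → MvPolynomial σ R) (x : J → σ → R) :
    Matrix I J R :=
  .of fun i j => eval (x j) (p i)

theorem exists_ne_zero_forall_isUnit_evalMatrix [Fintype I] [DecidableEq I] [Field K] [Infinite K]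
    {p : I → MvPolynomial σ K} (hp : LinearIndependent K p) :
    ∃ D : MvPolynomial (I × σ) K, D ≠ 0 ∧
      ∀ x : I → σ → K, eval (fun t => x t.1 t.2) D ≠ 0 → IsUnit (evalMatrix p x) := by
  let D := (Matrix.of fun i j => rename (Prod.mk j) (p i)).det
  have hD (x : I → σ → K) : eval (fun t => x t.1 t.2) D = (evalMatrix p x).det := by
    rw [RingHom.map_det]
    congr 1
    ext i j
    simp [evalMatrix, eval_rename, Function.comp_def]
  have hp_fun : LinearIndependent K fun i x => eval x (p i) := by
    refine hp.map' (evalₗ K σ) (LinearMap.ker_eq_bot.mpr fun p q hpq => ?_)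
    exact MvPolynomial.funext fun x => congrFun hpq x
  refine ⟨D, fun hD0 => ?_, fun x hx => ?_⟩
  · obtain ⟨x, hx⟩ := exists_isUnit_of_linearIndependent_fun hp_fun
    have hdet : (evalMatrix p x).det ≠ 0 := ((Matrix.isUnit_iff_isUnit_det _).mp hx).ne_zero
    exact hdet (by rw [← hD, hD0, map_zero])
  · rwa [Matrix.isUnit_iff_isUnit_det, isUnit_iff_ne_zero, ← hD]

end EvaluationMatrix

section Forms

variable {I σ R K : Type*}

theorem eval_smul_of_isHomogeneous_s18 [CommSemiring R] {m : ℕ} {p : MvPolynomial σ R}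
    (hp : p.IsHomogeneous m) (a : R) (x : σ → R) : eval (a • x) p = a ^ m * eval x p := by
  rw [eval_eq, eval_eq, Finset.mul_sum]
  refine Finset.sum_congr rfl fun α hα => ?_
  simp only [Pi.smul_apply, smul_eq_mul, mul_pow, Finset.prod_mul_distrib,
    Finset.prod_pow_eq_pow_sum, ← hp.degree_eq_sum_deg_support hα, mul_left_comm]

theorem exists_isHomogeneous_eval_eq_one [Field K] {x : σ → K} (hx : x ≠ 0) (d : ℕ) :
    ∃ p : MvPolynomial σ K, p.IsHomogeneous d ∧ eval x p = 1 := by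
  obtain ⟨j, hj⟩ := Function.ne_iff.mp hx
  refine ⟨(C (x j)⁻¹ * X j) ^ d, ?_, by simp [inv_mul_cancel₀ hj]⟩
  simpa using (isHomogeneous_C_mul_X (x j)⁻¹ j).pow d

theorem exists_linearIndependent_isHomogeneous (K : Type*) [Fintype I] [Fintype σ] [Field K]
    {m : ℕ} (h : Fintype.card I ≤ (Fintype.card σ).multichoose m) :
    ∃ p : I → MvPolynomial σ K, (∀ i, (p i).IsHomogeneous m) ∧ LinearIndependent K p := by
  classical
  rw [← Sym.card_sym_eq_multichoose] at h
  obtain ⟨g⟩ := Function.Embedding.nonempty_of_card_le h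
  let e (i : I) : σ →₀ ℕ := Multiset.toFinsupp (g i : Multiset σ)
  have he : Function.Injective e := fun i j hij =>
    g.injective (Subtype.ext (Multiset.toFinsupp.injective hij))
  refine ⟨fun i => monomial (e i) 1, fun i => isHomogeneous_monomial _ ?_, ?_⟩
  · simp [e, Finsupp.degree_eq_sum]
  · simpa [Function.comp_def] using (basisMonomials σ K).linearIndependent.comp e he

end Forms

section DualForms

variable {I J σ R K : Type*} [DecidableEq I]

/-- The forms `L i` of degree `m` are dual to the points `v i`: `L i` takes the value `1` at `v i`
and vanishes at the other points. Such forms exist exactly when the points impose independent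
conditions on forms of degree `m`. -/
structure IsDualForms [CommSemiring R] (m : ℕ) (v : I → σ → R) (L : I → MvPolynomial σ R) :
    Prop where
  isHomogeneous (i : I) : (L i).IsHomogeneous m
  evalMatrix_eq_one : evalMatrix L v = 1

theorem isDualForms_of_mul_evalMatrix_eq_one [CommSemiring R] [Fintype J] {m : ℕ}
    {p : J → MvPolynomial σ R} {v : I → σ → R} {A : Matrix I J R}
    (hp : ∀ j, (p j).IsHomogeneous m) (hA : A * evalMatrix p v = 1) :
    IsDualForms m v fun i => ∑ j, C (A i j) * p j where
  isHomogeneous i := IsHomogeneous.sum _ _ _ fun j _ => (hp j).C_mul (A i j)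
  evalMatrix_eq_one := by
    rw [← hA]
    ext i i'
    simp [evalMatrix, Matrix.mul_apply]

theorem exists_ne_zero_forall_exists_isDualForms [Fintype I] [Fintype σ] [Field K] [Infinite K]
    {m : ℕ} (h : Fintype.card I ≤ (Fintype.card σ).multichoose m) :
    ∃ D : MvPolynomial (I × σ) K, D ≠ 0 ∧
      ∀ v : I → σ → K, eval (fun t => v t.1 t.2) D ≠ 0 → ∃ L, IsDualForms m v L := by
  obtain ⟨p, hp, hli⟩ := exists_linearIndependent_isHomogeneous K h
  obtain ⟨D, hD, hunit⟩ := exists_ne_zero_forall_isUnit_evalMatrix hli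
  refine ⟨D, hD, fun v hv => ?_⟩
  obtain ⟨A, hA⟩ := (hunit v hv).exists_left_inv
  exact ⟨_, isDualForms_of_mul_evalMatrix_eq_one hp hA⟩

namespace IsDualForms

theorem eval_eq [CommSemiring R] {m : ℕ} {v : I → σ → R} {L : I → MvPolynomial σ R}
    (hL : IsDualForms m v L) (i j : I) : eval (v j) (L i) = if i = j then 1 else 0 := by
  simpa [evalMatrix, Matrix.one_apply] using congrFun₂ hL.evalMatrix_eq_one i j

theorem eq_of_smul_eq_smul [CommSemiring R] [IsDomain R] {m : ℕ} {v : I → σ → R}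
    {L : I → MvPolynomial σ R} (hL : IsDualForms m v L) {i j : I} {a b : R} (ha : a ≠ 0)
    (h : a • v i = b • v j) : i = j := by
  by_contra hij
  have hval := congrArg (fun x => eval x (L i)) h
  simp only [eval_smul_of_isHomogeneous_s18 (hL.isHomogeneous i), hL.eval_eq, if_true, if_neg hij,
    mul_one, mul_zero] at hval
  exact pow_ne_zero m ha hval

variable [Field K] {m d : ℕ} {v : I → σ → K} {L : I → MvPolynomial σ K}

theorem exists_of_le (hL : IsDualForms m v L) (hv : ∀ i, v i ≠ 0) (hmd : m ≤ d) :
    ∃ L', IsDualForms d v L' := by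
  choose p hp hpv using fun i => exists_isHomogeneous_eval_eq_one (hv i) (d - m)
  refine ⟨fun i => L i * p i, fun i => ?_, ?_⟩
  · simpa [Nat.add_sub_cancel' hmd] using (hL.isHomogeneous i).mul (hp i)
  · ext i j
    rcases eq_or_ne i j with rfl | hij
    · simp [evalMatrix, hL.eval_eq, hpv]
    · simp [evalMatrix, hL.eval_eq, hij]

theorem exists_isHomogeneous_eval_eq_one_of_forall_eval_eq_zero [Finite I]
    (hL : IsDualForms m v L) {u : σ → K} (hu : u ≠ 0) (hLu : ∀ i, eval u (L i) = 0) :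
    ∃ p : MvPolynomial σ K, p.IsHomogeneous m ∧ (∀ i, eval (v i) p = 0) ∧ eval u p = 1 := by
  cases nonempty_fintype I
  obtain ⟨g, hg, hgu⟩ := exists_isHomogeneous_eval_eq_one hu m
  refine ⟨g - ∑ i, C (eval (v i) g) * L i, ?_, fun i => ?_, ?_⟩
  · exact hg.sub (IsHomogeneous.sum _ _ _ fun i _ => (hL.isHomogeneous i).C_mul _)
  · simp [hL.eval_eq]
  · simp [hgu, hLu]

end IsDualForms

end DualForms

section Apolarity

/-- The apolar functional of a form `p`: the linear functional on forms of the degree `d` of `p`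
that sends `ℓ_v ^ d` to `p v`, see `apolar_linForm_pow`. The multinomial coefficients cancel those
of the expansion of `ℓ_v ^ d`. -/
noncomputable def apolar {σ : Type*} (p : MvPolynomial σ ℂ) : MvPolynomial σ ℂ →ₗ[ℂ] ℂ :=
  ∑ α ∈ p.support, (coeff α p / α.multinomial) • lcoeff ℂ α

variable {I J : Type*} {k m m' d : ℕ}

theorem apolar_linForm_pow {p : MvPolynomial (Fin k) ℂ} (hp : p.IsHomogeneous d) (v : Fin k → ℂ) :
    apolar p (linForm k v ^ d) = eval v p := by
  simp only [apolar, LinearMap.sum_apply, LinearMap.smul_apply, lcoeff_apply, smul_eq_mul, eval_eq]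
  refine Finset.sum_congr rfl fun α hα => ?_
  have hdeg : (α.sum fun _ e => e) = d := (hp.degree_eq_sum_deg_support hα).symm
  have hne : (α.multinomial : ℂ) ≠ 0 := Nat.cast_ne_zero.mpr (Nat.multinomial_pos _ _).ne'
  simp only [linForm, C_mul', coeff_linearCombination_X_pow_of_fintype, if_pos hdeg]
  rw [← mul_assoc, div_mul_cancel₀ _ hne, Finsupp.prod]

theorem linForm_smul (a : ℂ) (v : Fin k → ℂ) : linForm k (a • v) = a • linForm k v := by
  simp [linForm, Finset.smul_sum, smul_eq_C_mul, mul_assoc]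

theorem IsDualForms.linearIndependent_linForm_pow [DecidableEq I] {v : I → Fin k → ℂ}
    {L : I → MvPolynomial (Fin k) ℂ} (hL : IsDualForms d v L) :
    LinearIndependent ℂ fun i => linForm k (v i) ^ d := by
  refine LinearIndependent.of_pairwise_dual_eq_zero_one _ (fun i => apolar (L i)) ?_ ?_
  · intro i j hij
    simp [apolar_linForm_pow (hL.isHomogeneous i), hL.eval_eq, hij]
  · intro i
    simp [apolar_linForm_pow (hL.isHomogeneous i), hL.eval_eq]

variable [Fintype I] [Fintype J] {c : I → ℂ} {v : I → Fin k → ℂ} {c' : J → ℂ} {w : J → Fin k → ℂ}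

theorem sum_mul_eval_eq_of_sum_smul_linForm_pow_eq
    (h : ∑ i, c i • linForm k (v i) ^ d = ∑ j, c' j • linForm k (w j) ^ d)
    {p : MvPolynomial (Fin k) ℂ} (hp : p.IsHomogeneous d) :
    ∑ i, c i * eval (v i) p = ∑ j, c' j * eval (w j) p := by
  simpa only [map_sum, map_smul, apolar_linForm_pow hp, smul_eq_mul] using congrArg (apolar p) h

/-- Both sides are the matrix of the catalecticant of the common power sum, in terms of the forms
`p` and `q`. -/
theorem evalMatrix_mul_diagonal_mul_transpose_eq [DecidableEq I] [DecidableEq J] {A B : Type*}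
    (h : ∑ i, c i • linForm k (v i) ^ (m + m') = ∑ j, c' j • linForm k (w j) ^ (m + m'))
    {p : A → MvPolynomial (Fin k) ℂ} (hp : ∀ a, (p a).IsHomogeneous m)
    {q : B → MvPolynomial (Fin k) ℂ} (hq : ∀ b, (q b).IsHomogeneous m') :
    evalMatrix p v * Matrix.diagonal c * (evalMatrix q v).transpose =
      evalMatrix p w * Matrix.diagonal c' * (evalMatrix q w).transpose := by
  ext a b
  rw [Matrix.mul_apply, Matrix.mul_apply]
  simpa [evalMatrix, Matrix.mul_diagonal, mul_assoc, mul_left_comm] using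
    sum_mul_eval_eq_of_sum_smul_linForm_pow_eq h ((hp a).mul (hq b))

end Apolarity

section WaringDecomposition

namespace IsDualForms

section

variable {I J : Type*} [Fintype I] [DecidableEq I] [Fintype J] {k m m' d : ℕ} {c : I → ℂ}
  {v : I → Fin k → ℂ} {L : I → MvPolynomial (Fin k) ℂ} {c' : J → ℂ} {w : J → Fin k → ℂ}

theorem exists_evalMatrix_mul_eq_one (hL : IsDualForms m v L) (hv : ∀ i, v i ≠ 0)
    (hc : ∀ i, c i ≠ 0) (hd : 2 * m ≤ d)
    (h : ∑ i, c i • linForm k (v i) ^ d = ∑ j, c' j • linForm k (w j) ^ d) :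
    ∃ A : Matrix J I ℂ, evalMatrix L w * A = 1 := by
  classical
  obtain ⟨m', rfl⟩ := Nat.exists_eq_add_of_le (show m ≤ d by omega)
  obtain ⟨N, hN⟩ := hL.exists_of_le hv (show m ≤ m' by omega)
  have hfactor : Matrix.diagonal c =
      evalMatrix L w * Matrix.diagonal c' * (evalMatrix N w).transpose := by
    simpa [hL.evalMatrix_eq_one, hN.evalMatrix_eq_one] using
      evalMatrix_mul_diagonal_mul_transpose_eq h hL.isHomogeneous hN.isHomogeneous
  refine ⟨Matrix.diagonal c' * (evalMatrix N w).transpose * Matrix.diagonal c⁻¹, ?_⟩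
  rw [← Matrix.mul_assoc, ← Matrix.mul_assoc, ← hfactor, Matrix.diagonal_mul_diagonal]
  simp [hc]

theorem card_le_of_sum_smul_linForm_pow_eq (hL : IsDualForms m v L) (hv : ∀ i, v i ≠ 0)
    (hc : ∀ i, c i ≠ 0) (hd : 2 * m ≤ d)
    (h : ∑ i, c i • linForm k (v i) ^ d = ∑ j, c' j • linForm k (w j) ^ d) :
    Fintype.card I ≤ Fintype.card J := by
  obtain ⟨A, hA⟩ := hL.exists_evalMatrix_mul_eq_one hv hc hd h
  calc Fintype.card I = (evalMatrix L w * A).rank := by rw [hA, Matrix.rank_one]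
    _ ≤ (evalMatrix L w).rank := Matrix.rank_mul_le_left _ _
    _ ≤ Fintype.card J := Matrix.rank_le_card_width _

theorem smul_eq_smul_of_sum_smul_linForm_pow_eq [DecidableEq J] (hL : IsDualForms m v L)
    {N : J → MvPolynomial (Fin k) ℂ} (hN : IsDualForms m' w N)
    (h : ∑ i, c i • linForm k (v i) ^ (m + m' + 1) = ∑ j, c' j • linForm k (w j) ^ (m + m' + 1))
    (i : I) (j : J) : (c i * eval (v i) (N j)) • v i = (c' j * eval (w j) (L i)) • w j := by
  ext t
  have hp : (L i * N j * X t).IsHomogeneous (m + m' + 1) :=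
    ((hL.isHomogeneous i).mul (hN.isHomogeneous j)).mul (isHomogeneous_X ℂ t)
  simpa [hL.eval_eq, hN.eval_eq, mul_assoc] using sum_mul_eval_eq_of_sum_smul_linForm_pow_eq h hp

end

section

variable {I : Type*} [Fintype I] [DecidableEq I] {k m d : ℕ} {c : I → ℂ} {v : I → Fin k → ℂ}
  {L : I → MvPolynomial (Fin k) ℂ} {c' : I → ℂ} {w : I → Fin k → ℂ}

theorem exists_equiv_smul_of_sum_smul_linForm_pow_eq (hL : IsDualForms m v L) (hv : ∀ i, v i ≠ 0)
    (hc : ∀ i, c i ≠ 0) (hw : ∀ j, w j ≠ 0) (hc' : ∀ j, c' j ≠ 0) (hd : 2 * m + 1 ≤ d)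
    (h : ∑ i, c i • linForm k (v i) ^ d = ∑ j, c' j • linForm k (w j) ^ d) :
    ∃ (e : Equiv.Perm I) (a : I → ℂ), (∀ j, a j ≠ 0) ∧ ∀ j, w j = a j • v (e j) := by
  obtain ⟨A, hA⟩ := hL.exists_evalMatrix_mul_eq_one hv hc (by omega) h
  have hAL : A * evalMatrix L w = 1 := mul_eq_one_comm.mp hA
  have hN := isDualForms_of_mul_evalMatrix_eq_one hL.isHomogeneous hAL
  obtain ⟨m', rfl⟩ := Nat.exists_eq_add_of_le (show m + 1 ≤ d by omega)
  obtain ⟨N', hN'⟩ := hN.exists_of_le hw (show m ≤ m' by omega)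
  rw [add_right_comm] at h
  have hLw (j : I) : ∃ i, eval (w j) (L i) ≠ 0 := by
    have hunit := IsUnit.of_mul_eq_one_right _ hAL
    exact Function.ne_iff.mp ((Matrix.linearIndependent_cols_iff_isUnit.mpr hunit).ne_zero j)
  choose e he using hLw
  have hprop (j : I) : ∃ a : ℂ, w j = a • v (e j) := by
    refine ⟨(c' j * eval (w j) (L (e j)))⁻¹ * (c (e j) * eval (v (e j)) (N' j)), ?_⟩
    rw [mul_smul, hL.smul_eq_smul_of_sum_smul_linForm_pow_eq hN' h,
      inv_smul_smul₀ (mul_ne_zero (hc' j) (he j))]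
  choose a ha using hprop
  have ha0 (j : I) : a j ≠ 0 := fun h0 => hw j (by rw [ha, h0, zero_smul])
  have hinj : Function.Injective e := fun i j hij =>
    hN.eq_of_smul_eq_smul (b := a i) (ha0 j) (by rw [ha i, ha j, hij, smul_comm])
  exact ⟨.ofBijective e hinj.bijective_of_finite, a, ha0, ha⟩

theorem mul_pow_eq_of_sum_smul_linForm_pow_eq (hL : IsDualForms d v L) {e : Equiv.Perm I}
    {a : I → ℂ} (ha : ∀ j, w j = a j • v (e j))
    (h : ∑ i, c i • linForm k (v i) ^ d = ∑ j, c' j • linForm k (w j) ^ d) (j : I) :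
    c' j * a j ^ d = c (e j) := by
  have hli := hL.linearIndependent_linForm_pow.comp e e.injective
  refine Fintype.linearIndependent_iffₛ.mp hli (fun j => c' j * a j ^ d) (fun j => c (e j)) ?_ j
  calc ∑ j, (c' j * a j ^ d) • linForm k (v (e j)) ^ d
      = ∑ j, c' j • linForm k (w j) ^ d := by simp [ha, linForm_smul, smul_pow, mul_smul]
    _ = ∑ i, c i • linForm k (v i) ^ d := h.symm
    _ = ∑ j, c (e j) • linForm k (v (e j)) ^ d := (Equiv.sum_comp e _).symm

end

variable {n m d r : ℕ} {c : Fin r → ℂ} {v : Fin r → Fin (n + 1) → ℂ}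
  {L : Fin r → MvPolynomial (Fin (n + 1)) ℂ}

theorem waringRank_sum_eq (hL : IsDualForms m v L) (hv : ∀ i, v i ≠ 0) (hc : ∀ i, c i ≠ 0)
    (hd : 2 * m ≤ d) : waringRank n d (∑ i, c i • linForm (n + 1) (v i) ^ d) = r := by
  refine IsLeast.csInf_eq ⟨⟨c, v, hv, rfl⟩, ?_⟩
  rintro s ⟨c', w, -, h⟩
  simpa using hL.card_le_of_sum_smul_linForm_pow_eq hv hc hd h

theorem uniqueDecomp_sum (hL : IsDualForms m v L) (hv : ∀ i, v i ≠ 0) (hc : ∀ i, c i ≠ 0)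
    (hd : 2 * m + 1 ≤ d) : UniqueDecomp n d r (∑ i, c i • linForm (n + 1) (v i) ^ d) c v := by
  intro c' w hc' hw h
  obtain ⟨e, a, ha0, ha⟩ :=
    hL.exists_equiv_smul_of_sum_smul_linForm_pow_eq hv hc hw hc' hd h
  obtain ⟨L', hL'⟩ := hL.exists_of_le hv (show m ≤ d by omega)
  exact ⟨e, a, ha0, ha, hL'.mul_pow_eq_of_sum_smul_linForm_pow_eq ha h⟩

end IsDualForms

end WaringDecomposition

section ExteriorPower

variable {K M : Type*} [Field K] [AddCommGroup M] [Module K M]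

theorem exists_linearIndependent_append {s t : ℕ} {z : Fin s → M} (hz : LinearIndependent K z)
    (h : t + s ≤ Module.finrank K M) : ∃ y : Fin t → M, LinearIndependent K (Fin.append y z) := by
  induction t with
  | zero => exact ⟨Fin.elim0, by rw [Fin.elim0_append]; exact hz.comp _ (Fin.cast_injective _)⟩
  | succ t ih =>
    obtain ⟨y, hy⟩ := ih (by omega)
    obtain ⟨x, hx⟩ := exists_linearIndependent_cons_of_lt_finrank hy (by omega)
    refine ⟨Fin.cons x y, ?_⟩
    rw [Fin.append_cons]
    exact hx.comp _ (Fin.cast_injective _)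

theorem ιMulti_ne_zero_of_linearIndependent {b : ℕ} {y : Fin b → M} (hy : LinearIndependent K y) :
    ιMulti K b y ≠ 0 := by
  have hfamily := (exteriorPower.ιMulti_family_linearIndependent_field (n := b) hy).ne_zero
    ⟨Finset.univ, by simp [Set.powersetCard]⟩
  have hid : ⇑(Finset.univ.orderEmbOfFin (Finset.card_fin b)) = id :=
    (Finset.orderEmbOfFin_unique _ (fun _ => Finset.mem_univ _) strictMono_id).symm
  intro h0
  refine hfamily (Subtype.ext ?_)
  simpa [ιMulti_family, Set.powersetCard.ofFinEmbEquiv_symm_apply, hid] using h0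

theorem exists_mem_exteriorPower_mul_ι_eq_zero_and_ne_zero {u v : M}
    (hvu : LinearIndependent K ![v, u]) {b : ℕ} (hb : 1 ≤ b) (hbM : b + 1 ≤ Module.finrank K M) :
    ∃ ω ∈ ⋀[K]^b M, ω * ι K v = 0 ∧ ω * ι K u ≠ 0 := by
  obtain ⟨b, rfl⟩ := Nat.exists_eq_add_of_le' hb
  obtain ⟨y, hy⟩ := exists_linearIndependent_append hvu hbM
  refine ⟨ιMulti K b y * ι K v, ?_, ?_, ?_⟩
  · rw [exteriorPower, pow_succ]
    exact Submodule.mul_mem_mul (exteriorPower.ιMulti K b y).2 ⟨v, rfl⟩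
  · rw [mul_assoc, ι_sq_zero, mul_zero]
  · have hmul : ιMulti K b y * ι K v * ι K u = ιMulti K (b + 2) (Fin.append y ![v, u]) := by
      rw [← ιMulti_mul_ιMulti, mul_assoc]
      simp [Matrix.vecTail]
    rw [hmul]
    exact ιMulti_ne_zero_of_linearIndependent hy

theorem eWedge_eq_ιMulti_family {k b : ℕ} (S : Set.powersetCard (Fin k) b) :
    eWedge k S = ιMulti_family ℂ b (Pi.basisFun ℂ (Fin k)) S := by
  rw [eWedge, ← Finset.listMap_orderEmbOfFin_finRange S.1 S.2]
  simp [ιMulti_family, ιMulti_apply, List.ofFn_eq_map, Set.powersetCard.ofFinEmbEquiv_symm_apply,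
    Function.comp_def]

theorem span_range_eWedge (k b : ℕ) :
    Submodule.span ℂ (Set.range fun S : {S : Finset (Fin k) // S.card = b} => eWedge k S) =
      ⋀[ℂ]^b (Fin k → ℂ) := by
  rw [← exteriorPower.ιMulti_family_span_fixedDegree_of_span ℂ (Pi.basisFun ℂ (Fin k)).span_eq]
  congr 2
  exact funext eWedge_eq_ιMulti_family

end ExteriorPower

section Eigenvectors

variable {I : Type*} {k b m : ℕ}

/-- The vector `v` is an eigenvector of the tensor represented by `q`, that is,
`M(v^m) ∧ v = 0`; the zero vector is not excluded. -/
def IsEigenvector (k b : ℕ) (q : {S : Finset (Fin k) // S.card = b} → MvPolynomial (Fin k) ℂ)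
    (v : Fin k → ℂ) : Prop :=
  tval k b q v * ι ℂ v = 0

/-- The vector `u` is an eigenvector of all tensors in the space `W_b` attached to the points `v i`,
which consists of the tensors in `Hom(S^m V, Λ^b V)` having each `v i` as an eigenvector. -/
def IsCommonEigenvector (k b m : ℕ) (v : I → Fin k → ℂ) (u : Fin k → ℂ) : Prop :=
  ∀ q : {S : Finset (Fin k) // S.card = b} → MvPolynomial (Fin k) ℂ,
    (∀ S, (q S).IsHomogeneous m) → (∀ i, IsEigenvector k b q (v i)) → IsEigenvector k b q u

theorem IsEigenvector.smul {q : {S : Finset (Fin k) // S.card = b} → MvPolynomial (Fin k) ℂ}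
    {v : Fin k → ℂ} (h : IsEigenvector k b q v) (hq : ∀ S, (q S).IsHomogeneous m) (a : ℂ) :
    IsEigenvector k b q (a • v) := by
  have htval : tval k b q (a • v) = a ^ m • tval k b q v := by
    simp only [tval, Finset.smul_sum, smul_smul, eval_smul_of_isHomogeneous_s18 (hq _)]
  rw [IsEigenvector, htval, map_smul, smul_mul_smul_comm, h, smul_zero]

theorem isCommonEigenvector_smul (v : I → Fin k → ℂ) (i : I) (a : ℂ) :
    IsCommonEigenvector k b m v (a • v i) :=
  fun _ hq hqv => (hqv i).smul hq a

theorem exists_tval_eq_eval_smul {ω : ExteriorAlgebra ℂ (Fin k → ℂ)}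
    (hω : ω ∈ ⋀[ℂ]^b (Fin k → ℂ)) {p : MvPolynomial (Fin k) ℂ} (hp : p.IsHomogeneous m) :
    ∃ q : {S : Finset (Fin k) // S.card = b} → MvPolynomial (Fin k) ℂ,
      (∀ S, (q S).IsHomogeneous m) ∧ ∀ x, tval k b q x = eval x p • ω := by
  rw [← span_range_eWedge] at hω
  obtain ⟨c, rfl⟩ := (Submodule.mem_span_range_iff_exists_fun ℂ).mp hω
  refine ⟨fun S => C (c S) * p, fun S => hp.C_mul (c S), fun x => ?_⟩
  simp [tval, Finset.smul_sum, smul_smul, mul_comm]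

namespace IsCommonEigenvector

variable {v : I → Fin k → ℂ} {u : Fin k → ℂ}

theorem eval_eq_zero_or_mul_ι_eq_zero (h : IsCommonEigenvector k b m v u)
    {ω : ExteriorAlgebra ℂ (Fin k → ℂ)} (hω : ω ∈ ⋀[ℂ]^b (Fin k → ℂ))
    {p : MvPolynomial (Fin k) ℂ} (hp : p.IsHomogeneous m)
    (hv : ∀ i, eval (v i) p = 0 ∨ ω * ι ℂ (v i) = 0) : eval u p = 0 ∨ ω * ι ℂ u = 0 := by
  obtain ⟨q, hq, hqx⟩ := exists_tval_eq_eval_smul hω hp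
  have hu := h q hq fun i => by
    rw [IsEigenvector, hqx, smul_mul_assoc, smul_eq_zero]
    exact hv i
  rwa [IsEigenvector, hqx, smul_mul_assoc, smul_eq_zero] at hu

variable [Finite I] [DecidableEq I] {L : I → MvPolynomial (Fin k) ℂ}

theorem exists_eval_ne_zero (h : IsCommonEigenvector k b m v u) (hL : IsDualForms m v L)
    (hu : u ≠ 0) (hb : 1 ≤ b) (hbk : b + 1 ≤ k) : ∃ i, eval u (L i) ≠ 0 := by
  by_contra! hLu
  obtain ⟨p, hp, hpv, hpu⟩ := hL.exists_isHomogeneous_eval_eq_one_of_forall_eval_eq_zero hu hLu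
  obtain ⟨x, hx⟩ := exists_linearIndependent_cons_of_lt_finrank
    (LinearIndependent.of_subsingleton (R := ℂ) (v := ![u]) 0 hu)
    (by rw [Module.finrank_fin_fun]; omega)
  obtain ⟨ω, hω, -, hωu⟩ := exists_mem_exteriorPower_mul_ι_eq_zero_and_ne_zero hx hb
    (by rwa [Module.finrank_fin_fun])
  rcases h.eval_eq_zero_or_mul_ι_eq_zero hω hp fun i => .inl (hpv i) with hpu0 | hωu0
  · exact one_ne_zero (hpu.symm.trans hpu0)
  · exact hωu hωu0

theorem exists_eq_smul (h : IsCommonEigenvector k b m v u) (hL : IsDualForms m v L)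
    (hv : ∀ i, v i ≠ 0) (hu : u ≠ 0) (hb : 1 ≤ b) (hbk : b + 1 ≤ k) :
    ∃ i, ∃ a : ℂ, u = a • v i := by
  obtain ⟨i, hi⟩ := h.exists_eval_ne_zero hL hu hb hbk
  by_contra! hne
  have hvu : LinearIndependent ℂ ![v i, u] :=
    (LinearIndependent.pair_iff' (hv i)).mpr fun a => (hne i a).symm
  obtain ⟨ω, hω, hωv, hωu⟩ := exists_mem_exteriorPower_mul_ι_eq_zero_and_ne_zero hvu hb
    (by rwa [Module.finrank_fin_fun])
  refine (h.eval_eq_zero_or_mul_ι_eq_zero hω (hL.isHomogeneous i) fun j => ?_).elim hi hωu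
  rcases eq_or_ne i j with rfl | hij
  · exact .inr hωv
  · exact .inl (by rw [hL.eval_eq, if_neg hij])

end IsCommonEigenvector

end Eigenvectors

theorem statement18_general (n m r : ℕ) (hr : r ≤ Nat.choose (m + n) n) :
    ∃ D : MvPolynomial (Fin r × Fin (n + 1)) ℂ, D ≠ 0 ∧
      ∀ v : Fin r → Fin (n + 1) → ℂ, (∀ i, v i ≠ 0) → eval (fun t => v t.1 t.2) D ≠ 0 →
        (∀ B : Set ℕ, (∃ b ∈ B, 1 ≤ b ∧ b ≤ n) → ∀ u : Fin (n + 1) → ℂ, u ≠ 0 →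
          ((∀ b ∈ B, IsCommonEigenvector (n + 1) b m v u) ↔ ∃ i, ∃ a : ℂ, u = a • v i)) ∧
        ∀ c : Fin r → ℂ, (∀ i, c i ≠ 0) →
          (∀ d, 2 * m ≤ d → waringRank n d (∑ i, c i • linForm (n + 1) (v i) ^ d) = r) ∧
          ∀ d, 2 * m + 1 ≤ d →
            UniqueDecomp n d r (∑ i, c i • linForm (n + 1) (v i) ^ d) c v := by
  have hcard : Fintype.card (Fin r) ≤ (Fintype.card (Fin (n + 1))).multichoose m := by
    rw [Fintype.card_fin, Fintype.card_fin, Nat.multichoose_eq]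
    rwa [show n + 1 + m - 1 = m + n by omega, Nat.choose_symm_add]
  obtain ⟨D, hD, hdual⟩ := exists_ne_zero_forall_exists_isDualForms (K := ℂ) hcard
  refine ⟨D, hD, fun v hv hDv => ?_⟩
  obtain ⟨L, hL⟩ := hdual v hDv
  refine ⟨fun B hB u hu => ⟨fun h => ?_, ?_⟩, fun c hc =>
    ⟨fun d hd => hL.waringRank_sum_eq hv hc hd, fun d hd => hL.uniqueDecomp_sum hv hc hd⟩⟩
  · obtain ⟨b, hbB, hb, hbn⟩ := hB
    exact (h b hbB).exists_eq_smul hL hv hu hb (by omega)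
  · rintro ⟨i, a, rfl⟩ b -
    exact isCommonEigenvector_smul v i a

/-- **Theorem 5.4 (Koszul flattening decomposition, `n ≥ 3`)**: let `a = ⌈n/2⌉` and
`r ≤ binom(m+n,n)`.  For a general tuple of nonzero vectors `v_1,…,v_r ∈ ℂ^{n+1}`, for
`b ∈ {a, n−a}` let `W_b ⊆ Hom(S^mℂ^{n+1}, Λ^bℂ^{n+1})` consist of the tensors
(represented by component polynomials `(q_S)_{|S|=b}` homogeneous of degree `m`) having
each `v_i` as an eigenvector.  Then the common eigenvectors of `W_a` and `W_{n−a}` are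
exactly the nonzero multiples of the `v_i`; moreover `f = Σ v_i^{2m+1}` has symmetric
rank `r` and its rank-`r` Waring decomposition is unique up to permutation and scaling.
(When `n` is even the two subspaces coincide.) -/
theorem statement18 (n m r : ℕ) (hn : 3 ≤ n) (hm : 1 ≤ m)
    (hr : r ≤ Nat.choose (m + n) n) :
    ∃ D : MvPolynomial (Fin r × Fin (n+1)) ℂ, D ≠ 0 ∧
      ∀ v : Fin r → Fin (n+1) → ℂ, (∀ i, v i ≠ 0) →
        MvPolynomial.eval (fun t => v t.1 t.2) D ≠ 0 →
        (∀ u : Fin (n+1) → ℂ, u ≠ 0 →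
          ((∀ b : ℕ, (b = (n+1)/2 ∨ b = n - (n+1)/2) →
              ∀ q : {S : Finset (Fin (n+1)) // S.card = b} → MvPolynomial (Fin (n+1)) ℂ,
                (∀ S, (q S).IsHomogeneous m) →
                (∀ i, tval (n+1) b q (v i) * ExteriorAlgebra.ι ℂ (v i) = 0) →
                tval (n+1) b q u * ExteriorAlgebra.ι ℂ u = 0) ↔
            ∃ i, ∃ lam : ℂ, u = lam • v i)) ∧
        waringRank n (2 * m + 1) (∑ i, (linForm (n+1) (v i)) ^ (2 * m + 1)) = r ∧
        UniqueDecomp n (2 * m + 1) r (∑ i, (linForm (n+1) (v i)) ^ (2 * m + 1))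
          (fun _ => 1) v := by
  obtain ⟨D, hD, hgeneral⟩ := statement18_general n m r hr
  refine ⟨D, hD, fun v hv hDv => ?_⟩
  obtain ⟨heigen, hwaring⟩ := hgeneral v hv hDv
  obtain ⟨hrank, hunique⟩ := hwaring (fun _ => 1) fun _ => one_ne_zero
  exact ⟨heigen {b | b = (n + 1) / 2 ∨ b = n - (n + 1) / 2} ⟨_, .inl rfl, by omega, by omega⟩,
    by simpa using hrank (2 * m + 1) (by omega), by simpa using hunique (2 * m + 1) le_rfl⟩
end

section
/- (Sylvester Pentahedral Theorem) For a general homogeneous cubic f ∈ ℂ[x_0,x_1,x_2,x_3] (i.e., off the zero set of some nonzero polynomial in its 20 coefficients), there exist nonzero vectors v_1,…,v_5 ∈ ℂ⁴ and scalars c_1,…,c_5 ∈ ℂ such that f = Σ_{i=1}^5 c_i ℓ_{v_i}³, and this decomposition is unique up to permutation and scaling: if also f = Σ_{i=1}^5 c_i' ℓ_{w_i}³ with all c_i' ≠ 0 and w_i ≠ 0, then there is a permutation σ of {1,…,5} and nonzero λ_i ∈ ℂ with w_i = λ_i v_{σ(i)} and c_i' λ_i³ = c_{σ(i)}. -/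
open MvPolynomial

/-!
Uniqueness: let `f = ∑ c i ℓ_{v i}³ = ∑ c' i ℓ_{w i}³` with any four of the `v i` independent. The
contraction of `f` with two functionals `x`, `y` is `∑ c i x(v i) y(v i) v i`. If `x` kills all
`w k` outside a pair `t` and `y` kills `w` on `t`, the contraction vanishes. Every linear relation
between the `v i` is a multiple of one with nonzero coefficients, so some product `x(v i) y(v i)`
vanishing forces all of them to vanish; choosing `y` well, the `v k` with `x(v k) ≠ 0` lie in the
plane spanned by `w` on `t`, and there are at least two of them. So each plane spanned by two of the
`w k` is spanned by two of the `v k`, and intersecting two such planes recovers each line `K w i`.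

Existence: by Terracini's computation, the differential of `v ↦ ∑ ℓ_{v i}³` has image spanned by the
`ℓ_{v i}² x_j`. At the four coordinate vectors and the all-ones vector these span all cubics, so the
coefficients of the generic sum of cubes are algebraically independent. The map is then dominant,
and by Chevalley's theorem and the Nullstellensatz every cubic off a hypersurface has a preimage in
general position.
-/

/-! ### Uniqueness -/

/-- A family of vectors is in general position if every subfamily omitting at least one index is
linearly independent. -/
def InGeneralPosition (K : Type*) {ι V : Type*} [Semiring K] [AddCommMonoid V] [Module K V]
    (v : ι → V) : Prop :=
  ∀ i, LinearIndepOn K v {i}ᶜ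

/-- The contraction of the symmetric tensor `∑ i, c i • v i ⊗ v i ⊗ v i` with the linear functionals
`x` and `y`. Since the functionals separate points, two families `(c, v)` have the same contractions
if and only if they define the same tensor. -/
def cubeContraction {ι R M : Type*} [Fintype ι] [CommSemiring R] [AddCommMonoid M] [Module R M]
    (c : ι → R) (v : ι → M) (x y : Module.Dual R M) : M :=
  ∑ i, (c i * (x (v i) * y (v i))) • v i

theorem cubeContraction_smul_perm {ι R M : Type*} [Fintype ι] [CommSemiring R] [AddCommMonoid M]
    [Module R M] (c a : ι → R) (v : ι → M) (σ : Equiv.Perm ι) :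
    cubeContraction c (fun i => a i • v (σ i)) =
      cubeContraction (fun k => c (σ.symm k) * a (σ.symm k) ^ 3) v := by
  funext x y
  refine Eq.trans (Finset.sum_congr rfl fun i _ => ?_) (Equiv.sum_comp σ _)
  simp only [map_smul, smul_smul, smul_eq_mul, Equiv.symm_apply_apply]
  ring_nf

section LinearIndependence

open Submodule Module

variable {K V ι : Type*} [Field K] [AddCommGroup V] [Module K V] {v : ι → V}

theorem span_image_inf_span_image {s t : Set ι} (hv : LinearIndepOn K v (s ∪ t)) :
    span K (v '' s) ⊓ span K (v '' t) = span K (v '' (s ∩ t)) := by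
  refine le_antisymm (fun u hu => ?_) (le_inf (span_mono (Set.image_mono Set.inter_subset_left))
    (span_mono (Set.image_mono Set.inter_subset_right)))
  simp only [mem_inf, Finsupp.mem_span_image_iff_linearCombination] at hu ⊢
  obtain ⟨⟨f, hf, rfl⟩, g, hg, hgf⟩ := hu
  have hfg : g = f := linearIndepOn_iffₛ.1 hv g
    (Finsupp.supported_mono Set.subset_union_right hg) f
    (Finsupp.supported_mono Set.subset_union_left hf) hgf
  exact ⟨f, Finsupp.supported_inter (M := K) (R := K) s t ▸ ⟨hf, hfg ▸ hg⟩, rfl⟩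

theorem finrank_span_image_eq_card {s : Finset ι} (hv : LinearIndepOn K v (s : Set ι)) :
    finrank K (span K (v '' s)) = s.card := by
  rw [Set.image_eq_range]
  simpa using finrank_span_eq_card hv.linearIndependent

theorem finrank_span_image_le_card (v : ι → V) (s : Finset ι) :
    finrank K (span K (v '' s)) ≤ s.card := by
  classical
  rw [← Finset.coe_image]
  exact (finrank_span_finset_le_card _).trans Finset.card_image_le

end LinearIndependence

namespace InGeneralPosition

open Submodule Module

variable {K V ι : Type*} [Field K] [AddCommGroup V] [Module K V] [Fintype ι] {v w : ι → V}
  {c c' : ι → K}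

theorem linearIndepOn (hv : InGeneralPosition K v) {s : Finset ι}
    (hs : s.card < Fintype.card ι) : LinearIndepOn K v (s : Set ι) := by
  obtain ⟨i, -, hi⟩ := Finset.exists_mem_notMem_of_card_lt_card hs
  exact (hv i).mono (Set.subset_compl_singleton_iff.2 hi)

theorem apply_ne_zero (hv : InGeneralPosition K v) (hι : 1 < Fintype.card ι) (i : ι) : v i ≠ 0 :=
  (hv.linearIndepOn (s := {i}) (by simpa)).ne_zero (by simp)

theorem eq_zero_of_sum_smul_eq_zero (hv : InGeneralPosition K v) {a : ι → K} {i : ι} (hi : a i = 0)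
    (h : ∑ k, a k • v k = 0) : a = 0 := by
  classical
  have hind : LinearIndepOn K v ((Finset.univ.erase i : Finset ι) : Set ι) := by
    simpa [Set.compl_eq_univ_sdiff] using hv i
  rw [← Finset.add_sum_erase _ _ (Finset.mem_univ i), hi, zero_smul, zero_add] at h
  funext k
  by_cases hk : k = i
  · rw [hk, hi, Pi.zero_apply]
  · exact linearIndepOn_finset_iff.1 hind a h k (by simpa using hk)

theorem span_image_compl_singleton (hv : InGeneralPosition K v) [FiniteDimensional K V]
    (hV : Fintype.card ι = finrank K V + 1) (i : ι) : span K (v '' {i}ᶜ) = ⊤ := by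
  classical
  refine eq_top_of_finrank_eq ?_
  have hs : ({i}ᶜ : Set ι) = (({i}ᶜ : Finset ι) : Set ι) := by simp
  rw [hs, finrank_span_image_eq_card (hs ▸ hv i), Finset.card_compl, hV, Finset.card_singleton,
    Nat.add_sub_cancel]

theorem exists_ne_apply_ne_zero (hv : InGeneralPosition K v) [FiniteDimensional K V]
    (hV : Fintype.card ι = finrank K V + 1) {x : Dual K V} (hx : x ≠ 0) (i : ι) :
    ∃ k, k ≠ i ∧ x (v k) ≠ 0 := by
  by_contra! h
  refine hx (LinearMap.ker_eq_top.1 (top_le_iff.1 ?_))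
  rw [← hv.span_image_compl_singleton hV i, span_le, Set.image_subset_iff]
  exact h

theorem exists_card_eq_two_forall_apply_ne_zero (hv : InGeneralPosition K v)
    [FiniteDimensional K V] (hV : Fintype.card ι = finrank K V + 1) {x : Dual K V} (hx : x ≠ 0) :
    ∃ s : Finset ι, s.card = 2 ∧ ∀ k ∈ s, x (v k) ≠ 0 := by
  classical
  have : Nonempty ι := Fintype.card_pos_iff.1 (by lia)
  obtain ⟨a, -, ha⟩ := hv.exists_ne_apply_ne_zero hV hx (Classical.arbitrary ι)
  obtain ⟨b, hba, hb⟩ := hv.exists_ne_apply_ne_zero hV hx a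
  exact ⟨{a, b}, Finset.card_pair hba.symm, by simp [ha, hb]⟩

theorem apply_mul_apply_eq_zero (hv : InGeneralPosition K v) (hc : ∀ i, c i ≠ 0) {x y : Dual K V}
    (h : cubeContraction c v x y = 0) {i : ι} (hi : x (v i) * y (v i) = 0) (k : ι) :
    x (v k) * y (v k) = 0 := by
  have := congrFun (hv.eq_zero_of_sum_smul_eq_zero (i := i) (by simp [hi]) h) k
  exact (mul_eq_zero.1 this).resolve_left (hc k)

theorem mem_of_cubeContraction_eq_zero (hv : InGeneralPosition K v) [FiniteDimensional K V]
    (hV : Fintype.card ι = finrank K V + 1) (hc : ∀ i, c i ≠ 0) {S : Submodule K V}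
    (hS : finrank K S + 1 < finrank K V) {x : Dual K V}
    (h : ∀ y : Dual K V, S ≤ LinearMap.ker y → cubeContraction c v x y = 0) {k : ι}
    (hk : x (v k) ≠ 0) : v k ∈ S := by
  have hlt : finrank K ↥(S ⊔ span K {v k}) < finrank K V :=
    (Submodule.finrank_add_le_finrank_add_finrank _ _).trans_lt
      ((Nat.add_le_add_left (finrank_span_le_card _) _).trans_lt (by simpa using hS))
  obtain ⟨y, hy, hle⟩ := exists_le_ker_of_lt_top _ (lt_top_of_finrank_lt_finrank hlt)
  have hyk : y (v k) = 0 := hle (mem_sup_right (mem_span_singleton_self _))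
  obtain ⟨m, -, hm⟩ := hv.exists_ne_apply_ne_zero hV hy k
  have hxm : x (v m) = 0 := (mul_eq_zero.1 (hv.apply_mul_apply_eq_zero hc
    (h y (le_sup_left.trans hle)) (i := k) (by simp [hyk]) m)).resolve_right hm
  by_contra hkS
  obtain ⟨z, hzk, hzS⟩ := exists_le_ker_of_notMem hkS
  exact mul_ne_zero hk hzk
    (hv.apply_mul_apply_eq_zero hc (h z hzS) (i := m) (by simp [hxm]) k)

theorem exists_card_eq_two_span_image_le (hv : InGeneralPosition K v) [FiniteDimensional K V]
    (hV : Fintype.card ι = finrank K V + 1) (hc : ∀ i, c i ≠ 0) {S : Submodule K V}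
    (hS : finrank K S + 1 < finrank K V) {x : Dual K V} (hx : x ≠ 0)
    (h : ∀ y : Dual K V, S ≤ LinearMap.ker y → cubeContraction c v x y = 0) :
    ∃ s : Finset ι, s.card = 2 ∧ span K (v '' s) ≤ S := by
  obtain ⟨s, hs, hxs⟩ := hv.exists_card_eq_two_forall_apply_ne_zero hV hx
  refine ⟨s, hs, span_le.2 ?_⟩
  rintro _ ⟨k, hk, rfl⟩
  exact hv.mem_of_cubeContraction_eq_zero hV hc hS h (hxs k hk)

/-- Some nonzero functional annihilates all `w k` with `k ∉ t`; its contraction with the tensor has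
image in the span of the other `w k`, so it also annihilates all but two of the `v k`. -/
theorem exists_card_eq_two_span_image_le_span_image (hv : InGeneralPosition K v)
    [FiniteDimensional K V] (hV : Fintype.card ι = finrank K V + 1) (hc : ∀ i, c i ≠ 0)
    (h : cubeContraction c v = cubeContraction c' w) {t : Finset ι}
    (ht : t.card + 1 < finrank K V) (htop : span K (w '' (t : Set ι)ᶜ) ≠ ⊤) :
    ∃ s : Finset ι, s.card = 2 ∧ span K (v '' s) ≤ span K (w '' t) := by
  obtain ⟨x, hx, hxw⟩ := exists_le_ker_of_lt_top _ htop.lt_top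
  refine hv.exists_card_eq_two_span_image_le hV hc
    ((Nat.add_le_add_right (finrank_span_image_le_card w t) 1).trans_lt ht) hx fun y hy => ?_
  rw [h]
  refine Finset.sum_eq_zero fun k _ => ?_
  by_cases hk : k ∈ t
  · have hyk : y (w k) = 0 := hy (subset_span (Set.mem_image_of_mem w hk))
    simp [hyk]
  · have hxk : x (w k) = 0 := hxw (subset_span (Set.mem_image_of_mem w hk))
    simp [hxk]

theorem of_cubeContraction_eq (hv : InGeneralPosition K v) (hV : Fintype.card ι = finrank K V + 1)
    (h4 : 4 ≤ finrank K V) (hc : ∀ i, c i ≠ 0) (h : cubeContraction c v = cubeContraction c' w) :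
    InGeneralPosition K w := by
  classical
  have : FiniteDimensional K V := .of_finrank_pos (by lia)
  intro i
  have htop : span K (w '' {i}ᶜ) = ⊤ := by
    by_contra htop
    obtain ⟨s, hs, hle⟩ := hv.exists_card_eq_two_span_image_le_span_image hV hc h (t := {i})
      (by rw [Finset.card_singleton]; lia) (by rwa [Finset.coe_singleton])
    have hle := (finrank_mono hle).trans (finrank_span_image_le_card w {i})
    rw [finrank_span_image_eq_card (hv.linearIndepOn (by lia)), hs] at hle
    simp at hle
  refine linearIndependent_of_top_le_span_of_card_eq_finrank ?_ ?_
  · rw [← htop, Set.image_eq_range]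
  · rw [Fintype.card_compl_set, hV, Set.card_singleton, Nat.add_sub_cancel]

theorem exists_card_eq_two_span_image_eq (hv : InGeneralPosition K v)
    (hV : Fintype.card ι = finrank K V + 1) (h4 : 4 ≤ finrank K V) (hc : ∀ i, c i ≠ 0)
    (h : cubeContraction c v = cubeContraction c' w) {t : Finset ι} (ht : t.card = 2) :
    ∃ s : Finset ι, s.card = 2 ∧ span K (v '' s) = span K (w '' t) := by
  classical
  have : FiniteDimensional K V := .of_finrank_pos (by lia)
  have htop : span K (w '' (t : Set ι)ᶜ) ≠ ⊤ := by
    intro htop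
    have := finrank_span_image_le_card (K := K) w tᶜ
    rw [Finset.coe_compl, htop, finrank_top, Finset.card_compl] at this
    lia
  obtain ⟨s, hs, hle⟩ := hv.exists_card_eq_two_span_image_le_span_image hV hc h (by lia) htop
  refine ⟨s, hs, eq_of_le_of_finrank_le hle ?_⟩
  rw [finrank_span_image_eq_card (hv.linearIndepOn (by lia)), hs, ← ht]
  exact finrank_span_image_le_card w t

/-- Each line `K ∙ w i` is the intersection of two planes `⟨w i, w j⟩` and `⟨w i, w k⟩`, each of
which is spanned by two of the `v l`. -/
theorem exists_eq_smul (hv : InGeneralPosition K v) (hV : Fintype.card ι = finrank K V + 1)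
    (h4 : 4 ≤ finrank K V) (hc : ∀ i, c i ≠ 0) (h : cubeContraction c v = cubeContraction c' w)
    (i : ι) : ∃ k, ∃ a : K, w i = a • v k := by
  classical
  have hw := hv.of_cubeContraction_eq hV h4 hc h
  obtain ⟨j, -, hji⟩ := Finset.exists_mem_notMem_of_card_lt_card (s := {i}) (t := Finset.univ)
    (by rw [Finset.card_singleton, Finset.card_univ]; lia)
  obtain ⟨k, -, hk⟩ := Finset.exists_mem_notMem_of_card_lt_card (s := {i, j}) (t := Finset.univ)
    (Finset.card_le_two.trans_lt (by rw [Finset.card_univ]; lia))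
  simp only [Finset.mem_insert, Finset.mem_singleton, not_or] at hji hk
  obtain ⟨s, hs, hsw⟩ :=
    hv.exists_card_eq_two_span_image_eq hV h4 hc h (Finset.card_pair (Ne.symm hji))
  obtain ⟨t, ht, htw⟩ :=
    hv.exists_card_eq_two_span_image_eq hV h4 hc h (Finset.card_pair (Ne.symm hk.1))
  have hinter : ({i, j} ∩ {i, k} : Finset ι) = {i} := by grind
  have hline : span K (v '' ↑(s ∩ t)) = span K (w '' ↑({i} : Finset ι)) := by
    rw [← hinter, Finset.coe_inter, Finset.coe_inter, ← span_image_inf_span_image,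
      ← span_image_inf_span_image, hsw, htw]
    · rw [← Finset.coe_union]
      exact hw.linearIndepOn (Finset.card_union_le _ _ |>.trans_lt (by grind))
    · rw [← Finset.coe_union]
      exact hv.linearIndepOn (Finset.card_union_le _ _ |>.trans_lt (by lia))
  have hcard : (s ∩ t).card = 1 := by
    rw [← finrank_span_image_eq_card (hv.linearIndepOn ((Finset.card_le_card
      Finset.inter_subset_left).trans_lt (by lia))), hline, finrank_span_image_eq_card
      (hw.linearIndepOn (by rw [Finset.card_singleton]; lia)), Finset.card_singleton]
  obtain ⟨l, hl⟩ := Finset.card_eq_one.1 hcard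
  have hmem : w i ∈ span K (v '' ↑(s ∩ t)) := hline ▸ subset_span (by simp)
  rw [hl, Finset.coe_singleton, Set.image_singleton] at hmem
  obtain ⟨a, ha⟩ := mem_span_singleton.1 hmem
  exact ⟨l, a, ha.symm⟩

theorem cubeContraction_left_injective (hv : InGeneralPosition K v) (hι : 2 < Fintype.card ι)
    (h : cubeContraction c v = cubeContraction c' v) : c = c' := by
  classical
  funext i
  obtain ⟨k, hk⟩ := Fintype.exists_ne_of_one_lt_card (Nat.lt_of_succ_lt hι) i
  have hpair : LinearIndepOn K v ({i, k} : Finset ι) :=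
    hv.linearIndepOn (Finset.card_le_two.trans_lt hι)
  have hmem : v i ∉ span K (v '' {k}) := by
    rw [Finset.coe_insert, linearIndepOn_insert (by simpa using hk.symm)] at hpair
    simpa using hpair.2
  obtain ⟨x, hxi, hx⟩ := exists_le_ker_of_notMem hmem
  have hxk : x (v k) = 0 := hx (subset_span (Set.mem_image_of_mem v rfl))
  have hsum : ∑ l, ((c l - c' l) * (x (v l) * x (v l))) • v l = 0 := by
    simpa only [cubeContraction, sub_mul, sub_smul, Finset.sum_sub_distrib, sub_eq_zero]
      using congrFun₂ h x x
  have hi := congrFun (hv.eq_zero_of_sum_smul_eq_zero (i := k) (by simp [hxk]) hsum) i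
  exact sub_eq_zero.1 ((mul_eq_zero.1 hi).resolve_right (mul_ne_zero hxi hxi))

theorem exists_perm_of_cubeContraction_eq (hv : InGeneralPosition K v)
    (hV : Fintype.card ι = finrank K V + 1) (h4 : 4 ≤ finrank K V) (hc : ∀ i, c i ≠ 0)
    (h : cubeContraction c v = cubeContraction c' w) :
    ∃ (σ : Equiv.Perm ι) (a : ι → K), (∀ i, a i ≠ 0) ∧ (∀ i, w i = a i • v (σ i)) ∧
      ∀ i, c' i * a i ^ 3 = c (σ i) := by
  classical
  have hw := hv.of_cubeContraction_eq hV h4 hc h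
  choose τ a hτ using hv.exists_eq_smul hV h4 hc h
  have ha (i : ι) : a i ≠ 0 := fun hi => hw.apply_ne_zero (by lia) i (by rw [hτ, hi, zero_smul])
  have hinj : Function.Injective τ := by
    intro i j hij
    by_contra hne
    have hpair : LinearIndepOn K w ({i, j} : Finset ι) :=
      hw.linearIndepOn (Finset.card_le_two.trans_lt (by lia))
    rw [Finset.coe_pair, LinearIndepOn.pair_iff _ hne] at hpair
    refine ha j (hpair (a j) (-a i) ?_).1
    rw [hτ i, hτ j, hij, smul_smul, smul_smul, ← add_smul, neg_mul, mul_comm, add_neg_cancel,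
      zero_smul]
  let σ : Equiv.Perm ι := Equiv.ofBijective τ (Finite.injective_iff_bijective.1 hinj)
  refine ⟨σ, a, ha, hτ, fun i => ?_⟩
  have hcoeff : c = fun k => c' (σ.symm k) * a (σ.symm k) ^ 3 := by
    refine hv.cubeContraction_left_injective (by lia) ?_
    rw [h, ← cubeContraction_smul_perm, funext hτ]
    rfl
  simpa only [Equiv.symm_apply_apply] using (congrFun hcoeff (σ i)).symm

end InGeneralPosition

section Polarization

variable {K V ι : Type*} [Field K] [AddCommGroup V] [Module K V] [Fintype ι] {v w : ι → V}
  {c c' : ι → K}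

theorem six_mul_apply_cubeContraction (c : ι → K) (v : ι → V) (x y z : Module.Dual K V) :
    6 * z (cubeContraction c v x y) =
      ∑ i, c i * (x + y + z) (v i) ^ 3 - ∑ i, c i * (x + y) (v i) ^ 3 -
      ∑ i, c i * (x + z) (v i) ^ 3 - ∑ i, c i * (y + z) (v i) ^ 3 + ∑ i, c i * x (v i) ^ 3 +
      ∑ i, c i * y (v i) ^ 3 + ∑ i, c i * z (v i) ^ 3 := by
  simp only [cubeContraction, map_sum, map_smul, smul_eq_mul, Finset.mul_sum,
    ← Finset.sum_add_distrib, ← Finset.sum_sub_distrib, LinearMap.add_apply]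
  refine Finset.sum_congr rfl fun i _ => ?_
  ring

theorem cubeContraction_eq_of_forall_sum_cube_eq (h6 : (6 : K) ≠ 0)
    (h : ∀ x : Module.Dual K V, ∑ i, c i * x (v i) ^ 3 = ∑ i, c' i * x (w i) ^ 3) :
    cubeContraction c v = cubeContraction c' w := by
  funext x y
  rw [← sub_eq_zero, ← Module.forall_dual_apply_eq_zero_iff K]
  intro z
  rw [map_sub, sub_eq_zero]
  refine mul_left_cancel₀ h6 ?_
  simp only [six_mul_apply_cubeContraction, h]

end Polarization

/-- The linear form with coefficient vector `v`. -/
noncomputable def linearForm {σ R : Type*} [Fintype σ] [CommSemiring R] (v : σ → R) :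
    MvPolynomial σ R :=
  ∑ j, C (v j) * X j

section LinearForm

variable {σ R : Type*} [Fintype σ]

theorem isHomogeneous_linearForm [CommSemiring R] (v : σ → R) : (linearForm v).IsHomogeneous 1 :=
  .sum _ _ _ fun j _ => isHomogeneous_C_mul_X (v j) j

theorem map_linearForm {S : Type*} [CommSemiring R] [CommSemiring S] (f : R →+* S) (v : σ → R) :
    map f (linearForm v) = linearForm (f ∘ v) := by
  simp only [linearForm, map_sum, map_mul, map_C, map_X, Function.comp_apply]

theorem linearForm_single_one [CommSemiring R] [DecidableEq σ] (j : σ) :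
    linearForm (Pi.single j (1 : R)) = X j := by
  rw [linearForm, Finset.sum_eq_single j]
  · rw [Pi.single_eq_same, C_1, one_mul]
  · intro k _ hk
    rw [Pi.single_eq_of_ne hk, C_0, zero_mul]
  · simp

theorem linearForm_one [CommSemiring R] : linearForm (1 : σ → R) = ∑ j, X j := by
  simp only [linearForm, Pi.one_apply, C_1, one_mul]

theorem eval_dual_linearForm [CommSemiring R] [DecidableEq σ] (x : Module.Dual R (σ → R))
    (v : σ → R) : eval (fun j => x (Pi.single j 1)) (linearForm v) = x v := by
  rw [LinearMap.pi_apply_eq_sum_univ x v]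
  simp only [linearForm, map_sum, map_mul, eval_C, eval_X, smul_eq_mul]
  congr! with j _ k
  grind

end LinearForm

theorem cubeContraction_eq_of_sum_linearForm_cube_eq {K σ ι : Type*} [Field K] [Fintype σ]
    [Fintype ι] {c c' : ι → K} {v w : ι → σ → K} (h6 : (6 : K) ≠ 0)
    (h : ∑ i, c i • linearForm (v i) ^ 3 = ∑ i, c' i • linearForm (w i) ^ 3) :
    cubeContraction c v = cubeContraction c' w := by
  classical
  refine cubeContraction_eq_of_forall_sum_cube_eq h6 fun x => ?_
  simpa only [map_sum, smul_eval, map_pow, eval_dual_linearForm] using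
    congrArg (eval fun j => x (Pi.single j 1)) h

/-! ### Dominance -/

section Dominance

theorem exists_basicOpen_subset_comap_image {A B : Type*} [CommRing A] [IsDomain A] [CommRing B]
    [IsDomain B] {φ : A →+* B} (hφ : Function.Injective φ) (hφfin : φ.FinitePresentation) {g : B}
    (hg : g ≠ 0) :
    ∃ a : A, a ≠ 0 ∧ (PrimeSpectrum.basicOpen a : Set (PrimeSpectrum A)) ⊆
      PrimeSpectrum.comap φ '' PrimeSpectrum.basicOpen g := by
  obtain ⟨S, hS⟩ := PrimeSpectrum.exists_constructibleSetData_iff.2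
    (PrimeSpectrum.isConstructible_comap_image hφfin
      (PrimeSpectrum.isConstructible_basicOpen (f := g)))
  have hgeneric : (⊥ : PrimeSpectrum A) ∈ S.toSet := by
    rw [hS]
    refine ⟨⊥, by simpa using hg, ?_⟩
    ext a
    simp [PrimeSpectrum.asIdeal_bot, map_eq_zero_iff φ hφ]
  obtain ⟨T, hT, hbot⟩ := Set.mem_iUnion₂.1 hgeneric
  have hTg (i) : T.g i = 0 := by simpa using hbot.1 (Set.mem_range_self i)
  refine ⟨T.f, by simpa using hbot.2, fun p hp => ?_⟩
  rw [← hS]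
  refine Set.mem_iUnion₂.2 ⟨T, hT, ?_, by simpa using hp⟩
  rintro _ ⟨i, rfl⟩
  simp [hTg]

variable {K ι κ : Type*} [Field K]

theorem finitePresentation_aeval [Finite ι] [Finite κ] (P : ι → MvPolynomial κ K) :
    (aeval P : MvPolynomial ι K →ₐ[K] MvPolynomial κ K).toRingHom.FinitePresentation := by
  refine RingHom.FinitePresentation.of_finiteType.1 (.of_comp_finiteType (f := C) ?_)
  have hC : (aeval P : MvPolynomial ι K →ₐ[K] _).toRingHom.comp C =
      algebraMap K (MvPolynomial κ K) := by
    ext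
    simp [algebraMap_eq]
  rw [hC, RingHom.finiteType_algebraMap]
  infer_instance

theorem exists_le_vanishingIdeal_singleton [IsAlgClosed K] [Finite κ]
    {I : Ideal (MvPolynomial κ K)} (hI : I.IsRadical) {g : MvPolynomial κ K} (hg : g ∉ I) :
    ∃ x : κ → K, I ≤ vanishingIdeal K {x} ∧ eval x g ≠ 0 := by
  rw [← IsJacobsonRing.out inferInstance hI] at hg
  obtain ⟨M, hIM, hM, hgM⟩ : ∃ M : Ideal (MvPolynomial κ K), I ≤ M ∧ M.IsMaximal ∧ g ∉ M := by
    simpa [Ideal.jacobson, Submodule.mem_sInf] using hg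
  obtain ⟨x, rfl⟩ := isMaximal_iff_eq_vanishingIdeal_singleton.1 hM
  exact ⟨x, hIM, by simpa [mem_vanishingIdeal_singleton_iff, aeval_eq_eval] using hgM⟩

theorem exists_ne_zero_forall_exists_eval_eq_of_algebraicIndependent [IsAlgClosed K] [Finite ι]
    [Finite κ] {P : ι → MvPolynomial κ K} (hP : AlgebraicIndependent K P) {g : MvPolynomial κ K}
    (hg : g ≠ 0) :
    ∃ D : MvPolynomial ι K, D ≠ 0 ∧ ∀ y : ι → K, eval y D ≠ 0 →
      ∃ x : κ → K, (∀ i, eval x (P i) = y i) ∧ eval x g ≠ 0 := by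
  obtain ⟨D, hD, hsub⟩ := exists_basicOpen_subset_comap_image hP (finitePresentation_aeval P) hg
  refine ⟨D, hD, fun y hy => ?_⟩
  obtain ⟨q, hgq, hq⟩ := hsub (a := ⟨vanishingIdeal K {y}, inferInstance⟩)
    (by simpa [mem_vanishingIdeal_singleton_iff, aeval_eq_eval] using hy)
  obtain ⟨x, hqx, hgx⟩ := exists_le_vanishingIdeal_singleton q.isPrime.isRadical hgq
  refine ⟨x, fun i => ?_, hgx⟩
  have hi : aeval P (X i - C (y i)) ∈ q.asIdeal := by
    change X i - C (y i) ∈ (PrimeSpectrum.comap _ q).asIdeal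
    rw [hq]
    simp
  simpa [mem_vanishingIdeal_singleton_iff, sub_eq_zero, aeval_eq_eval] using hqx hi

end Dominance

section JacobianCriterion

theorem linearIndependent_of_linearIndependent_comp {R K ι κ : Type*} [CommRing R] [IsDomain R]
    [Field K] [Finite ι] [Finite κ] {f : R →+* K} (hf : Function.Surjective f) {v : ι → κ → R}
    (h : LinearIndependent K fun i => f ∘ v i) : LinearIndependent R v := by
  classical
  have := Fintype.ofFinite ι
  have := Fintype.ofFinite κ
  let M : Matrix ι κ R := .of v
  have hrank : (M.map f).rank = Fintype.card ι := LinearIndependent.rank_matrix h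
  have hsurj : Function.Surjective (M.map f).mulVec := LinearMap.range_eq_top.1
    (Submodule.eq_top_of_finrank_eq (hrank.trans (Module.finrank_fintype_fun_eq_card K).symm))
  obtain ⟨N, hN⟩ := Matrix.mulVec_surjective_iff_exists_right_inverse.1 hsurj
  obtain ⟨N, rfl⟩ : ∃ N' : Matrix κ ι R, N'.map f = N :=
    ⟨N.map (Function.surjInv hf), by ext; simp [Function.surjInv_eq]⟩
  have hdet : (M * N).det ≠ 0 := fun h0 => by
    have := congrArg f h0
    simp [RingHom.map_det, Matrix.map_mul, hN] at this
  refine Matrix.vecMul_injective_iff.1 ((injective_iff_map_eq_zero M.vecMulLinear).2 fun g hg => ?_)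
  refine Matrix.eq_zero_of_vecMul_eq_zero hdet ?_
  rw [← Matrix.vecMul_vecMul, show Matrix.vecMul g M = 0 from hg, Matrix.zero_vecMul]

theorem derivation_aeval {R A M ι : Type*} [CommSemiring R] [CommSemiring A] [Algebra R A]
    [AddCommMonoid M] [Module R M] [Module A M] [IsScalarTower R A M] [Fintype ι]
    (d : Derivation R A M) (P : ι → A) (F : MvPolynomial ι R) :
    d (aeval P F) = ∑ i, aeval P (pderiv i F) • d (P i) := by
  classical
  induction F using MvPolynomial.induction_on with
  | C a => simp
  | add p q hp hq => simp only [map_add, hp, hq, add_smul, Finset.sum_add_distrib]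
  | mul_X p i hp =>
    have hX : ∑ k, (aeval P p * aeval P (pderiv k (X i : MvPolynomial ι R))) • d (P k) =
        aeval P p • d (P i) := by
      rw [Finset.sum_eq_single i] <;> simp +contextual [eq_comm]
    simp only [map_mul, aeval_X, Derivation.leibniz, hp, smul_eq_mul, map_add, add_smul,
      Finset.sum_add_distrib, Finset.smul_sum, smul_smul, hX]

theorem eq_C_of_forall_pderiv_eq_zero {R ι : Type*} [CommSemiring R] [NoZeroDivisors R]
    [CharZero R] {F : MvPolynomial ι R} (hF : ∀ i, pderiv i F = 0) : F = C (coeff 0 F) := by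
  classical
  ext m
  rw [coeff_C]
  split_ifs with hm
  · rw [hm]
  · obtain ⟨i, hi⟩ := Finsupp.ne_iff.1 (Ne.symm hm)
    have hle : Finsupp.single i 1 ≤ m := by
      simpa [Nat.one_le_iff_ne_zero] using hi
    have h := coeff_pderiv (i := i) F (m - Finsupp.single i 1)
    rw [hF, coeff_zero, tsub_add_cancel_of_le hle, eq_comm] at h
    exact (mul_eq_zero.1 h).resolve_right (Nat.cast_add_one_ne_zero _)

theorem totalDegree_pderiv_lt {R ι : Type*} [CommSemiring R] {F : MvPolynomial ι R} {i : ι}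
    (hF : pderiv i F ≠ 0) : (pderiv i F).totalDegree < F.totalDegree := by
  obtain ⟨m, hm, hdeg⟩ := Finset.exists_mem_eq_sup _ (support_nonempty.2 hF) Finsupp.degree
  have hmF : m + Finsupp.single i 1 ∈ F.support := by
    rw [mem_support_iff, coeff_pderiv] at hm
    exact mem_support_iff.2 (left_ne_zero_of_mul hm)
  have hle : (m + Finsupp.single i 1).degree ≤ F.totalDegree := le_totalDegree hmF
  rw [map_add, Finsupp.degree_single] at hle
  exact hdeg.trans_lt (Nat.lt_of_succ_le hle)

theorem algebraicIndependent_of_linearIndependent_eval_pderiv {K ι κ : Type*} [Field K] [CharZero K]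
    [Finite ι] [Finite κ] {P : ι → MvPolynomial κ K} (x : κ → K)
    (h : LinearIndependent K fun i k => eval x (pderiv k (P i))) : AlgebraicIndependent K P := by
  have := Fintype.ofFinite ι
  have hind : LinearIndependent (MvPolynomial κ K) fun i k => pderiv k (P i) :=
    linearIndependent_of_linearIndependent_comp (f := eval x) (fun a => ⟨C a, eval_C a⟩) h
  rw [algebraicIndependent_iff]
  intro F hF
  induction hn : F.totalDegree using Nat.strong_induction_on generalizing F with
  | _ n ih =>
    subst hn
    have hpderiv (i : ι) : aeval P (pderiv i F) = 0 := by
      refine Fintype.linearIndependent_iff.1 hind (fun i => aeval P (pderiv i F)) ?_ i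
      funext k
      rw [Finset.sum_apply]
      exact (derivation_aeval (pderiv k) P F).symm.trans (by rw [hF, map_zero, Pi.zero_apply])
    have hzero (i : ι) : pderiv i F = 0 := by
      by_contra hi
      exact hi (ih _ (totalDegree_pderiv_lt hi) _ (hpderiv i) rfl)
    rw [eq_C_of_forall_pderiv_eq_zero hzero, aeval_C, algebraMap_eq, C_eq_zero] at hF
    rw [eq_C_of_forall_pderiv_eq_zero hzero, hF, C_0]

end JacobianCriterion

/-! ### The sum-of-cubes map -/

section CoeffDerivation

variable {S R σ : Type*} [CommSemiring S] [CommSemiring R] [Algebra S R]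

/-- The extension of a derivation of `R` to polynomials over `R` that acts on the coefficients and
kills the variables. It computes partial derivatives of the coefficients of a polynomial depending
on parameters. -/
noncomputable def coeffDerivation (d : Derivation S R R) :
    Derivation S (MvPolynomial σ R) (MvPolynomial σ R) where
  toFun := AddMonoidAlgebra.map (d : R →+ R)
  map_add' := AddMonoidAlgebra.map_add _
  map_smul' a F := by
    ext μ
    exact d.map_smul a (coeff μ F)
  map_one_eq_zero' := by
    classical
    ext μ
    change d (coeff μ 1) = 0
    rw [coeff_one]
    split_ifs
    · exact d.map_one_eq_zero
    · exact map_zero d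
  leibniz' F G := by
    classical
    ext μ
    change d (coeff μ (F * G)) =
      coeff μ (F * AddMonoidAlgebra.map _ G + G * AddMonoidAlgebra.map _ F)
    rw [mul_comm G, coeff_add, coeff_mul, coeff_mul, coeff_mul, map_sum, ← Finset.sum_add_distrib]
    refine Finset.sum_congr rfl fun p _ => ?_
    rw [d.leibniz, smul_eq_mul, smul_eq_mul, mul_comm (coeff p.2 G)]
    rfl

theorem coeff_coeffDerivation (d : Derivation S R R) (F : MvPolynomial σ R) (μ : σ →₀ ℕ) :
    coeff μ (coeffDerivation d F) = d (coeff μ F) :=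
  rfl

theorem coeffDerivation_linearForm [Fintype σ] (d : Derivation S R R) (v : σ → R) :
    coeffDerivation d (linearForm v) = linearForm (d ∘ v) := by
  classical
  ext μ
  simp only [linearForm, coeff_coeffDerivation, coeff_sum, map_sum, coeff_C_mul, coeff_X,
    mul_ite, mul_one, mul_zero, apply_ite d, map_zero, Function.comp_apply]

end CoeffDerivation

/-- The sum of the cubes of the linear forms `∑ j, X (i, j) * X j` with indeterminate
coefficients; its coefficients are the coordinates of the map `v ↦ ∑ i, ℓ_{v i} ^ 3`. -/
noncomputable def genericCubeSum (ι σ R : Type*) [Fintype ι] [Fintype σ] [CommSemiring R] :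
    MvPolynomial σ (MvPolynomial (ι × σ) R) :=
  ∑ i, linearForm (fun j => X (i, j)) ^ 3

section GenericCubeSum

variable {ι σ R : Type*} [Fintype ι] [Fintype σ] [CommSemiring R]

theorem map_eval_genericCubeSum (z : ι × σ → R) :
    map (eval z) (genericCubeSum ι σ R) = ∑ i, linearForm (fun j => z (i, j)) ^ 3 := by
  simp only [genericCubeSum, map_sum, map_pow, map_linearForm, Function.comp_def, eval_X]

theorem coeffDerivation_pderiv_genericCubeSum (i : ι) (j : σ) :
    coeffDerivation (pderiv (i, j)) (genericCubeSum ι σ R) =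
      3 * (linearForm (fun k => X (i, k)) ^ 2 * X j) := by
  classical
  have hlin (k : ι) : coeffDerivation (pderiv (i, j)) (linearForm fun l => X (k, l)) =
      if k = i then (X j : MvPolynomial σ (MvPolynomial (ι × σ) R)) else 0 := by
    rw [coeffDerivation_linearForm]
    split_ifs with hk
    · rw [← linearForm_single_one j]
      congr 1
      funext l
      simp [hk, Pi.single_apply, eq_comm]
    · simp [linearForm, hk]
  simp [genericCubeSum, Derivation.leibniz_pow, hlin]

theorem eval_pderiv_coeff_genericCubeSum (z : ι × σ → R) (μ : σ →₀ ℕ) (i : ι) (j : σ) :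
    eval z (pderiv (i, j) (coeff μ (genericCubeSum ι σ R))) =
      3 * coeff μ (linearForm (fun k => z (i, k)) ^ 2 * X j) := by
  rw [← coeff_coeffDerivation, coeffDerivation_pderiv_genericCubeSum, ← coeff_map]
  simp only [map_mul, map_pow, map_ofNat, map_linearForm, map_X, Function.comp_def, eval_X]
  rw [← map_ofNat C, coeff_C_mul]

end GenericCubeSum

/-- The exponents of the cubic monomials. -/
abbrev CubicExponent (σ : Type*) : Type _ :=
  {μ : σ →₀ ℕ // (μ.sum fun _ e => e) = 3}

section Cubic

variable {σ : Type*}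

instance [Finite σ] : Finite (CubicExponent σ) :=
  Finsupp.finite_of_degree_eq 3

theorem exists_single_add_single_add_single (μ : CubicExponent σ) :
    ∃ a b c, μ.1 = Finsupp.single a 1 + Finsupp.single b 1 + Finsupp.single c 1 := by
  classical
  have hcard : (Finsupp.toMultiset μ.1).card = 3 := (Finsupp.card_toMultiset _).trans μ.2
  obtain ⟨a, b, c, h⟩ := Multiset.card_eq_three.1 hcard
  refine ⟨a, b, c, ?_⟩
  rw [← Finsupp.toMultiset_toFinsupp μ.1, h]
  simp [← Multiset.singleton_add, add_assoc]

theorem eq_of_forall_coeff_cubicExponent_eq {R : Type*} [CommSemiring R] {f g : MvPolynomial σ R}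
    (hf : f.IsHomogeneous 3) (hg : g.IsHomogeneous 3)
    (h : ∀ μ : CubicExponent σ, coeff μ.1 f = coeff μ.1 g) : f = g := by
  ext μ
  by_cases hμ : (μ.sum fun _ e => e) = 3
  · exact h ⟨μ, hμ⟩
  · rw [hf.coeff_eq_zero hμ, hg.coeff_eq_zero hμ]

end Cubic

theorem eq_zero_of_symmetric_of_sum_eq_zero {K : Type*} [Field K] [CharZero K]
    {T : Fin 4 → Fin 4 → Fin 4 → K}
    (h₁₂ : ∀ a b c, T a b c = T b a c) (h₂₃ : ∀ a b c, T a b c = T a c b)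
    (hdiag : ∀ a b, T a a b = 0) (hsum : ∀ c, ∑ a, ∑ b, T a b c = 0) (a b c : Fin 4) :
    T a b c = 0 := by
  have h₂₃diag (a b : Fin 4) : T a b b = 0 := by rw [h₁₂, h₂₃, hdiag]
  by_cases hab : a = b
  · rw [hab, hdiag]
  by_cases hac : a = c
  · rw [hac, h₂₃, hdiag]
  by_cases hbc : b = c
  · rw [hbc, h₂₃diag]
  obtain ⟨d, had, hbd, hcd, huniv⟩ :
      ∃ d : Fin 4, a ≠ d ∧ b ≠ d ∧ c ≠ d ∧ Finset.univ = {a, b, c, d} := by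
    clear hsum h₂₃diag hdiag h₂₃ h₁₂ T
    decide +revert
  have hsum_univ (f : Fin 4 → K) : ∑ e, f e = f a + (f b + (f c + f d)) := by
    rw [huniv, Finset.sum_insert (by simp [*]), Finset.sum_insert (by simp [*]),
      Finset.sum_insert (by simp [*]), Finset.sum_singleton]
  simp only [hsum_univ] at hsum
  have ha : T a b c + T a b d + T a c d = 0 := by grind [hsum a]
  have hb : T a b c + T a b d + T b c d = 0 := by grind [hsum b]
  have hc : T a b c + T a c d + T b c d = 0 := by grind [hsum c]
  have hd : T a b d + T a c d + T b c d = 0 := by grind [hsum d]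
  linear_combination (ha + hb + hc - 2 * hd) / 3

/-- The four coordinate vectors and the all-ones vector, the point at which the Jacobian of the
coefficients of `genericCubeSum` is computed. -/
def standardPentahedron (K : Type*) [Zero K] [One K] : Fin 5 → Fin 4 → K :=
  Fin.snoc (fun i => Pi.single i 1) 1

theorem linearForm_standardPentahedron_castSucc {R : Type*} [CommSemiring R] (i : Fin 4) :
    linearForm (standardPentahedron R i.castSucc) = X i := by
  rw [standardPentahedron, Fin.snoc_castSucc, linearForm_single_one]

theorem linearForm_standardPentahedron_last {R : Type*} [CommSemiring R] :
    linearForm (standardPentahedron R (Fin.last 4)) = ∑ i, X i := by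
  rw [standardPentahedron, Fin.snoc_last, linearForm_one]

section Terracini

variable {K : Type*} [Field K] [CharZero K]

theorem apply_X_mul_X_mul_X_eq_zero {φ : MvPolynomial (Fin 4) K →ₗ[K] K}
    (hφ : ∀ i j, φ (linearForm (standardPentahedron K i) ^ 2 * X j) = 0) (a b c : Fin 4) :
    φ (X a * X b * X c) = 0 := by
  refine eq_zero_of_symmetric_of_sum_eq_zero (T := fun a b c => φ (X a * X b * X c))
    (fun a b c => by rw [mul_comm (X a)]) (fun a b c => by rw [mul_right_comm])
    (fun a b => ?_) (fun c => ?_) a b c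
  · rw [← sq, ← linearForm_standardPentahedron_castSucc a]
    exact hφ a.castSucc b
  · have h := hφ (Fin.last 4) c
    rw [Finset.sum_comm]
    simpa only [linearForm_standardPentahedron_last, sq, Finset.sum_mul, Finset.mul_sum, map_sum]
      using h

theorem algebraicIndependent_coeff_genericCubeSum :
    AlgebraicIndependent K fun μ : CubicExponent (Fin 4) =>
      coeff μ.1 (genericCubeSum (Fin 5) (Fin 4) K) := by
  have := Fintype.ofFinite (CubicExponent (Fin 4))
  refine algebraicIndependent_of_linearIndependent_eval_pderiv
    (fun p => standardPentahedron K p.1 p.2) (Fintype.linearIndependent_iff.2 fun a ha μ => ?_)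
  let φ : MvPolynomial (Fin 4) K →ₗ[K] K := ∑ ν : CubicExponent (Fin 4), a ν • lcoeff K ν.1
  have hφ (i j) : φ (linearForm (standardPentahedron K i) ^ 2 * X j) = 0 := by
    have h := congrFun ha (i, j)
    simp only [eval_pderiv_coeff_genericCubeSum, Finset.sum_apply, Pi.smul_apply, smul_eq_mul,
      mul_left_comm _ (3 : K), ← Finset.mul_sum, Pi.zero_apply] at h
    simpa [φ] using h
  obtain ⟨i, j, k, hμ⟩ := exists_single_add_single_add_single μ
  have hmonomial : (X i * X j * X k : MvPolynomial (Fin 4) K) = monomial μ.1 1 := by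
    simp [X, hμ, monomial_mul]
  have h := apply_X_mul_X_mul_X_eq_zero hφ i j k
  rw [hmonomial] at h
  simpa [φ, coeff_monomial, Subtype.coe_inj] using h

end Terracini

/-- The product of the maximal minors of an `(n + 1) × n` matrix of variables; it does not vanish at
a matrix exactly when the rows are in general position. -/
noncomputable def maximalMinorProduct (n : ℕ) (R : Type*) [CommRing R] :
    MvPolynomial (Fin (n + 1) × Fin n) R :=
  ∏ i : Fin (n + 1), (Matrix.of fun a b => X (i.succAbove a, b)).det

section MaximalMinorProduct

variable {n : ℕ}

theorem eval_maximalMinorProduct {R : Type*} [CommRing R] (z : Fin (n + 1) × Fin n → R) :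
    eval z (maximalMinorProduct n R) =
      ∏ i : Fin (n + 1), (Matrix.of fun a b => z (i.succAbove a, b)).det := by
  simp only [maximalMinorProduct, map_prod, RingHom.map_det]
  congr!
  ext
  simp

theorem maximalMinorProduct_ne_zero (n : ℕ) (R : Type*) [CommRing R] [IsDomain R] [CharZero R] :
    maximalMinorProduct n R ≠ 0 := by
  intro h
  have hvandermonde := eval_maximalMinorProduct fun p : Fin (n + 1) × Fin n =>
    ((p.1 : ℕ) : R) ^ (p.2 : ℕ)
  rw [h, map_zero, eq_comm, Finset.prod_eq_zero_iff] at hvandermonde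
  obtain ⟨i, -, hi⟩ := hvandermonde
  refine Matrix.det_vandermonde_ne_zero_iff.2 (fun a b hab => ?_ : Function.Injective
    fun a : Fin n => ((i.succAbove a : ℕ) : R)) hi
  exact Fin.succAbove_right_injective (Fin.ext (Nat.cast_injective hab))

theorem inGeneralPosition_of_eval_maximalMinorProduct_ne_zero {K : Type*} [Field K]
    {z : Fin (n + 1) × Fin n → K} (hz : eval z (maximalMinorProduct n K) ≠ 0) :
    InGeneralPosition K fun i j => z (i, j) := by
  intro i
  rw [eval_maximalMinorProduct, Finset.prod_ne_zero_iff] at hz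
  rw [← Fin.range_succAbove, linearIndepOn_range_iff Fin.succAbove_right_injective]
  exact Matrix.linearIndependent_rows_of_det_ne_zero (hz i (Finset.mem_univ i))

end MaximalMinorProduct

theorem eq_sum_linearForm_cube_of_eval_coeff_genericCubeSum_eq {ι σ R : Type*} [Fintype ι]
    [Fintype σ] [CommSemiring R] {f : MvPolynomial σ R} (hf : f.IsHomogeneous 3) {z : ι × σ → R}
    (hz : ∀ μ : CubicExponent σ, eval z (coeff μ.1 (genericCubeSum ι σ R)) = coeff μ.1 f) :
    f = ∑ i, linearForm (fun j => z (i, j)) ^ 3 := by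
  refine eq_of_forall_coeff_cubicExponent_eq hf (.sum _ _ _ fun i _ => ?_) fun μ => ?_
  · simpa using (isHomogeneous_linearForm fun j => z (i, j)).pow 3
  · rw [← hz, ← coeff_map, map_eval_genericCubeSum]

/-! ### The pentahedral theorem -/

theorem statement19_general (K : Type*) [Field K] [IsAlgClosed K] [CharZero K] :
    ∃ D : MvPolynomial (CubicExponent (Fin 4)) K, D ≠ 0 ∧
      ∀ f : MvPolynomial (Fin 4) K, f.IsHomogeneous 3 → eval (fun μ => coeff μ.1 f) D ≠ 0 →
        ∃ (v : Fin 5 → Fin 4 → K) (c : Fin 5 → K), (∀ i, v i ≠ 0) ∧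
          f = ∑ i, c i • linearForm (v i) ^ 3 ∧
          ∀ (c' : Fin 5 → K) (w : Fin 5 → Fin 4 → K), f = ∑ i, c' i • linearForm (w i) ^ 3 →
            ∃ (σ : Equiv.Perm (Fin 5)) (lam : Fin 5 → K), (∀ i, lam i ≠ 0) ∧
              (∀ i, w i = lam i • v (σ i)) ∧ ∀ i, c' i * lam i ^ 3 = c (σ i) := by
  obtain ⟨D, hD, hdom⟩ := exists_ne_zero_forall_exists_eval_eq_of_algebraicIndependent
    (algebraicIndependent_coeff_genericCubeSum (K := K)) (maximalMinorProduct_ne_zero 4 K)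
  refine ⟨D, hD, fun f hf hfD => ?_⟩
  obtain ⟨z, hzf, hz⟩ := hdom _ hfD
  have hv := inGeneralPosition_of_eval_maximalMinorProduct_ne_zero hz
  have hfz : f = ∑ i, (1 : K) • linearForm (fun j => z (i, j)) ^ 3 := by
    simpa only [one_smul] using eq_sum_linearForm_cube_of_eval_coeff_genericCubeSum_eq hf hzf
  exact ⟨fun i j => z (i, j), fun _ => 1, hv.apply_ne_zero (by simp), hfz, fun c' w hfw =>
    hv.exists_perm_of_cubeContraction_eq (by simp) (by simp) (fun _ => one_ne_zero)
      (cubeContraction_eq_of_sum_linearForm_cube_eq (by norm_num) (hfz.symm.trans hfw))⟩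

/-- **Sylvester Pentahedral Theorem**: a general homogeneous cubic
`f ∈ ℂ[x_0,x_1,x_2,x_3]` (off the zero locus of some nonzero polynomial in its 20
coefficients) is a sum `f = Σ_{i=1}^5 c_i ℓ_{v_i}³` of five cubes of linear forms, and
this decomposition is unique up to permutation and scaling. -/
theorem statement19 :
    ∃ D : MvPolynomial {μ : Fin 4 →₀ ℕ // (μ.sum fun _ e => e) = 3} ℂ, D ≠ 0 ∧
      ∀ f : MvPolynomial (Fin 4) ℂ, f.IsHomogeneous 3 →
        MvPolynomial.eval (fun μ => MvPolynomial.coeff μ.1 f) D ≠ 0 →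
        ∃ (v : Fin 5 → Fin 4 → ℂ) (c : Fin 5 → ℂ),
          (∀ i, v i ≠ 0) ∧
          f = ∑ i, c i • (linForm 4 (v i)) ^ 3 ∧
          ∀ (c' : Fin 5 → ℂ) (w : Fin 5 → Fin 4 → ℂ),
            (∀ i, c' i ≠ 0) → (∀ i, w i ≠ 0) →
            f = ∑ i, c' i • (linForm 4 (w i)) ^ 3 →
            ∃ (σ : Equiv.Perm (Fin 5)) (lam : Fin 5 → ℂ),
              (∀ i, lam i ≠ 0) ∧ (∀ i, w i = lam i • v (σ i)) ∧
              (∀ i, c' i * lam i ^ 3 = c (σ i)) := by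
  obtain ⟨D, hD, h⟩ := statement19_general ℂ
  exact ⟨D, hD, fun f hf hfD => (h f hf hfD).imp fun v ⟨c, hv, hfv, huniq⟩ =>
    ⟨c, hv, hfv, fun c' w _ _ => huniq c' w⟩⟩
end
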